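/- Let d : ℕ → ℕ satisfy 4 ≤ d(n) ≤ (log n)², and restrict to those n for which n·d(n) is even. Then for every ε > 0, with high probability the uniformly random d(n)-regular graph G ~ G(n, d(n)) has the following property: for all but at most εn vertices r of G, there exist at least ⌊d(n)/4⌋ independent spanning trees of G rooted at r. -/

import Mathlib

open Filter

/-- The spanning trees `T 0, …, T (t-1)` of `G` are independent spanning trees rooted at `r`:
each `T i` is a spanning tree of `G` (a tree on the whole vertex set, all of whose edges lie
in `G`), and for every vertex `v ≠ r`, the paths from `v` to `r` in any two distinct trees
share only the vertices `v` and `r`. -/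
def IsIST {n : ℕ} (G : SimpleGraph (Fin n)) (r : Fin n) {t : ℕ}
    (T : Fin t → SimpleGraph (Fin n)) : Prop :=
  (∀ i, T i ≤ G ∧ (T i).IsTree) ∧
  ∀ v : Fin n, v ≠ r → ∀ i j : Fin t, i ≠ j →
    ∀ p : (T i).Walk v r, ∀ q : (T j).Walk v r, p.IsPath → q.IsPath →
      ∀ x : Fin n, x ∈ p.support → x ∈ q.support → x = v ∨ x = r

/-- `G` contains (at least) `t` independent spanning trees rooted at `r`. -/
def HasISTs {n : ℕ} (G : SimpleGraph (Fin n)) (r : Fin n) (t : ℕ) : Prop :=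
  ∃ T : Fin t → SimpleGraph (Fin n), IsIST G r T

open Classical in
/-- Probability that the uniformly random `d`-regular graph `G(n,d)` satisfies the
property `A`: the uniform distribution over all `d`-regular simple graphs on `[n]`. -/
noncomputable def regProb (n d : ℕ) (A : SimpleGraph (Fin n) → Prop) : ℝ :=
  ((Finset.univ.filter (fun G : SimpleGraph (Fin n) =>
      (∀ v, Nat.card (G.neighborSet v) = d) ∧ A G)).card : ℝ) /
  ((Finset.univ.filter (fun G : SimpleGraph (Fin n) =>
      ∀ v, Nat.card (G.neighborSet v) = d)).card : ℝ)

/-!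
A `d`-regular graph is encoded by a port numbering of the edges at each vertex, together with an
independent mark at each vertex; uniform pairs of this kind project to uniform `d`-regular graphs.
Fix a root `r` and `t = ⌊d / 4⌋`, and split the ports at every vertex into `t` blocks of four.

From `r` grow, in heap order and through the ports, `t` binary trees, the *core*. A vertex is
accepted into the core only if its mark is nonzero and its outward neighbours avoid those of the
vertices accepted so far. A vertex off the core explores for tree `i` only along the ports of
block `i`, inside a maximal subgraph of large girth, until it meets branch `i` of the core. Since
small vertex sets span few edges, at most one edge is missing near any vertex, so the exploration
keeps branching. Disjointness of the port blocks and of the branches, together with the girth,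
makes the routes of a vertex to `r` in two different trees internally disjoint.

The failures to be excluded for a typical root are a dense small set, a branch with few accepted
leaves, and an exploration that misses a branch. Each is shown to be rare by counting edge
switchings; a switching sets the marks of the four vertices it touches to zero, which closes them
to the core, so that the core is not affected. Markov's inequality over `r` then gives the
theorem, with cores of depth of order `log log n`.
-/

namespace RegularIST

open scoped Classical

/-! ### Trees from parent maps -/

section ParentMap

variable {V ι : Type*} {G : SimpleGraph V} {r v : V} {p : V → V}

/-- A parent map towards the root `r`: some rank drops at every step away from `r`, so that
iterating `p` leads every vertex to `r`. The value `p r` is irrelevant. -/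
def IsParentMap (r : V) (p : V → V) : Prop :=
  ∃ rank : V → ℕ, ∀ v ≠ r, rank (p v) < rank v

/-- The graph whose edges join each vertex other than `r` to its parent. -/
def parentGraph (r : V) (p : V → V) : SimpleGraph V :=
  SimpleGraph.fromRel fun v w => v ≠ r ∧ w = p v

lemma parentGraph_adj {x y : V} : (parentGraph r p).Adj x y ↔
    x ≠ y ∧ ((x ≠ r ∧ y = p x) ∨ (y ≠ r ∧ x = p y)) :=
  SimpleGraph.fromRel_adj _ _ _

lemma parentGraph_adj_parent (hp : IsParentMap r p) (hv : v ≠ r) :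
    (parentGraph r p).Adj v (p v) := by
  obtain ⟨rank, hrank⟩ := hp
  refine parentGraph_adj.2 ⟨fun hfix => ?_, Or.inl ⟨hv, rfl⟩⟩
  exact (hrank v hv).ne (congrArg rank hfix.symm)

lemma parentGraph_le (hadj : ∀ v ≠ r, G.Adj v (p v)) : parentGraph r p ≤ G := by
  intro x y hxy
  rcases (parentGraph_adj.1 hxy).2 with ⟨hx, rfl⟩ | ⟨hy, rfl⟩
  · exact hadj x hx
  · exact (hadj y hy).symm

lemma exists_walk_parentGraph (hp : IsParentMap r p) (v : V) :
    ∃ w : (parentGraph r p).Walk v r, ∀ x ∈ w.support, ∃ k, x = p^[k] v := by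
  obtain ⟨rank, hrank⟩ := id hp
  induction hm : rank v using Nat.strong_induction_on generalizing v with
  | _ m ih =>
    subst hm
    by_cases hv : v = r
    · subst hv
      exact ⟨.nil, fun x hx => ⟨0, by simpa using hx⟩⟩
    obtain ⟨w, hw⟩ := ih _ (hrank v hv) (p v) rfl
    refine ⟨.cons (parentGraph_adj_parent hp hv) w, fun x hx => ?_⟩
    rcases List.mem_cons.1 (w.support_cons _ ▸ hx) with rfl | hx
    · exact ⟨0, rfl⟩
    · obtain ⟨k, rfl⟩ := hw x hx
      exact ⟨k + 1, rfl⟩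

lemma card_edgeSet_parentGraph_lt [Finite V] (r : V) (p : V → V) :
    Nat.card (parentGraph r p).edgeSet < Nat.card V := by
  have hsub : (parentGraph r p).edgeSet ⊆ (fun v => s(v, p v)) '' {r}ᶜ := by
    intro e
    induction e using Sym2.ind with
    | _ x y =>
      intro he
      rcases (parentGraph_adj.1 ((SimpleGraph.mem_edgeSet _).1 he)).2 with ⟨hx, rfl⟩ | ⟨hy, rfl⟩
      · exact ⟨x, hx, rfl⟩
      · exact ⟨y, hy, Sym2.eq_swap⟩
  calc Nat.card (parentGraph r p).edgeSet
      ≤ ((fun v => s(v, p v)) '' {r}ᶜ).ncard := Set.ncard_le_ncard hsub (Set.toFinite _)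
    _ ≤ ({r}ᶜ : Set V).ncard := Set.ncard_image_le (Set.toFinite _)
    _ < (Set.univ : Set V).ncard :=
        Set.ncard_lt_ncard (by simp [Set.ssubset_univ_iff]) (Set.toFinite _)
    _ = Nat.card V := Set.ncard_univ V

lemma isTree_parentGraph [Finite V] (hp : IsParentMap r p) : (parentGraph r p).IsTree := by
  have hconn : (parentGraph r p).Connected := by
    refine SimpleGraph.connected_iff_exists_forall_reachable _ |>.2 ⟨r, fun v => ?_⟩
    obtain ⟨w, -⟩ := exists_walk_parentGraph hp v
    exact ⟨w.reverse⟩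
  exact SimpleGraph.isTree_iff_connected_and_card.2 ⟨hconn,
    le_antisymm (card_edgeSet_parentGraph_lt r p) hconn.card_vert_le_card_edgeSet_add_one⟩

lemma exists_iterate_of_mem_path_support [Finite V] (hp : IsParentMap r p)
    {w : (parentGraph r p).Walk v r} (hw : w.IsPath) {x : V} (hx : x ∈ w.support) :
    ∃ k, x = p^[k] v := by
  obtain ⟨w', hw'⟩ := exists_walk_parentGraph hp v
  have := (isTree_parentGraph hp).isAcyclic.subsingleton_path v r
  have hpath : w = w'.bypass :=
    congrArg Subtype.val (Subsingleton.elim (⟨w, hw⟩ : (parentGraph r p).Path v r)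
      ⟨w'.bypass, w'.bypass_isPath⟩)
  exact hw' x (w'.support_bypass_subset_support (hpath ▸ hx))

/-- The parent maps `p i` towards `r` use edges of `G`, and the orbits of a vertex under two of
them share only that vertex and `r`. -/
structure IndependentParentMaps (G : SimpleGraph V) (r : V) (p : ι → V → V) : Prop where
  adj : ∀ i, ∀ v ≠ r, G.Adj v (p i v)
  isParentMap : ∀ i, IsParentMap r (p i)
  eq_or_eq_root : ∀ v ≠ r, ∀ i j, i ≠ j → ∀ k l, (p i)^[k] v = (p j)^[l] v →
    (p i)^[k] v = v ∨ (p i)^[k] v = r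

lemma IndependentParentMaps.hasISTs {n t : ℕ} {G : SimpleGraph (Fin n)} {r : Fin n}
    {p : Fin t → Fin n → Fin n} (h : IndependentParentMaps G r p) : HasISTs G r t := by
  refine ⟨fun i => parentGraph r (p i),
    fun i => ⟨parentGraph_le (h.adj i), isTree_parentGraph (h.isParentMap i)⟩, ?_⟩
  intro v hv i j hij w w' hw hw' x hx hx'
  obtain ⟨k, rfl⟩ := exists_iterate_of_mem_path_support (h.isParentMap i) hw hx
  obtain ⟨l, hl⟩ := exists_iterate_of_mem_path_support (h.isParentMap j) hw' hx'
  exact h.eq_or_eq_root v hv i j hij k l hl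

end ParentMap

section Scaffold

variable {V ι : Type*} {G H : SimpleGraph V} {r : V}

/-- A core: a set of vertices containing `r` and split into labelled branches, each of which hangs
from `r` through the map `parent` and is graded by `rank`. -/
structure BranchedCore (G : SimpleGraph V) (r : V) (ι : Type*) where
  core : Set V
  label : V → ι
  parent : V → V
  rank : V → ℕ
  height : ℕ
  root_mem : r ∈ core
  rank_lt : ∀ c ∈ core, rank c < height
  parent_mem : ∀ c ∈ core, c ≠ r → parent c ∈ core
  adj_parent : ∀ c ∈ core, c ≠ r → G.Adj c (parent c)
  rank_parent_lt : ∀ c ∈ core, c ≠ r → rank (parent c) < rank c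
  label_parent : ∀ c ∈ core, c ≠ r → parent c ≠ r → label (parent c) = label c

/-- The combinatorial data from which independent spanning trees are assembled. A vertex `u` off the
core travels to the branch `i` along `route i`, in at most `dist i u` steps of `H` and one last edge
of `G`; a core vertex outside the branch `i` first leaves the core through `exit i`. Paths of `H` of
length at most `radius` are determined by their ends. -/
structure Scaffold (G H : SimpleGraph V) (r : V) (ι : Type*) extends BranchedCore G r ι where
  exit : ι → V → V
  route : ι → V → V
  dist : ι → V → ℕ
  radius : ℕ
  le : H ≤ G
  path_unique : ∀ x y (P Q : H.Walk x y), P.IsPath → Q.IsPath →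
    P.length ≤ radius → Q.length ≤ radius → P = Q
  exit_notMem : ∀ c ∈ core, c ≠ r → ∀ i ≠ label c, exit i c ∉ core
  adj_exit : ∀ c ∈ core, c ≠ r → ∀ i ≠ label c, H.Adj c (exit i c)
  exit_injOn : ∀ c ∈ core, c ≠ r → Set.InjOn (exit · c) {i | i ≠ label c}
  dist_add_two_le : ∀ i, ∀ u ∉ core, dist i u + 2 ≤ radius
  route_spec : ∀ i, ∀ u ∉ core,
    (route i u ∈ core ∧ route i u ≠ r ∧ label (route i u) = i ∧ G.Adj u (route i u)) ∨
    (route i u ∉ core ∧ H.Adj u (route i u) ∧ dist i (route i u) < dist i u)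
  route_injOn : ∀ u ∉ core, Set.InjOn (route · u) {i | route i u ∉ core}

namespace Scaffold

variable (S : Scaffold G H r ι) {i j : ι} {u v : V}

/-- The parent map of the `i`-th tree of a scaffold. -/
noncomputable def parentMap (i : ι) (v : V) : V :=
  if v = r then r
  else if v ∈ S.core then (if S.label v = i then S.parent v else S.exit i v)
  else S.route i v

/-- The rank certifying that `S.parentMap i` is a parent map: it orders the branch `i` first, then
the vertices off the core, then the other branches. -/
noncomputable def treeRank (i : ι) (v : V) : ℕ :=
  if v = r then 0
  else if v ∈ S.core then (if S.label v = i then 1 + S.rank v else S.height + S.radius + 2)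
  else S.height + 1 + S.dist i v

/-- The `i`-th branch of the core together with the root. -/
def branch (i : ι) : Set V := {v | v = r ∨ v ∈ S.core ∧ S.label v = i}

lemma ne_root_of_notMem_core (hv : v ∉ S.core) : v ≠ r := fun h => hv (h ▸ S.root_mem)

lemma branch_subset_core : S.branch i ⊆ S.core := by
  rintro v (rfl | ⟨hv, -⟩)
  exacts [S.root_mem, hv]

lemma parentMap_root : S.parentMap i r = r := if_pos rfl

lemma parentMap_of_label_eq (hv : v ∈ S.core) (hvr : v ≠ r) (hi : S.label v = i) :
    S.parentMap i v = S.parent v := by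
  simp [parentMap, hv, hvr, hi]

lemma parentMap_of_label_ne (hv : v ∈ S.core) (hvr : v ≠ r) (hi : S.label v ≠ i) :
    S.parentMap i v = S.exit i v := by
  simp [parentMap, hv, hvr, hi]

lemma parentMap_of_notMem (hv : v ∉ S.core) : S.parentMap i v = S.route i v := by
  simp [parentMap, hv, S.ne_root_of_notMem_core hv]

lemma treeRank_root : S.treeRank i r = 0 := if_pos rfl

lemma treeRank_of_label_eq (hv : v ∈ S.core) (hvr : v ≠ r) (hi : S.label v = i) :
    S.treeRank i v = 1 + S.rank v := by
  simp [treeRank, hv, hvr, hi]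

lemma treeRank_of_label_ne (hv : v ∈ S.core) (hvr : v ≠ r) (hi : S.label v ≠ i) :
    S.treeRank i v = S.height + S.radius + 2 := by
  simp [treeRank, hv, hvr, hi]

lemma treeRank_of_notMem (hv : v ∉ S.core) : S.treeRank i v = S.height + 1 + S.dist i v := by
  simp [treeRank, hv, S.ne_root_of_notMem_core hv]

lemma treeRank_parentMap_lt (hv : v ≠ r) : S.treeRank i (S.parentMap i v) < S.treeRank i v := by
  by_cases hvC : v ∈ S.core
  · by_cases hi : S.label v = i
    · rw [S.parentMap_of_label_eq hvC hv hi, S.treeRank_of_label_eq hvC hv hi]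
      by_cases hpr : S.parent v = r
      · rw [hpr, treeRank_root]
        omega
      · rw [S.treeRank_of_label_eq (S.parent_mem v hvC hv) hpr
          ((S.label_parent v hvC hv hpr).trans hi)]
        exact Nat.add_lt_add_left (S.rank_parent_lt v hvC hv) 1
    · have hexit := S.exit_notMem v hvC hv i (Ne.symm hi)
      rw [S.parentMap_of_label_ne hvC hv hi, S.treeRank_of_label_ne hvC hv hi,
        S.treeRank_of_notMem hexit]
      have := S.dist_add_two_le i _ hexit
      omega
  · rw [S.parentMap_of_notMem hvC, S.treeRank_of_notMem hvC]
    rcases S.route_spec i v hvC with ⟨hmem, hne, hlabel, -⟩ | ⟨hmem, -, hdist⟩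
    · rw [S.treeRank_of_label_eq hmem hne hlabel]
      have := S.rank_lt _ hmem
      omega
    · rw [S.treeRank_of_notMem hmem]
      omega

lemma adj_parentMap (hv : v ≠ r) : G.Adj v (S.parentMap i v) := by
  by_cases hvC : v ∈ S.core
  · by_cases hi : S.label v = i
    · exact S.parentMap_of_label_eq hvC hv hi ▸ S.adj_parent v hvC hv
    · exact S.parentMap_of_label_ne hvC hv hi ▸ S.le (S.adj_exit v hvC hv i (Ne.symm hi))
  · rw [S.parentMap_of_notMem hvC]
    rcases S.route_spec i v hvC with ⟨-, -, -, hadj⟩ | ⟨-, hadj, -⟩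
    exacts [hadj, S.le hadj]

lemma parentMap_mem_branch (hv : v ∈ S.branch i) : S.parentMap i v ∈ S.branch i := by
  by_cases hvr : v = r
  · exact Or.inl (by rw [hvr, S.parentMap_root])
  obtain ⟨hvC, hi⟩ := hv.resolve_left hvr
  rw [S.parentMap_of_label_eq hvC hvr hi]
  by_cases hpr : S.parent v = r
  · exact Or.inl hpr
  · exact Or.inr ⟨S.parent_mem v hvC hvr, (S.label_parent v hvC hvr hpr).trans hi⟩

lemma iterate_parentMap_mem_branch (hv : v ∈ S.branch i) (k : ℕ) :
    (S.parentMap i)^[k] v ∈ S.branch i :=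
  Set.MapsTo.iterate (fun _ => S.parentMap_mem_branch) k hv

lemma parentMap_mem_branch_of_mem_core (hu : u ∉ S.core) (h : S.parentMap i u ∈ S.core) :
    S.parentMap i u ∈ S.branch i := by
  rw [S.parentMap_of_notMem hu] at h ⊢
  rcases S.route_spec i u hu with ⟨hmem, -, hlabel, -⟩ | ⟨hmem, -, -⟩
  exacts [Or.inr ⟨hmem, hlabel⟩, (hmem h).elim]

lemma iterate_parentMap_mem_branch_of_mem_core (hu : u ∉ S.core) {k : ℕ}
    (h : (S.parentMap i)^[k] u ∈ S.core) : (S.parentMap i)^[k] u ∈ S.branch i := by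
  induction k generalizing u with
  | zero => exact (hu h).elim
  | succ k ih =>
    rw [Function.iterate_succ_apply] at h ⊢
    by_cases hnext : S.parentMap i u ∈ S.core
    · exact S.iterate_parentMap_mem_branch (S.parentMap_mem_branch_of_mem_core hu hnext) k
    · exact ih hnext h

lemma label_ne_of_parentMap_notMem (hv : v ∈ S.core) (hvr : v ≠ r)
    (h : S.parentMap i v ∉ S.core) : S.label v ≠ i :=
  fun hi => h (S.parentMap_of_label_eq hv hvr hi ▸ S.parent_mem v hv hvr)

lemma eq_of_parentMap_eq (hv : v ≠ r) (hi : S.parentMap i v ∉ S.core)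
    (hij : S.parentMap i v = S.parentMap j v) : i = j := by
  have hj : S.parentMap j v ∉ S.core := hij ▸ hi
  by_cases hvC : v ∈ S.core
  · have hli := S.label_ne_of_parentMap_notMem hvC hv hi
    have hlj := S.label_ne_of_parentMap_notMem hvC hv hj
    rw [S.parentMap_of_label_ne hvC hv hli, S.parentMap_of_label_ne hvC hv hlj] at hij
    exact S.exit_injOn v hvC hv hli.symm hlj.symm hij
  · rw [S.parentMap_of_notMem hvC] at hi hij
    rw [S.parentMap_of_notMem hvC] at hj hij
    exact S.route_injOn v hvC hi hj hij

lemma parentMap_spec_of_notMem (hu : u ∉ S.core) (h : S.parentMap i u ∉ S.core) :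
    H.Adj u (S.parentMap i u) ∧ S.dist i (S.parentMap i u) < S.dist i u := by
  rw [S.parentMap_of_notMem hu] at h ⊢
  exact ((S.route_spec i u hu).resolve_left fun hcore => h hcore.1).2

lemma parentMap_notMem_of_iterate_notMem (hu : u ∉ S.core) {k : ℕ}
    (h : (S.parentMap i)^[k] (S.parentMap i u) ∉ S.core) : S.parentMap i u ∉ S.core :=
  fun hnext => h (S.branch_subset_core
    (S.iterate_parentMap_mem_branch (S.parentMap_mem_branch_of_mem_core hu hnext) k))

lemma exists_path_iterate_parentMap (hu : u ∉ S.core) {k : ℕ}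
    (hk : (S.parentMap i)^[k] u ∉ S.core) :
    ∃ P : H.Walk u ((S.parentMap i)^[k] u), P.IsPath ∧ P.length ≤ S.dist i u ∧
      (∀ y ∈ P.support, S.dist i y ≤ S.dist i u ∧ y ∉ S.core) ∧
      ((S.parentMap i)^[k] u ≠ u →
        P.getVert 1 = S.parentMap i u ∧ S.parentMap i u ∉ S.core) := by
  induction k generalizing u with
  | zero => exact ⟨.nil, by simp, by simp, by simpa using hu, fun h => (h rfl).elim⟩
  | succ k ih =>
    rw [Function.iterate_succ_apply] at hk ⊢
    have hnext := S.parentMap_notMem_of_iterate_notMem hu hk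
    obtain ⟨hadj, hdist⟩ := S.parentMap_spec_of_notMem hu hnext
    obtain ⟨P, hP, hlen, hsupp, -⟩ := ih hnext hk
    refine ⟨.cons hadj P, ?_, ?_, ?_, fun _ => ⟨by simp, hnext⟩⟩
    · exact (SimpleGraph.Walk.cons_isPath_iff _ _).2
        ⟨hP, fun hmem => (hsupp _ hmem).1.not_gt hdist⟩
    · rw [SimpleGraph.Walk.length_cons]
      omega
    · intro y hy
      rcases List.mem_cons.1 (P.support_cons hadj ▸ hy) with rfl | hy
      · exact ⟨le_rfl, hu⟩
      · exact ⟨(hsupp y hy).1.trans hdist.le, (hsupp y hy).2⟩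

lemma exists_short_path_of_iterate_notMem (hv : v ≠ r) {k : ℕ} {x : V}
    (hx : (S.parentMap i)^[k] v = x) (hxv : x ≠ v) (hxC : x ∉ S.core) :
    S.parentMap i v ∉ S.core ∧
      ∃ P : H.Walk v x, P.IsPath ∧ P.length ≤ S.radius ∧ P.getVert 1 = S.parentMap i v := by
  subst hx
  by_cases hvC : v ∈ S.core
  · have hi : S.label v ≠ i := fun hi =>
      hxC (S.branch_subset_core (S.iterate_parentMap_mem_branch (Or.inr ⟨hvC, hi⟩) k))
    obtain _ | k := k
    · exact (hxv rfl).elim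
    have hexit := S.exit_notMem v hvC hv i hi.symm
    have hadj := S.adj_exit v hvC hv i hi.symm
    rw [← S.parentMap_of_label_ne hvC hv hi] at hexit hadj
    rw [Function.iterate_succ_apply] at hxC ⊢
    obtain ⟨P, hP, hlen, hsupp, -⟩ := S.exists_path_iterate_parentMap hexit hxC
    have := S.dist_add_two_le i _ hexit
    refine ⟨hexit, .cons hadj P, ?_, by rw [SimpleGraph.Walk.length_cons]; omega, by simp⟩
    exact (SimpleGraph.Walk.cons_isPath_iff _ _).2 ⟨hP, fun hmem => (hsupp _ hmem).2 hvC⟩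
  · obtain ⟨P, hP, hlen, -, hfirst⟩ := S.exists_path_iterate_parentMap hvC hxC
    have := S.dist_add_two_le i _ hvC
    exact ⟨(hfirst hxv).2, P, hP, by omega, (hfirst hxv).1⟩

lemma label_eq_of_iterate_mem_core (hv : v ≠ r) {k : ℕ} {x : V}
    (hx : (S.parentMap i)^[k] v = x) (hxv : x ≠ v) (hxr : x ≠ r) (hxC : x ∈ S.core) :
    S.label x = i := by
  suffices hbranch : x ∈ S.branch i from (hbranch.resolve_left hxr).2
  subst hx
  by_cases hvC : v ∈ S.core
  · by_cases hi : S.label v = i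
    · exact S.iterate_parentMap_mem_branch (Or.inr ⟨hvC, hi⟩) k
    · obtain _ | k := k
      · exact (hxv rfl).elim
      have hexit := S.exit_notMem v hvC hv i (Ne.symm hi)
      rw [← S.parentMap_of_label_ne hvC hv hi] at hexit
      exact S.iterate_parentMap_mem_branch_of_mem_core hexit hxC
  · exact S.iterate_parentMap_mem_branch_of_mem_core hvC hxC

theorem independentParentMaps : IndependentParentMaps G r S.parentMap where
  adj _ _ hv := S.adj_parentMap hv
  isParentMap i := ⟨S.treeRank i, fun _ hv => S.treeRank_parentMap_lt hv⟩
  eq_or_eq_root v hv i j hij k l hkl := by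
    by_contra! hne
    obtain ⟨hxv, hxr⟩ := hne
    by_cases hxC : (S.parentMap i)^[k] v ∈ S.core
    · exact hij ((S.label_eq_of_iterate_mem_core hv rfl hxv hxr hxC).symm.trans
        (S.label_eq_of_iterate_mem_core hv hkl.symm hxv hxr hxC))
    · obtain ⟨hi, P, hP, hPlen, hPfirst⟩ := S.exists_short_path_of_iterate_notMem hv rfl hxv hxC
      obtain ⟨-, Q, hQ, hQlen, hQfirst⟩ :=
        S.exists_short_path_of_iterate_notMem hv hkl.symm hxv hxC
      have hPQ : P = Q := S.path_unique _ _ P Q hP hQ hPlen hQlen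
      exact hij (S.eq_of_parentMap_eq hv hi (by rw [← hPfirst, hPQ, hQfirst]))

end Scaffold

end Scaffold

/-! ### Maximal subgraphs of large girth -/

section Girth

variable {V : Type*} {G H : SimpleGraph V} {x y : V} {g : ℕ}

lemma exists_maximal_le_egirth [Finite V] (G : SimpleGraph V) (g : ℕ∞) :
    ∃ H, Maximal (fun H => H ≤ G ∧ g ≤ H.egirth) H := by
  have hbot : g ≤ (⊥ : SimpleGraph V).egirth := by
    rw [SimpleGraph.egirth_bot]
    exact le_top
  obtain ⟨H, -, hH⟩ := (Set.toFinite {H : SimpleGraph V | H ≤ G ∧ g ≤ H.egirth}).exists_le_maximal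
    ⟨bot_le, hbot⟩
  exact ⟨H, hH⟩

lemma mem_edgeSet_of_mem_edges_sup_edge {a b : V} {p : (H ⊔ SimpleGraph.edge x y).Walk a b}
    (hp : s(x, y) ∉ p.edges) : ∀ e ∈ p.edges, e ∈ H.edgeSet := by
  intro e he
  rcases SimpleGraph.edgeSet_sup H (.edge x y) ▸ p.edges_subset_edgeSet he with h | h
  · exact h
  · exact (hp (SimpleGraph.edgeSet_edge_subset h ▸ he)).elim

lemma exists_walk_of_isCycle_sup_edge {v : V} {c : (H ⊔ SimpleGraph.edge x y).Walk v v}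
    (hc : c.IsCycle) (hmem : s(x, y) ∈ c.edges) : ∃ p : H.Walk x y, p.length + 1 ≤ c.length := by
  have hxy : x ≠ y := (c.adj_of_mem_edges hmem).ne
  have hx : x ∈ c.support := c.fst_mem_support_of_mem_edges hmem
  have hrot : (c.rotate x hx).IsCycle := hc.rotate hx
  rw [← c.length_edges, ← (c.rotate_edges x hx).perm.length_eq, SimpleGraph.Walk.length_edges]
  rw [← (c.rotate_edges x hx).mem_iff] at hmem
  generalize c.rotate x hx = c at hmem hrot
  cases c with
  | nil => exact (hrot.ne_nil rfl).elim
  | @cons _ w _ hxw p =>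
    rw [SimpleGraph.Walk.cons_isCycle_iff] at hrot
    rw [SimpleGraph.Walk.edges_cons, List.mem_cons] at hmem
    rw [SimpleGraph.Walk.length_cons]
    by_cases hw : w = y
    · subst hw
      exact ⟨p.reverse.transfer H (mem_edgeSet_of_mem_edges_sup_edge (by simpa using hrot.2)),
        by simp⟩
    have hne : s(x, y) ≠ s(x, w) := fun h => hw (Sym2.congr_right.1 h).symm
    have hy : y ∈ p.support := p.snd_mem_support_of_mem_edges (hmem.resolve_left hne)
    have hxy' : s(x, y) ∉ (SimpleGraph.Walk.cons hxw (p.takeUntil y hy)).edges := by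
      rw [SimpleGraph.Walk.edges_cons, List.mem_cons]
      rintro (h | h)
      · exact hne h
      · exact SimpleGraph.Walk.endpoint_notMem_support_takeUntil hrot.1 hy hxy
          (SimpleGraph.Walk.fst_mem_support_of_mem_edges _ h)
    refine ⟨.transfer _ H (mem_edgeSet_of_mem_edges_sup_edge hxy'), ?_⟩
    rw [SimpleGraph.Walk.length_transfer, SimpleGraph.Walk.length_cons]
    exact Nat.succ_le_succ (p.length_takeUntil_lt_length hy hxy.symm)

lemma exists_short_walk_of_maximal
    (hH : Maximal (fun H => H ≤ G ∧ (g : ℕ∞) ≤ H.egirth) H) (hG : G.Adj x y) (hn : ¬ H.Adj x y) :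
    ∃ p : H.Walk x y, p.length + 1 < g := by
  have hle : H ⊔ SimpleGraph.edge x y ≤ G :=
    sup_le hH.prop.1 ((SimpleGraph.edge_le_iff _).2 (Or.inr hG))
  have hadj : (H ⊔ SimpleGraph.edge x y).Adj x y :=
    Or.inr ((SimpleGraph.edge_adj ..).2 ⟨Or.inl ⟨rfl, rfl⟩, hG.ne⟩)
  have hshort : ¬ (g : ℕ∞) ≤ (H ⊔ SimpleGraph.edge x y).egirth := fun hg =>
    hn (hH.le_of_ge ⟨hle, hg⟩ le_sup_left hadj)
  rw [SimpleGraph.le_egirth] at hshort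
  push Not at hshort
  obtain ⟨v, c, hc, hlen⟩ := hshort
  rw [Nat.cast_lt] at hlen
  by_cases hmem : s(x, y) ∈ c.edges
  · obtain ⟨p, hp⟩ := exists_walk_of_isCycle_sup_edge hc hmem
    exact ⟨p, by omega⟩
  · have hcyc := SimpleGraph.le_egirth.1 hH.prop.2 v _
      (hc.transfer (mem_edgeSet_of_mem_edges_sup_edge hmem))
    rw [SimpleGraph.Walk.length_transfer, Nat.cast_le] at hcyc
    omega

lemma isAcyclic_of_edgeSet_subset_of_length_lt (hg : (g : ℕ∞) ≤ H.egirth)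
    {F : SimpleGraph V} {l : List (Sym2 V)} (hl : l.length < g)
    (hF : ∀ e ∈ F.edgeSet, e ∈ l) (hFH : F ≤ H) : F.IsAcyclic := by
  intro v c hc
  have hcyc := (SimpleGraph.le_egirth.1 (hg.trans (SimpleGraph.egirth_anti hFH))) v c hc
  have hlen : c.length ≤ l.length := by
    rw [← c.length_edges]
    exact (hc.edges_nodup.subperm fun e he => hF e (c.edges_subset_edgeSet he)).length_le
  rw [Nat.cast_le] at hcyc
  omega

lemma path_unique_of_le_egirth (hg : (g : ℕ∞) ≤ H.egirth) {p q : H.Walk x y}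
    (hp : p.IsPath) (hq : q.IsPath) (hpq : p.length + q.length < g) : p = q := by
  let F := SimpleGraph.fromEdgeSet {e | e ∈ p.edges ++ q.edges}
  have hmem : ∀ e, e ∈ F.edgeSet ↔ e ∈ p.edges ++ q.edges := fun e => by
    rw [SimpleGraph.edgeSet_fromEdgeSet]
    refine ⟨And.left, fun he => ⟨he, H.not_isDiag_of_mem_edgeSet ?_⟩⟩
    exact (List.mem_append.1 he).elim (p.edges_subset_edgeSet ·) (q.edges_subset_edgeSet ·)
  have hFH : F ≤ H := SimpleGraph.edgeSet_subset_edgeSet.1 fun e he =>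
    (List.mem_append.1 ((hmem e).1 he)).elim (p.edges_subset_edgeSet ·) (q.edges_subset_edgeSet ·)
  have hpF : ∀ e ∈ p.edges, e ∈ F.edgeSet := fun e he => (hmem e).2 (List.mem_append_left _ he)
  have hqF : ∀ e ∈ q.edges, e ∈ F.edgeSet := fun e he => (hmem e).2 (List.mem_append_right _ he)
  have hacyclic : F.IsAcyclic := isAcyclic_of_edgeSet_subset_of_length_lt hg
    (l := p.edges ++ q.edges) (by simpa using hpq) (fun e => (hmem e).1) hFH
  have := hacyclic.subsingleton_path x y
  have htransfer : p.transfer F hpF = q.transfer F hqF :=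
    congrArg Subtype.val
      (Subsingleton.elim (⟨_, hp.transfer hpF⟩ : F.Path x y) ⟨_, hq.transfer hqF⟩)
  refine SimpleGraph.Walk.ext_support ?_
  rw [← p.support_transfer hpF, htransfer, q.support_transfer]

end Girth

section LocallySparse

variable {V : Type*} {G H : SimpleGraph V}

/-- All edges of `E` are edges of `G` with both ends in `S`. -/
def SpansEdges (G : SimpleGraph V) (S : Finset V) (E : Finset (Sym2 V)) : Prop :=
  ∀ e ∈ E, e ∈ G.edgeSet ∧ ∀ x ∈ e, x ∈ S

/-- Every set of at most `s` vertices spans at most as many edges as it has vertices. -/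
def IsLocallySparse (G : SimpleGraph V) (s : ℕ) : Prop :=
  ∀ (S : Finset V) (E : Finset (Sym2 V)), S.card ≤ s → SpansEdges G S E → E.card ≤ S.card

lemma SpansEdges.mono {S : Finset V} {E : Finset (Sym2 V)} (h : SpansEdges H S E) (hHG : H ≤ G) :
    SpansEdges G S E :=
  fun e he => ⟨SimpleGraph.edgeSet_mono hHG (h e he).1, (h e he).2⟩

lemma SpansEdges.insert_edge {S : Finset V} {E : Finset (Sym2 V)} {x y : V}
    (h : SpansEdges G S E) (hxy : G.Adj x y) (hx : x ∈ S) :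
    SpansEdges G (insert y S) (insert s(x, y) E) := by
  intro e he
  rcases Finset.mem_insert.1 he with rfl | he
  · refine ⟨hxy, fun z hz => ?_⟩
    rcases Sym2.mem_iff.1 hz with rfl | rfl
    exacts [Finset.mem_insert_of_mem hx, Finset.mem_insert_self ..]
  · exact ⟨(h e he).1, fun z hz => Finset.mem_insert_of_mem ((h e he).2 z hz)⟩

lemma SpansEdges.exists_extend_along_walk {u v : V} (p : H.Walk u v) {S : Finset V}
    {E : Finset (Sym2 V)} (h : SpansEdges H S E) (hu : u ∈ S) (hcard : S.card ≤ E.card + 1) :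
    ∃ (S' : Finset V) (E' : Finset (Sym2 V)), S ⊆ S' ∧ v ∈ S' ∧ SpansEdges H S' E' ∧
      S'.card ≤ E'.card + 1 ∧ S'.card ≤ S.card + p.length := by
  induction p generalizing S E with
  | nil => exact ⟨S, E, subset_rfl, hu, h, hcard, by simp⟩
  | @cons a b c hab p ih =>
    rw [SimpleGraph.Walk.length_cons]
    by_cases hb : b ∈ S
    · obtain ⟨S', E', hS, hc, h', hcard', hlen⟩ := ih h hb hcard
      exact ⟨S', E', hS, hc, h', hcard', by omega⟩
    · have hE : s(a, b) ∉ E := fun he => hb ((h _ he).2 b (Sym2.mem_mk_right a b))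
      obtain ⟨S', E', hS, hc, h', hcard', hlen⟩ := ih (h.insert_edge hab hu)
        (Finset.mem_insert_self ..) (by
          rw [Finset.card_insert_of_notMem hb, Finset.card_insert_of_notMem hE]
          omega)
      rw [Finset.card_insert_of_notMem hb] at hlen
      exact ⟨S', E', (Finset.subset_insert ..).trans hS, hc, h', hcard', by omega⟩

/-- Two missing edges near `w`, with the cycles that they close in `H`, would span too many
edges. -/
lemma edge_eq_of_notAdj_maximal {K : ℕ} (hsparse : IsLocallySparse G (6 * K + 14))
    (hH : Maximal (fun H => H ≤ G ∧ ((2 * K + 7 : ℕ) : ℕ∞) ≤ H.egirth) H)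
    {w x₁ y₁ x₂ y₂ : V} (h₁ : G.Adj x₁ y₁) (h₁' : ¬ H.Adj x₁ y₁) (h₂ : G.Adj x₂ y₂)
    (h₂' : ¬ H.Adj x₂ y₂) (p₁ : H.Walk w x₁) (p₂ : H.Walk w x₂) (hp₁ : p₁.length ≤ K)
    (hp₂ : p₂.length ≤ K) : s(x₁, y₁) = s(x₂, y₂) := by
  by_contra hne
  obtain ⟨q₁, hq₁⟩ := exists_short_walk_of_maximal hH h₁ h₁'
  obtain ⟨q₂, hq₂⟩ := exists_short_walk_of_maximal hH h₂ h₂'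
  have hstart : SpansEdges H {w} ∅ := by simp [SpansEdges]
  obtain ⟨S₁, E₁, hS₁, hx₁, hE₁, hc₁, hl₁⟩ :=
    hstart.exists_extend_along_walk p₁ (by simp) (by simp)
  obtain ⟨S₂, E₂, hS₂, hy₁, hE₂, hc₂, hl₂⟩ := hE₁.exists_extend_along_walk q₁ hx₁ hc₁
  obtain ⟨S₃, E₃, hS₃, hx₂, hE₃, hc₃, hl₃⟩ :=
    hE₂.exists_extend_along_walk p₂ (hS₂ (hS₁ (Finset.mem_singleton_self w))) hc₂
  obtain ⟨S, E, hS, hy₂, hE, hc, hl⟩ := hE₃.exists_extend_along_walk q₂ hx₂ hc₃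
  rw [Finset.card_singleton] at hl₁
  have hspan₁ := (hE.mono hH.prop.1).insert_edge h₁ (hS (hS₃ (hS₂ hx₁)))
  rw [Finset.insert_eq_of_mem (hS (hS₃ hy₁))] at hspan₁
  have hspan := hspan₁.insert_edge h₂ (hS hx₂)
  rw [Finset.insert_eq_of_mem hy₂] at hspan
  have hcard := hsparse S _ (by omega) hspan
  have hnotMem₂ : s(x₂, y₂) ∉ insert s(x₁, y₁) E := fun hmem =>
    (Finset.mem_insert.1 hmem).elim (fun h => hne h.symm) fun h => h₂' (hE _ h).1
  rw [Finset.card_insert_of_notMem hnotMem₂,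
    Finset.card_insert_of_notMem fun h => h₁' (hE _ h).1] at hcard
  omega

end LocallySparse

/-! ### Port numberings and exploration balls -/

section PortNumbering

variable {V : Type*} {d i : ℕ} {nb : V → Fin d → V} {v x y : V}

/-- A `d`-regular simple graph presented by its ordered neighbour lists: `nb v` enumerates the
neighbours of `v`. The indices in `Fin d` are called ports. -/
structure IsPortNumbering (nb : V → Fin d → V) : Prop where
  inj : ∀ v, Function.Injective (nb v)
  ne : ∀ v p, nb v p ≠ v
  symm : ∀ v p, ∃ p', nb (nb v p) p' = v

/-- Adjacency in the graph with neighbour lists `nb`. -/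
def PortAdj (nb : V → Fin d → V) (x y : V) : Prop := ∃ p, nb x p = y

/-- The simple graph with neighbour lists `nb`. -/
def portGraph (nb : V → Fin d → V) : SimpleGraph V := SimpleGraph.fromRel (PortAdj nb)

/-- The finite set of neighbours of `v`. -/
noncomputable def neighbors (nb : V → Fin d → V) (v : V) : Finset V := Finset.univ.image (nb v)

/-- The `i`-th block of four consecutive ports; it is reserved for the `i`-th tree. -/
def portBlock (d i : ℕ) : Finset (Fin d) := {p | 4 * i ≤ p.1 ∧ p.1 < 4 * i + 4}

/-- The neighbours of `v` through the ports of the `i`-th block. -/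
noncomputable def blockNeighbors (nb : V → Fin d → V) (i : ℕ) (v : V) : Finset V :=
  (portBlock d i).image (nb v)

lemma IsPortNumbering.portAdj_symm (h : IsPortNumbering nb) (hxy : PortAdj nb x y) :
    PortAdj nb y x := by
  obtain ⟨p, rfl⟩ := hxy
  exact h.symm x p

lemma IsPortNumbering.ne_of_portAdj (h : IsPortNumbering nb) (hxy : PortAdj nb x y) : x ≠ y := by
  obtain ⟨p, rfl⟩ := hxy
  exact (h.ne x p).symm

lemma IsPortNumbering.portGraph_adj (h : IsPortNumbering nb) :
    (portGraph nb).Adj x y ↔ PortAdj nb x y := by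
  rw [portGraph, SimpleGraph.fromRel_adj]
  exact ⟨fun hxy => hxy.2.elim id h.portAdj_symm, fun hxy => ⟨h.ne_of_portAdj hxy, Or.inl hxy⟩⟩

lemma mem_neighbors : x ∈ neighbors nb v ↔ PortAdj nb v x := by
  simp [neighbors, PortAdj]

lemma card_neighbors_le (nb : V → Fin d → V) (v : V) : (neighbors nb v).card ≤ d :=
  Finset.card_image_le.trans_eq (by simp)

lemma IsPortNumbering.card_neighbors (h : IsPortNumbering nb) (v : V) :
    (neighbors nb v).card = d := by
  rw [neighbors, Finset.card_image_of_injective _ (h.inj v), Finset.card_univ, Fintype.card_fin]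

lemma map_portBlock (d i : ℕ) : (portBlock d i).map Fin.valEmbedding =
    (Finset.Ico (4 * i) (4 * i + 4)).filter (· < d) := by
  ext k
  simp only [portBlock, Finset.mem_map, Finset.mem_filter, Finset.mem_univ, true_and,
    Finset.mem_Ico, Fin.valEmbedding_apply]
  exact ⟨by rintro ⟨p, hp, rfl⟩; exact ⟨hp, p.2⟩, fun hk => ⟨⟨k, hk.2⟩, hk.1, rfl⟩⟩

lemma card_portBlock_le (d i : ℕ) : (portBlock d i).card ≤ 4 := by
  rw [← Finset.card_map Fin.valEmbedding, map_portBlock]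
  exact (Finset.card_filter_le _ _).trans_eq (by simp)

lemma card_portBlock (h : 4 * i + 4 ≤ d) : (portBlock d i).card = 4 := by
  rw [← Finset.card_map Fin.valEmbedding, map_portBlock, Finset.filter_true_of_mem]
  · simp
  · intro k hk
    exact (Finset.mem_Ico.1 hk).2.trans_le h

lemma portAdj_of_mem_blockNeighbors (h : x ∈ blockNeighbors nb i v) : PortAdj nb v x := by
  obtain ⟨p, -, hp⟩ := Finset.mem_image.1 h
  exact ⟨p, hp⟩

lemma card_blockNeighbors_le (nb : V → Fin d → V) (i : ℕ) (v : V) :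
    (blockNeighbors nb i v).card ≤ 4 :=
  Finset.card_image_le.trans (card_portBlock_le d i)

lemma IsPortNumbering.card_blockNeighbors (h : IsPortNumbering nb) (hi : 4 * i + 4 ≤ d) (v : V) :
    (blockNeighbors nb i v).card = 4 := by
  rw [blockNeighbors, Finset.card_image_of_injective _ (h.inj v), card_portBlock hi]

end PortNumbering

section Exploration

variable {V : Type*} {d : ℕ} (nb : V → Fin d → V) (C : Finset V) (u : V) (i : ℕ) (f : Sym2 V)

/-- The vertices reached from `u` in at most `j` steps along ports of the `i`-th block, without
entering `C` and without using the edge `f`. -/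
noncomputable def explorationBall : ℕ → Finset V
  | 0 => {u}
  | j + 1 => explorationBall j ∪ (explorationBall j).biUnion fun a =>
      (blockNeighbors nb i a).filter fun x => x ∉ C ∧ s(a, x) ≠ f

/-- The vertices first reached at step `j` of the exploration. -/
noncomputable def explorationSphere : ℕ → Finset V
  | 0 => {u}
  | j + 1 => explorationBall nb C u i f (j + 1) \ explorationBall nb C u i f j

/-- The ports through which the exploration leaves the ball of radius `K`. -/
noncomputable def frontierPorts (K : ℕ) : Finset (V × Fin d) :=
  (explorationBall nb C u i f K ×ˢ portBlock d i).filter fun ap =>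
    nb ap.1 ap.2 ∉ C ∧ nb ap.1 ap.2 ∉ explorationBall nb C u i f K ∧ s(ap.1, nb ap.1 ap.2) ≠ f

/-- The neighbours of `a` outside the ball of radius `j` that the exploration adds at the next
step. -/
noncomputable def freshNeighbors (j : ℕ) (a : V) : Finset V :=
  (blockNeighbors nb i a).filter fun x =>
    x ∉ C ∧ x ∉ explorationBall nb C u i f j ∧ s(a, x) ≠ f

/-- What makes the exploration up to radius `K` grow like a tree: within distance `K` of `u` all
edges but `f` belong to `H`, paths of `H` of length at most `K + 1` are determined by their ends,
and a vertex off `C` has at most one neighbour in `C`. -/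
structure IsExplorable (H : SimpleGraph V) (K : ℕ) : Prop where
  notMem : u ∉ C
  adj_of_near : ∀ {a x} (p : H.Walk u a), p.length ≤ K → PortAdj nb a x → s(a, x) ≠ f → H.Adj a x
  path_unique : ∀ {x y} {p q : H.Walk x y}, p.IsPath → q.IsPath → p.length ≤ K + 1 →
    q.length ≤ K + 1 → p = q
  neighbor_unique : ∀ v ∉ C, ∀ x ∈ C, ∀ y ∈ C, PortAdj nb v x → PortAdj nb v y → x = y

variable {nb C u i f} {H : SimpleGraph V} {K j k : ℕ} {a x : V}

lemma mem_explorationBall_succ : x ∈ explorationBall nb C u i f (j + 1) ↔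
    x ∈ explorationBall nb C u i f j ∨
      (x ∉ C ∧ ∃ a ∈ explorationBall nb C u i f j, x ∈ blockNeighbors nb i a ∧ s(a, x) ≠ f) := by
  simp only [explorationBall, Finset.mem_union, Finset.mem_biUnion, Finset.mem_filter]
  tauto

lemma mem_frontierPorts {ap : V × Fin d} : ap ∈ frontierPorts nb C u i f K ↔
    (ap.1 ∈ explorationBall nb C u i f K ∧ ap.2 ∈ portBlock d i) ∧ nb ap.1 ap.2 ∉ C ∧
      nb ap.1 ap.2 ∉ explorationBall nb C u i f K ∧ s(ap.1, nb ap.1 ap.2) ≠ f := by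
  rw [frontierPorts, Finset.mem_filter, Finset.mem_product]

lemma mem_freshNeighbors : x ∈ freshNeighbors nb C u i f j a ↔
    x ∈ blockNeighbors nb i a ∧ x ∉ C ∧ x ∉ explorationBall nb C u i f j ∧ s(a, x) ≠ f :=
  Finset.mem_filter

lemma explorationBall_subset_succ :
    explorationBall nb C u i f j ⊆ explorationBall nb C u i f (j + 1) :=
  Finset.subset_union_left

lemma explorationBall_mono (h : j ≤ k) :
    explorationBall nb C u i f j ⊆ explorationBall nb C u i f k :=
  monotone_nat_of_le_succ (f := explorationBall nb C u i f)
    (fun _ => explorationBall_subset_succ) h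

lemma notMem_of_mem_explorationBall (hu : u ∉ C) (hx : x ∈ explorationBall nb C u i f j) :
    x ∉ C := by
  induction j with
  | zero => rwa [Finset.mem_singleton.1 hx]
  | succ j ih => exact (mem_explorationBall_succ.1 hx).elim ih And.left

lemma card_explorationBall_le (j : ℕ) : (explorationBall nb C u i f j).card ≤ 5 ^ j := by
  induction j with
  | zero => simp [explorationBall]
  | succ j ih =>
    have hunion := Finset.card_union_le (explorationBall nb C u i f j)
      ((explorationBall nb C u i f j).biUnion fun a =>
        (blockNeighbors nb i a).filter fun x => x ∉ C ∧ s(a, x) ≠ f)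
    have hstep := Finset.card_biUnion_le_card_mul (explorationBall nb C u i f j)
      (fun a => (blockNeighbors nb i a).filter fun x => x ∉ C ∧ s(a, x) ≠ f) 4
      fun a _ => (Finset.card_filter_le _ _).trans (card_blockNeighbors_le nb i a)
    rw [explorationBall, pow_succ]
    omega

lemma explorationSphere_subset : explorationSphere nb C u i f j ⊆ explorationBall nb C u i f j := by
  cases j with
  | zero => exact subset_rfl
  | succ j => exact Finset.sdiff_subset

lemma notMem_explorationBall_of_mem_sphere (ha : a ∈ explorationSphere nb C u i f j) (h : k < j) :
    a ∉ explorationBall nb C u i f k := by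
  cases j with
  | zero => omega
  | succ j => exact fun hk => (Finset.mem_sdiff.1 ha).2 (explorationBall_mono (by omega) hk)

lemma freshNeighbors_subset_sphere (ha : a ∈ explorationSphere nb C u i f j) :
    freshNeighbors nb C u i f j a ⊆ explorationSphere nb C u i f (j + 1) := by
  intro x hx
  obtain ⟨hblock, hxC, hxB, hxf⟩ := mem_freshNeighbors.1 hx
  exact Finset.mem_sdiff.2 ⟨mem_explorationBall_succ.2
    (Or.inr ⟨hxC, a, explorationSphere_subset ha, hblock, hxf⟩), hxB⟩

namespace IsExplorable

lemma mono (h : IsExplorable nb C u f H K) (hk : k ≤ K) : IsExplorable nb C u f H k where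
  notMem := h.notMem
  adj_of_near p hp := h.adj_of_near p (hp.trans hk)
  path_unique hp hq hp' hq' := h.path_unique hp hq (by omega) (by omega)
  neighbor_unique := h.neighbor_unique

lemma exists_path (h : IsExplorable nb C u f H K) (hj : j ≤ K + 1)
    (hx : x ∈ explorationBall nb C u i f j) :
    ∃ P : H.Walk u x, P.IsPath ∧ P.length ≤ j ∧
      ∀ y ∈ P.support, y = x ∨ ∃ k < j, y ∈ explorationBall nb C u i f k := by
  induction j generalizing x with
  | zero =>
    obtain rfl := Finset.mem_singleton.1 hx
    exact ⟨.nil, by simp, by simp, by simp⟩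
  | succ j ih =>
    by_cases hxj : x ∈ explorationBall nb C u i f j
    · obtain ⟨P, hP, hlen, hsupp⟩ := ih (by omega) hxj
      exact ⟨P, hP, by omega,
        fun y hy => (hsupp y hy).imp_right fun ⟨k, hk, hyk⟩ => ⟨k, by omega, hyk⟩⟩
    obtain ⟨-, a, ha, hax, hf⟩ := (mem_explorationBall_succ.1 hx).resolve_left hxj
    obtain ⟨P, hP, hlen, hsupp⟩ := ih (by omega) ha
    have hadj : H.Adj a x := h.adj_of_near P (by omega) (portAdj_of_mem_blockNeighbors hax) hf
    have hball : ∀ y ∈ P.support, y ∈ explorationBall nb C u i f j := fun y hy =>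
      (hsupp y hy).elim (· ▸ ha) fun ⟨k, hk, hyk⟩ => explorationBall_mono hk.le hyk
    refine ⟨P.concat hadj, hP.concat (fun hmem => hxj (hball x hmem)) hadj, ?_, fun y hy => ?_⟩
    · rw [SimpleGraph.Walk.length_concat]
      omega
    · rw [SimpleGraph.Walk.support_concat, List.mem_append, List.mem_singleton] at hy
      exact hy.symm.imp_right fun hy => ⟨j, by omega, hball y hy⟩

lemma adj (h : IsExplorable nb C u f H K) (hj : j ≤ K) (ha : a ∈ explorationBall nb C u i f j)
    (hax : PortAdj nb a x) (hf : s(a, x) ≠ f) : H.Adj a x := by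
  obtain ⟨P, -, hlen, -⟩ := h.exists_path (by omega) ha
  exact h.adj_of_near P (hlen.trans hj) hax hf

/-- Two short paths from `u` to `x` coincide, hence so do their last vertices. -/
lemma predecessor_unique (h : IsExplorable nb C u f H K) (hj : j ≤ K) {b : V}
    (ha : a ∈ explorationBall nb C u i f j) (hb : b ∈ explorationBall nb C u i f j)
    (hax : H.Adj a x) (hbx : H.Adj b x) (hx : ∀ k < j, x ∉ explorationBall nb C u i f k) :
    a = b := by
  have hpath : ∀ c ∈ explorationBall nb C u i f j, ∀ hcx : H.Adj c x,
      ∃ Q : H.Walk u c, (Q.concat hcx).IsPath ∧ (Q.concat hcx).length ≤ K + 1 := by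
    intro c hc hcx
    obtain ⟨Q, hQ, hlen, hsupp⟩ := h.exists_path (by omega) hc
    refine ⟨Q, hQ.concat (fun hmem => ?_) hcx, by rw [SimpleGraph.Walk.length_concat]; omega⟩
    exact (hsupp x hmem).elim hcx.ne.symm fun ⟨k, hk, hxk⟩ => hx k hk hxk
  obtain ⟨P, hP, hPlen⟩ := hpath a ha hax
  obtain ⟨Q, hQ, hQlen⟩ := hpath b hb hbx
  exact (SimpleGraph.Walk.concat_inj (h.path_unique hP hQ hPlen hQlen)).1

lemma card_blockNeighbors_inter_core_le (h : IsExplorable nb C u f H K) (ha : a ∉ C) :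
    ((blockNeighbors nb i a).filter (· ∈ C)).card ≤ 1 := by
  refine Finset.card_le_one.2 fun x hx y hy => ?_
  rw [Finset.mem_filter] at hx hy
  exact h.neighbor_unique a ha x hx.2 y hy.2 (portAdj_of_mem_blockNeighbors hx.1)
    (portAdj_of_mem_blockNeighbors hy.1)

lemma card_blockNeighbors_inter_ball_le (h : IsExplorable nb C u f H K)
    (hnb : IsPortNumbering nb) (hj : j ≤ K) (ha : a ∈ explorationSphere nb C u i f j) :
    ((blockNeighbors nb i a).filter fun x => s(a, x) ≠ f ∧
      x ∈ explorationBall nb C u i f j).card ≤ if j = 0 then 0 else 1 := by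
  have haB := explorationSphere_subset ha
  split_ifs with hj0
  · subst hj0
    rw [Nat.le_zero, Finset.card_eq_zero, Finset.filter_eq_empty_iff]
    rintro x hx ⟨-, hxu⟩
    exact hnb.ne_of_portAdj (portAdj_of_mem_blockNeighbors hx)
      ((Finset.mem_singleton.1 ha).trans (Finset.mem_singleton.1 hxu).symm)
  · refine Finset.card_le_one.2 fun x hx y hy => ?_
    rw [Finset.mem_filter] at hx hy
    exact h.predecessor_unique hj hx.2.2 hy.2.2
      (h.adj hj haB (portAdj_of_mem_blockNeighbors hx.1) hx.2.1).symm
      (h.adj hj haB (portAdj_of_mem_blockNeighbors hy.1) hy.2.1).symm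
      fun k hk => notMem_explorationBall_of_mem_sphere ha hk

end IsExplorable

lemma card_blockNeighbors_through_edge_le :
    ((blockNeighbors nb i a).filter fun x => s(a, x) = f).card ≤ if a ∈ f then 1 else 0 := by
  split_ifs with haf
  · refine Finset.card_le_one.2 fun x hx y hy => ?_
    rw [Finset.mem_filter] at hx hy
    exact Sym2.congr_right.1 (hx.2.trans hy.2.symm)
  · rw [Nat.le_zero, Finset.card_eq_zero, Finset.filter_eq_empty_iff]
    exact fun x _ hx => haf (hx ▸ Sym2.mem_mk_left a x)

namespace IsExplorable

/-- Of the four block neighbours of `a`, at most one lies in `C`, at most one is joined to `a` by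
`f`, and at most one, the predecessor of `a`, has been explored before. -/
lemma le_card_freshNeighbors (h : IsExplorable nb C u f H K) (hnb : IsPortNumbering nb)
    (hi : 4 * i + 4 ≤ d) (hj : j ≤ K) (ha : a ∈ explorationSphere nb C u i f j) :
    (if j = 0 then 3 else 2) ≤
      (freshNeighbors nb C u i f j a).card + (if a ∈ f then 1 else 0) := by
  have haC := notMem_of_mem_explorationBall h.notMem (explorationSphere_subset ha)
  have hcore := h.card_blockNeighbors_inter_core_le (i := i) haC
  have hback := h.card_blockNeighbors_inter_ball_le hnb hj ha
  have hedge := card_blockNeighbors_through_edge_le (nb := nb) (i := i) (f := f) (a := a)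
  set X₁ := (blockNeighbors nb i a).filter (· ∈ C) with hX₁
  set X₂ := (blockNeighbors nb i a).filter fun x => s(a, x) = f with hX₂
  set X₃ := (blockNeighbors nb i a).filter fun x => s(a, x) ≠ f ∧
    x ∈ explorationBall nb C u i f j with hX₃
  have hcover : blockNeighbors nb i a ⊆ freshNeighbors nb C u i f j a ∪ (X₁ ∪ (X₂ ∪ X₃)) := by
    intro x hx
    simp only [hX₁, hX₂, hX₃, freshNeighbors, Finset.mem_union, Finset.mem_filter, hx, true_and]
    tauto
  have hcard := Finset.card_le_card hcover
  rw [hnb.card_blockNeighbors hi] at hcard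
  have h₁ := Finset.card_union_le (freshNeighbors nb C u i f j a) (X₁ ∪ (X₂ ∪ X₃))
  have h₂ := Finset.card_union_le X₁ (X₂ ∪ X₃)
  have h₃ := Finset.card_union_le X₂ X₃
  split_ifs at * <;> omega

lemma pairwiseDisjoint_freshNeighbors (h : IsExplorable nb C u f H K) (hj : j ≤ K) :
    (explorationSphere nb C u i f j : Set V).PairwiseDisjoint (freshNeighbors nb C u i f j) := by
  intro a ha b hb hab
  refine Finset.disjoint_left.2 fun x hxa hxb => hab ?_
  have haB := explorationSphere_subset ha
  have hbB := explorationSphere_subset hb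
  obtain ⟨hax, -, hxB, haf⟩ := mem_freshNeighbors.1 hxa
  obtain ⟨hbx, -, -, hbf⟩ := mem_freshNeighbors.1 hxb
  exact h.predecessor_unique hj haB hbB
    (h.adj hj haB (portAdj_of_mem_blockNeighbors hax) haf)
    (h.adj hj hbB (portAdj_of_mem_blockNeighbors hbx) hbf)
    fun k hk hxk => hxB (explorationBall_mono hk.le hxk)

lemma mul_card_sphere_le (h : IsExplorable nb C u f H K) (hnb : IsPortNumbering nb)
    (hi : 4 * i + 4 ≤ d) (hj : j ≤ K) :
    (if j = 0 then 3 else 2) * (explorationSphere nb C u i f j).card ≤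
      (explorationSphere nb C u i f (j + 1)).card +
        ((explorationSphere nb C u i f j).filter (· ∈ f)).card := by
  have hfresh : ∑ a ∈ explorationSphere nb C u i f j, (freshNeighbors nb C u i f j a).card ≤
      (explorationSphere nb C u i f (j + 1)).card := by
    rw [← Finset.card_biUnion (h.pairwiseDisjoint_freshNeighbors hj)]
    exact Finset.card_le_card (Finset.biUnion_subset.2 fun a => freshNeighbors_subset_sphere)
  have hsum := Finset.sum_le_sum fun a ha => h.le_card_freshNeighbors (i := i) (a := a) hnb hi hj ha
  rw [Finset.sum_const, Finset.sum_add_distrib, smul_eq_mul, mul_comm] at hsum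
  rw [Finset.card_filter]
  omega

end IsExplorable

lemma card_filter_mem_ball_succ :
    ((explorationBall nb C u i f (k + 1)).filter (· ∈ f)).card =
      ((explorationBall nb C u i f k).filter (· ∈ f)).card +
        ((explorationSphere nb C u i f (k + 1)).filter (· ∈ f)).card := by
  rw [explorationSphere,
    ← Finset.card_union_of_disjoint (Finset.disjoint_filter_filter Finset.disjoint_sdiff),
    ← Finset.filter_union, Finset.union_sdiff_of_subset explorationBall_subset_succ]

lemma card_filter_mem_sym2_le (S : Finset V) (f : Sym2 V) : (S.filter (· ∈ f)).card ≤ 2 := by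
  induction f using Sym2.ind with
  | _ x y =>
    refine (Finset.card_le_card (t := {x, y}) fun z hz => ?_).trans Finset.card_le_two
    simpa using (Finset.mem_filter.1 hz).2

namespace IsExplorable

lemma three_mul_two_pow_le (h : IsExplorable nb C u f H K) (hnb : IsPortNumbering nb)
    (hi : 4 * i + 4 ≤ d) (hk : k ≤ K) :
    3 * 2 ^ k ≤ (explorationSphere nb C u i f (k + 1)).card +
      2 ^ k * ((explorationBall nb C u i f k).filter (· ∈ f)).card := by
  induction k with
  | zero => simpa [explorationSphere, explorationBall] using h.mul_card_sphere_le hnb hi hk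
  | succ k ih =>
    have hgrow := h.mul_card_sphere_le hnb hi hk
    rw [if_neg k.succ_ne_zero] at hgrow
    rw [card_filter_mem_ball_succ, pow_succ]
    have hpow : 1 ≤ 2 ^ k := Nat.one_le_two_pow
    nlinarith [ih (by omega)]

lemma two_pow_le_card_sphere (h : IsExplorable nb C u f H K) (hnb : IsPortNumbering nb)
    (hi : 4 * i + 4 ≤ d) : 2 ^ K ≤ (explorationSphere nb C u i f (K + 1)).card := by
  have hgrow := h.three_mul_two_pow_le hnb hi le_rfl
  have hf := Nat.mul_le_mul_left (2 ^ K)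
    (card_filter_mem_sym2_le (explorationBall nb C u i f K) f)
  omega

lemma two_pow_le_card_frontierPorts (h : IsExplorable nb C u f H (K + 1))
    (hnb : IsPortNumbering nb) (hi : 4 * i + 4 ≤ d) :
    2 ^ K ≤ (frontierPorts nb C u i f (K + 1)).card := by
  refine ((h.mono K.le_succ).two_pow_le_card_sphere hnb hi).trans ?_
  suffices hsub : explorationSphere nb C u i f (K + 1) ⊆
      (frontierPorts nb C u i f (K + 1)).image Prod.fst from
    (Finset.card_le_card hsub).trans Finset.card_image_le
  intro a ha
  have hfresh := h.le_card_freshNeighbors hnb hi le_rfl ha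
  have hpos : 0 < (freshNeighbors nb C u i f (K + 1) a).card := by
    rw [if_neg K.succ_ne_zero] at hfresh
    split_ifs at hfresh <;> omega
  obtain ⟨x, hx⟩ := Finset.card_pos.1 hpos
  obtain ⟨hblock, hrest⟩ := mem_freshNeighbors.1 hx
  obtain ⟨p, hp, rfl⟩ := Finset.mem_image.1 hblock
  exact Finset.mem_image.2 ⟨(a, p),
    mem_frontierPorts.2 ⟨⟨explorationSphere_subset ha, hp⟩, hrest⟩, rfl⟩

end IsExplorable

end Exploration

/-! ### The core trees -/

section Addresses

variable {V : Type*} {d : ℕ} (nb : V → Fin d → V) (r : V) (t m : ℕ)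

/-- The neighbour of `v` through port `p`, with junk value `v` if `p` is not a port. -/
def portVertex (v : V) (p : ℕ) : V := if h : p < d then nb v ⟨p, h⟩ else v

/-- The child number `b` of a core vertex `c` with parent `p`: the neighbour through port `b`, or
through port `2` if port `b` leads to `p`. -/
noncomputable def coreChild (c p : V) (b : ℕ) : V :=
  if b = 0 then (if portVertex nb c 0 = p then portVertex nb c 2 else portVertex nb c 0)
  else (if portVertex nb c 1 = p then portVertex nb c 2 else portVertex nb c 1)

/-- The vertex at heap position `k` of the `i`-th binary core tree, together with its parent. The
children of position `k` are `2 * k` and `2 * k + 1`; position `1` is the neighbour of `r` through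
port `i`. -/
noncomputable def heapEntry (i k : ℕ) : V × V :=
  if k ≤ 1 then (portVertex nb r i, r)
  else (coreChild nb (heapEntry i (k / 2)).1 (heapEntry i (k / 2)).2 (k % 2),
    (heapEntry i (k / 2)).1)
termination_by k
decreasing_by all_goals omega

/-- The vertex at the address `m`, which encodes the heap position `m / t` of the tree `m % t`. -/
noncomputable def addrVertex : V := (heapEntry nb r (m % t) (m / t)).1

/-- The parent of the vertex at the address `m`. -/
noncomputable def addrParent : V := (heapEntry nb r (m % t) (m / t)).2

/-- The address of the parent of the vertex at the address `m`. -/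
def parentAddr : ℕ := t * (m / t / 2) + m % t

/-- The neighbours of the vertex at the address `m` other than its parent. -/
noncomputable def outward : Finset V :=
  (neighbors nb (addrVertex nb r t m)).erase (addrParent nb r t m)

/-- The address `m` is the root of a core tree or the child of an address in `A`. -/
def IsCandidate (A : Finset ℕ) : Prop := m / t ≤ 1 ∨ parentAddr t m ∈ A

variable {nb r t m}

lemma parentAddr_mod : parentAddr t m % t = m % t := by
  rw [parentAddr, Nat.mul_add_mod, Nat.mod_mod]

lemma parentAddr_div (ht : 0 < t) : parentAddr t m / t = m / t / 2 := by
  rw [parentAddr, Nat.mul_add_div ht, Nat.div_eq_of_lt (Nat.mod_lt _ ht), add_zero]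

lemma eq_of_div_eq_of_mod_eq {m' : ℕ} (hdiv : m / t = m' / t) (hmod : m % t = m' % t) : m = m' := by
  rw [← Nat.div_add_mod m t, ← Nat.div_add_mod m' t, hdiv, hmod]

lemma parentAddr_lt (ht : 0 < t) (hm : t ≤ m) : parentAddr t m < m := by
  have hpos : 0 < m / t := Nat.div_pos hm ht
  calc parentAddr t m = t * (m / t / 2) + m % t := rfl
    _ < t * (m / t) + m % t := by gcongr; exact Nat.div_lt_self hpos one_lt_two
    _ = m := Nat.div_add_mod m t

lemma addrVertex_of_le (h : m / t ≤ 1) : addrVertex nb r t m = portVertex nb r (m % t) := by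
  rw [addrVertex, heapEntry, if_pos h]

lemma addrParent_of_le (h : m / t ≤ 1) : addrParent nb r t m = r := by
  rw [addrParent, heapEntry, if_pos h]

lemma addrVertex_of_lt (ht : 0 < t) (h : 1 < m / t) : addrVertex nb r t m =
    coreChild nb (addrVertex nb r t (parentAddr t m)) (addrParent nb r t (parentAddr t m))
      (m / t % 2) := by
  rw [addrVertex, heapEntry, if_neg h.not_ge, addrVertex, addrParent, parentAddr_mod,
    parentAddr_div ht]

lemma addrParent_of_lt (ht : 0 < t) (h : 1 < m / t) :
    addrParent nb r t m = addrVertex nb r t (parentAddr t m) := by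
  rw [addrParent, heapEntry, if_neg h.not_ge, addrVertex, parentAddr_mod, parentAddr_div ht]

lemma portAdj_portVertex (c : V) {p : ℕ} (hp : p < d) : PortAdj nb c (portVertex nb c p) := by
  rw [portVertex, dif_pos hp]
  exact ⟨_, rfl⟩

lemma IsPortNumbering.portVertex_inj (hnb : IsPortNumbering nb) {c : V} {p p' : ℕ} (hp : p < d)
    (hp' : p' < d) (h : portVertex nb c p = portVertex nb c p') : p = p' := by
  rw [portVertex, dif_pos hp, portVertex, dif_pos hp'] at h
  exact congrArg Fin.val (hnb.inj c h)

lemma portAdj_coreChild (hd : 3 ≤ d) (c p : V) (b : ℕ) : PortAdj nb c (coreChild nb c p b) := by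
  rw [coreChild]
  split_ifs <;> exact portAdj_portVertex c (by omega)

lemma IsPortNumbering.coreChild_ne_parent (hnb : IsPortNumbering nb) (hd : 3 ≤ d) (c p : V)
    (b : ℕ) : coreChild nb c p b ≠ p := by
  have hports : ∀ k < 2, portVertex nb c k = p → portVertex nb c 2 ≠ p := fun k hk hkp h => by
    have := hnb.portVertex_inj (by omega) (by omega) (hkp.trans h.symm)
    omega
  rw [coreChild]
  split_ifs with _ h h
  exacts [hports 0 two_pos h, h, hports 1 one_lt_two h, h]

lemma IsPortNumbering.coreChild_zero_ne_one (hnb : IsPortNumbering nb) (hd : 3 ≤ d) (c p : V) :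
    coreChild nb c p 0 ≠ coreChild nb c p 1 := by
  have hports : ∀ k l, k < 3 → l < 3 → k ≠ l → portVertex nb c k ≠ portVertex nb c l :=
    fun k l hk hl hkl h => hkl (hnb.portVertex_inj (by omega) (by omega) h)
  simp only [coreChild, if_true, one_ne_zero, if_false]
  split_ifs with h₀ h₁
  · exact (hports 0 1 (by omega) (by omega) (by omega) (h₀.trans h₁.symm)).elim
  all_goals exact hports _ _ (by omega) (by omega) (by omega)

lemma IsPortNumbering.coreChild_injOn (hnb : IsPortNumbering nb) (hd : 3 ≤ d) {c p : V} {b b' : ℕ}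
    (hb : b < 2) (hb' : b' < 2) (h : coreChild nb c p b = coreChild nb c p b') : b = b' := by
  interval_cases b <;> interval_cases b'
  exacts [rfl, (hnb.coreChild_zero_ne_one hd c p h).elim,
    (hnb.coreChild_zero_ne_one hd c p h.symm).elim, rfl]

lemma mem_outward {x : V} : x ∈ outward nb r t m ↔
    x ≠ addrParent nb r t m ∧ PortAdj nb (addrVertex nb r t m) x := by
  rw [outward, Finset.mem_erase, mem_neighbors]

lemma IsPortNumbering.coreChild_mem_outward (hnb : IsPortNumbering nb) (hd : 3 ≤ d) (b : ℕ) :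
    coreChild nb (addrVertex nb r t m) (addrParent nb r t m) b ∈ outward nb r t m :=
  mem_outward.2 ⟨hnb.coreChild_ne_parent hd _ _ _, portAdj_coreChild hd _ _ _⟩

lemma IsPortNumbering.addrVertex_mem_outward (hnb : IsPortNumbering nb) (hd : 3 ≤ d) (ht : 0 < t)
    (h : 1 < m / t) : addrVertex nb r t m ∈ outward nb r t (parentAddr t m) := by
  rw [addrVertex_of_lt ht h]
  exact hnb.coreChild_mem_outward hd _

lemma portAdj_root_addrVertex (ht : 0 < t) (htd : t ≤ d) (h : m / t ≤ 1) :
    PortAdj nb r (addrVertex nb r t m) := by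
  rw [addrVertex_of_le h]
  exact portAdj_portVertex _ ((Nat.mod_lt m ht).trans_le htd)

lemma portAdj_addrParent (hd : 3 ≤ d) (ht : 0 < t) (htd : t ≤ d) (m : ℕ) :
    PortAdj nb (addrParent nb r t m) (addrVertex nb r t m) := by
  rcases le_or_gt (m / t) 1 with h | h
  · rw [addrParent_of_le h]
    exact portAdj_root_addrVertex ht htd h
  · rw [addrParent_of_lt ht h, addrVertex_of_lt ht h]
    exact portAdj_coreChild hd _ _ _

end Addresses

section Core

variable {V Q : Type*} [Zero Q] {d : ℕ} (nb : V → Fin d → V) (κ : V → Q) (r : V) (t : ℕ)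

/-- The test for accepting the address `m` after the addresses of `A`: its vertex is marked by a
nonzero value of `κ`, and its outward neighbours meet neither those of the accepted addresses nor
the neighbours of `r`. -/
structure IsAcceptable (A : Finset ℕ) (m : ℕ) : Prop where
  le : t ≤ m
  isCandidate : IsCandidate t m A
  mark_ne_zero : κ (addrVertex nb r t m) ≠ 0
  disjoint_root : Disjoint (outward nb r t m) (neighbors nb r)
  disjoint : ∀ β ∈ A, Disjoint (outward nb r t m) (outward nb r t β)

/-- The addresses below a bound that are accepted when they are tested in increasing order. -/
noncomputable def acceptedAddrs : ℕ → Finset ℕ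
  | 0 => ∅
  | m + 1 => if IsAcceptable nb κ r t (acceptedAddrs m) m then insert m (acceptedAddrs m)
      else acceptedAddrs m

/-- The root together with the vertices at accepted addresses below `M`. -/
noncomputable def core (M : ℕ) : Finset V :=
  insert r ((acceptedAddrs nb κ r t M).image (addrVertex nb r t))

variable {nb κ r t} {m m' M : ℕ} {x y v : V}

lemma acceptedAddrs_mono (h : m ≤ M) : acceptedAddrs nb κ r t m ⊆ acceptedAddrs nb κ r t M := by
  refine monotone_nat_of_le_succ (f := acceptedAddrs nb κ r t) (fun m => ?_) h
  rw [acceptedAddrs]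
  split_ifs
  exacts [Finset.subset_insert _ _, le_rfl]

lemma lt_and_isAcceptable_of_mem_acceptedAddrs (h : m ∈ acceptedAddrs nb κ r t M) :
    m < M ∧ IsAcceptable nb κ r t (acceptedAddrs nb κ r t m) m := by
  induction M with
  | zero => simp [acceptedAddrs] at h
  | succ M ih =>
    rw [acceptedAddrs] at h
    split_ifs at h with hM
    · rcases Finset.mem_insert.1 h with rfl | h
      exacts [⟨m.lt_succ_self, hM⟩, (ih h).imp_left Nat.lt_succ_of_lt]
    · exact (ih h).imp_left Nat.lt_succ_of_lt

lemma mem_acceptedAddrs : m ∈ acceptedAddrs nb κ r t M ↔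
    m < M ∧ IsAcceptable nb κ r t (acceptedAddrs nb κ r t m) m := by
  refine ⟨lt_and_isAcceptable_of_mem_acceptedAddrs, fun ⟨hm, h⟩ => acceptedAddrs_mono hm ?_⟩
  rw [acceptedAddrs, if_pos h]
  exact Finset.mem_insert_self _ _

lemma lt_of_mem_acceptedAddrs (h : m ∈ acceptedAddrs nb κ r t M) : m < M :=
  (mem_acceptedAddrs.1 h).1

lemma le_of_mem_acceptedAddrs (h : m ∈ acceptedAddrs nb κ r t M) : t ≤ m :=
  (mem_acceptedAddrs.1 h).2.le

lemma isCandidate_of_mem_acceptedAddrs (h : m ∈ acceptedAddrs nb κ r t M) :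
    IsCandidate t m (acceptedAddrs nb κ r t M) :=
  (mem_acceptedAddrs.1 h).2.isCandidate.imp_right
    (acceptedAddrs_mono (lt_of_mem_acceptedAddrs h).le ·)

lemma disjoint_outward_neighbors_root (h : m ∈ acceptedAddrs nb κ r t M) :
    Disjoint (outward nb r t m) (neighbors nb r) :=
  (mem_acceptedAddrs.1 h).2.disjoint_root

lemma disjoint_outward (h : m ∈ acceptedAddrs nb κ r t M) (h' : m' ∈ acceptedAddrs nb κ r t M)
    (hne : m ≠ m') : Disjoint (outward nb r t m) (outward nb r t m') := by
  wlog hlt : m' < m generalizing m m'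
  · exact (this h' h hne.symm (by omega)).symm
  exact (mem_acceptedAddrs.1 h).2.disjoint m'
    (mem_acceptedAddrs.2 ⟨hlt, (mem_acceptedAddrs.1 h').2⟩)

lemma root_mem_core : r ∈ core nb κ r t M := Finset.mem_insert_self _ _

lemma addrVertex_mem_core (h : m ∈ acceptedAddrs nb κ r t M) :
    addrVertex nb r t m ∈ core nb κ r t M :=
  Finset.mem_insert_of_mem (Finset.mem_image_of_mem _ h)

lemma mem_core : x ∈ core nb κ r t M ↔
    x = r ∨ ∃ m ∈ acceptedAddrs nb κ r t M, addrVertex nb r t m = x := by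
  rw [core, Finset.mem_insert, Finset.mem_image]

lemma card_core_le (M : ℕ) : (core nb κ r t M).card ≤ M + 1 := by
  have hsub : acceptedAddrs nb κ r t M ⊆ Finset.range M := fun m hm =>
    Finset.mem_range.2 (lt_of_mem_acceptedAddrs hm)
  calc (core nb κ r t M).card
      ≤ ((acceptedAddrs nb κ r t M).image (addrVertex nb r t)).card + 1 := Finset.card_insert_le _ _
    _ ≤ (Finset.range M).card + 1 := by
        gcongr
        exact Finset.card_image_le.trans (Finset.card_le_card hsub)
    _ = M + 1 := by rw [Finset.card_range]

lemma addrParent_mem_core (ht : 0 < t) (h : IsCandidate t m (acceptedAddrs nb κ r t M)) :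
    addrParent nb r t m ∈ core nb κ r t M := by
  rcases le_or_gt (m / t) 1 with hm | hm
  · rw [addrParent_of_le hm]
    exact root_mem_core
  · rw [addrParent_of_lt ht hm]
    exact addrVertex_mem_core (h.resolve_left hm.not_ge)

lemma root_notMem_outward (hnb : IsPortNumbering nb) (hd : 3 ≤ d) (ht : 0 < t)
    (h : m ∈ acceptedAddrs nb κ r t M) : r ∉ outward nb r t m := by
  intro hr
  obtain ⟨hne, hadj⟩ := mem_outward.1 hr
  rcases le_or_gt (m / t) 1 with hm | hm
  · exact hne (addrParent_of_le hm).symm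
  · have hparent := (isCandidate_of_mem_acceptedAddrs h).resolve_left hm.not_ge
    exact Finset.disjoint_left.1 (disjoint_outward_neighbors_root hparent)
      (hnb.addrVertex_mem_outward hd ht hm) (mem_neighbors.2 (hnb.portAdj_symm hadj))

lemma addrVertex_ne_of_le_of_lt (hnb : IsPortNumbering nb) (hd : 3 ≤ d) (ht : 0 < t) (htd : t ≤ d)
    (hm : m / t ≤ 1) (hm' : 1 < m' / t) (h' : IsCandidate t m' (acceptedAddrs nb κ r t M)) :
    addrVertex nb r t m ≠ addrVertex nb r t m' := fun heq =>
  Finset.disjoint_left.1 (disjoint_outward_neighbors_root (h'.resolve_left hm'.not_ge))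
    (hnb.addrVertex_mem_outward hd ht hm')
    (heq ▸ mem_neighbors.2 (portAdj_root_addrVertex ht htd hm))

lemma eq_of_addrVertex_mem_outward (hnb : IsPortNumbering nb) (hd : 3 ≤ d) (ht : 0 < t)
    (htd : t ≤ d) (h : m ∈ acceptedAddrs nb κ r t M)
    (h' : IsCandidate t m' (acceptedAddrs nb κ r t M))
    (hmem : addrVertex nb r t m' ∈ outward nb r t m) : 1 < m' / t ∧ parentAddr t m' = m := by
  rcases le_or_gt (m' / t) 1 with hm' | hm'
  · exact (Finset.disjoint_left.1 (disjoint_outward_neighbors_root h) hmem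
      (mem_neighbors.2 (portAdj_root_addrVertex ht htd hm'))).elim
  · refine ⟨hm', by_contra fun hne => ?_⟩
    exact Finset.disjoint_left.1 (disjoint_outward (h'.resolve_left hm'.not_ge) h hne)
      (hnb.addrVertex_mem_outward hd ht hm') hmem

lemma addrVertex_injOn_candidates (hnb : IsPortNumbering nb) (hd : 3 ≤ d) (ht : 0 < t)
    (htd : t ≤ d) : Set.InjOn (addrVertex nb r t)
      {m | t ≤ m ∧ IsCandidate t m (acceptedAddrs nb κ r t M)} := by
  rintro m ⟨htm, h⟩ m' ⟨htm', h'⟩ heq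
  have hpos := Nat.div_pos htm ht
  have hpos' := Nat.div_pos htm' ht
  rcases le_or_gt (m / t) 1 with hm | hm <;> rcases le_or_gt (m' / t) 1 with hm' | hm'
  · rw [addrVertex_of_le hm, addrVertex_of_le hm'] at heq
    have hmod := hnb.portVertex_inj ((Nat.mod_lt m ht).trans_le htd)
      ((Nat.mod_lt m' ht).trans_le htd) heq
    exact eq_of_div_eq_of_mod_eq (by omega) hmod
  · exact (addrVertex_ne_of_le_of_lt hnb hd ht htd hm hm' h' heq).elim
  · exact (addrVertex_ne_of_le_of_lt hnb hd ht htd hm' hm h heq.symm).elim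
  · have hparent : parentAddr t m' = parentAddr t m :=
      (eq_of_addrVertex_mem_outward hnb hd ht htd (h.resolve_left hm.not_ge) h'
        (heq ▸ hnb.addrVertex_mem_outward hd ht hm)).2
    have hmod : m % t = m' % t := by rw [← parentAddr_mod (m := m), ← hparent, parentAddr_mod]
    have hhalf : m / t / 2 = m' / t / 2 := by
      rw [← parentAddr_div ht, ← parentAddr_div ht, hparent]
    rw [addrVertex_of_lt ht hm, addrVertex_of_lt ht hm', hparent] at heq
    have hparity := hnb.coreChild_injOn hd (Nat.mod_lt _ two_pos) (Nat.mod_lt _ two_pos) heq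
    exact eq_of_div_eq_of_mod_eq (by omega) hmod

lemma addrVertex_injOn (hnb : IsPortNumbering nb) (hd : 3 ≤ d) (ht : 0 < t) (htd : t ≤ d) :
    Set.InjOn (addrVertex nb r t) (acceptedAddrs nb κ r t M) :=
  fun _ h _ h' heq => addrVertex_injOn_candidates hnb hd ht htd
    ⟨le_of_mem_acceptedAddrs h, isCandidate_of_mem_acceptedAddrs h⟩
    ⟨le_of_mem_acceptedAddrs h', isCandidate_of_mem_acceptedAddrs h'⟩ heq

lemma addrVertex_ne_root (hnb : IsPortNumbering nb) (hd : 3 ≤ d) (ht : 0 < t) (htd : t ≤ d)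
    (h : IsCandidate t m (acceptedAddrs nb κ r t M)) : addrVertex nb r t m ≠ r := by
  intro heq
  rcases le_or_gt (m / t) 1 with hm | hm
  · exact hnb.ne_of_portAdj (portAdj_root_addrVertex (nb := nb) (r := r) ht htd hm) heq.symm
  · have hmem := hnb.addrVertex_mem_outward (r := r) hd ht hm
    rw [heq] at hmem
    exact root_notMem_outward hnb hd ht (h.resolve_left hm.not_ge) hmem

lemma core_neighbor_unique (hnb : IsPortNumbering nb) (ht : 0 < t) (hv : v ∉ core nb κ r t M)
    (hx : x ∈ core nb κ r t M) (hy : y ∈ core nb κ r t M) (hvx : PortAdj nb v x)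
    (hvy : PortAdj nb v y) : x = y := by
  have houtward : ∀ m ∈ acceptedAddrs nb κ r t M, PortAdj nb v (addrVertex nb r t m) →
      v ∈ outward nb r t m := fun m hm hadj =>
    mem_outward.2 ⟨fun h => hv (h ▸ addrParent_mem_core ht (isCandidate_of_mem_acceptedAddrs hm)),
      hnb.portAdj_symm hadj⟩
  have hroot : PortAdj nb v r → v ∈ neighbors nb r := fun h =>
    mem_neighbors.2 (hnb.portAdj_symm h)
  rcases mem_core.1 hx with rfl | ⟨m, hm, rfl⟩ <;> rcases mem_core.1 hy with rfl | ⟨m', hm', rfl⟩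
  · rfl
  · exact (Finset.disjoint_left.1 (disjoint_outward_neighbors_root hm') (houtward m' hm' hvy)
      (hroot hvx)).elim
  · exact (Finset.disjoint_left.1 (disjoint_outward_neighbors_root hm) (houtward m hm hvx)
      (hroot hvy)).elim
  · by_contra hne
    exact Finset.disjoint_left.1 (disjoint_outward hm hm' fun h => hne (h ▸ rfl))
      (houtward m hm hvx) (houtward m' hm' hvy)

lemma exists_child_addr_of_mem_core (hnb : IsPortNumbering nb) (hd : 3 ≤ d) (ht : 0 < t)
    (htd : t ≤ d) (hm : m ∈ acceptedAddrs nb κ r t M) (hx : x ∈ core nb κ r t M)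
    (hxm : x ∈ outward nb r t m) :
    ∃ m' ∈ acceptedAddrs nb κ r t M, 1 < m' / t ∧ parentAddr t m' = m ∧
      addrVertex nb r t m' = x := by
  rcases mem_core.1 hx with rfl | ⟨m', hm', rfl⟩
  · exact (root_notMem_outward hnb hd ht hm hxm).elim
  · obtain ⟨hlt, hparent⟩ := eq_of_addrVertex_mem_outward hnb hd ht htd hm
      (isCandidate_of_mem_acceptedAddrs hm') hxm
    exact ⟨m', hm', hlt, hparent, rfl⟩

lemma eq_parent_or_child_of_mem_core (hnb : IsPortNumbering nb) (hd : 3 ≤ d) (ht : 0 < t)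
    (htd : t ≤ d) (hm : m ∈ acceptedAddrs nb κ r t M) (hadj : PortAdj nb (addrVertex nb r t m) x)
    (hx : x ∈ core nb κ r t M) : x = addrParent nb r t m ∨
      x = coreChild nb (addrVertex nb r t m) (addrParent nb r t m) 0 ∨
      x = coreChild nb (addrVertex nb r t m) (addrParent nb r t m) 1 := by
  refine or_iff_not_imp_left.2 fun hne => ?_
  obtain ⟨m', -, hlt, hparent, rfl⟩ :=
    exists_child_addr_of_mem_core hnb hd ht htd hm hx (mem_outward.2 ⟨hne, hadj⟩)
  rw [addrVertex_of_lt ht hlt, hparent]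
  rcases Nat.mod_two_eq_zero_or_one (m' / t) with h | h <;> rw [h]
  exacts [Or.inl rfl, Or.inr rfl]

lemma coreChild_notMem_core_of_last_level (hnb : IsPortNumbering nb) (hd : 3 ≤ d) (ht : 0 < t)
    (htd : t ≤ d) {S : ℕ} (hm : m ∈ acceptedAddrs nb κ r t (t * 2 ^ (S + 1)))
    (hS : 2 ^ S ≤ m / t) (b : ℕ) :
    coreChild nb (addrVertex nb r t m) (addrParent nb r t m) b ∉
      core nb κ r t (t * 2 ^ (S + 1)) := by
  intro hcore
  obtain ⟨m', hm', -, hparent, -⟩ := exists_child_addr_of_mem_core hnb hd ht htd hm hcore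
    (hnb.coreChild_mem_outward hd b)
  have hhalf := parentAddr_div (m := m') ht
  rw [hparent] at hhalf
  have hbound : m' / t < 2 ^ (S + 1) := Nat.div_lt_of_lt_mul (lt_of_mem_acceptedAddrs hm')
  rw [pow_succ] at hbound
  omega

end Core

section Modification

variable {V Q : Type*} [Zero Q] {d t m M : ℕ} {nb nb' : V → Fin d → V} {κ κ' : V → Q} {r : V}
  {A : Finset ℕ}

/-- The pair `(nb', κ')` arises from `(nb, κ)` by changes on `T` only, where all marks are reset
to zero. -/
structure IsModificationOn (T : Finset V) (nb : V → Fin d → V) (κ : V → Q) (nb' : V → Fin d → V)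
    (κ' : V → Q) : Prop where
  nb_eq : ∀ v ∉ T, nb' v = nb v
  mark_eq : ∀ v ∉ T, κ' v = κ v
  mark_eq_zero : ∀ v ∈ T, κ' v = 0

/-- The two neighbour lists put the same vertices with the same parents at the address `m`. -/
def AgreeAt (nb nb' : V → Fin d → V) (r : V) (t m : ℕ) : Prop :=
  addrVertex nb' r t m = addrVertex nb r t m ∧ addrParent nb' r t m = addrParent nb r t m

lemma portVertex_congr {c : V} (h : nb' c = nb c) (p : ℕ) :
    portVertex nb' c p = portVertex nb c p := by
  rw [portVertex, portVertex, h]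

lemma coreChild_congr {c : V} (h : nb' c = nb c) (p : V) (b : ℕ) :
    coreChild nb' c p b = coreChild nb c p b := by
  simp only [coreChild, portVertex_congr h]

lemma AgreeAt.outward_eq (h : AgreeAt nb nb' r t m)
    (hv : nb' (addrVertex nb r t m) = nb (addrVertex nb r t m)) :
    outward nb' r t m = outward nb r t m := by
  simp only [outward, neighbors, h.1, h.2, hv]

lemma agreeAt_of_isCandidate (ht : 0 < t) (hr : nb' r = nb r)
    (hA : ∀ β ∈ A, AgreeAt nb nb' r t β ∧ nb' (addrVertex nb r t β) = nb (addrVertex nb r t β))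
    (h : IsCandidate t m A) : AgreeAt nb nb' r t m := by
  rw [AgreeAt]
  rcases le_or_gt (m / t) 1 with hm | hm
  · simp only [addrVertex_of_le hm, addrParent_of_le hm, portVertex_congr hr, and_self]
  · obtain ⟨⟨hvertex, hparent⟩, hnb⟩ := hA _ (h.resolve_left hm.not_ge)
    simp only [addrVertex_of_lt ht hm, addrParent_of_lt ht hm, hvertex, hparent,
      coreChild_congr hnb, and_self]

lemma isAcceptable_congr (hr : nb' r = nb r)
    (hA : ∀ β ∈ A, AgreeAt nb nb' r t β ∧ nb' (addrVertex nb r t β) = nb (addrVertex nb r t β))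
    (hm : AgreeAt nb nb' r t m) (hv : nb' (addrVertex nb r t m) = nb (addrVertex nb r t m))
    (hκ : κ' (addrVertex nb r t m) = κ (addrVertex nb r t m)) :
    IsAcceptable nb' κ' r t A m ↔ IsAcceptable nb κ r t A m := by
  have hO : outward nb' r t m = outward nb r t m := hm.outward_eq hv
  have hOA : ∀ β ∈ A, outward nb' r t β = outward nb r t β := fun β hβ =>
    (hA β hβ).1.outward_eq (hA β hβ).2
  have hN : neighbors nb' r = neighbors nb r := by simp only [neighbors, hr]
  have hmark : κ' (addrVertex nb' r t m) = κ (addrVertex nb r t m) := by rw [hm.1, hκ]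
  constructor
  · rintro ⟨hle, hcand, hne, hroot, hdisj⟩
    exact ⟨hle, hcand, hmark ▸ hne, hO ▸ hN ▸ hroot, fun β hβ => hO ▸ hOA β hβ ▸ hdisj β hβ⟩
  · rintro ⟨hle, hcand, hne, hroot, hdisj⟩
    exact ⟨hle, hcand, hmark.symm ▸ hne, by rwa [hO, hN],
      fun β hβ => by rw [hO, hOA β hβ]; exact hdisj β hβ⟩

namespace IsModificationOn

variable {T : Finset V}

lemma nb_root_eq (h : IsModificationOn T nb κ nb' κ')
    (hT : Disjoint T (core nb κ r t M)) : nb' r = nb r :=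
  h.nb_eq r (Finset.disjoint_right.1 hT root_mem_core)

lemma nb_addrVertex_eq (h : IsModificationOn T nb κ nb' κ')
    (hT : Disjoint T (core nb κ r t M)) (hm : m ∈ acceptedAddrs nb κ r t M) :
    nb' (addrVertex nb r t m) = nb (addrVertex nb r t m) :=
  h.nb_eq _ (Finset.disjoint_right.1 hT (addrVertex_mem_core hm))

/-- A vertex of `T` is accepted neither before the change, being off the core, nor after it,
having lost its mark. -/
lemma isAcceptable_iff (h : IsModificationOn T nb κ nb' κ') (ht : 0 < t)
    (hT : Disjoint T (core nb κ r t M)) (hm : m < M)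
    (hagree : ∀ β ∈ acceptedAddrs nb κ r t m, AgreeAt nb nb' r t β) :
    IsAcceptable nb' κ' r t (acceptedAddrs nb κ r t m) m ↔
      IsAcceptable nb κ r t (acceptedAddrs nb κ r t m) m := by
  have hA : ∀ β ∈ acceptedAddrs nb κ r t m, AgreeAt nb nb' r t β ∧
      nb' (addrVertex nb r t β) = nb (addrVertex nb r t β) := fun β hβ =>
    ⟨hagree β hβ, h.nb_addrVertex_eq hT (acceptedAddrs_mono hm.le hβ)⟩
  by_cases hcand : IsCandidate t m (acceptedAddrs nb κ r t m)
  · have hagree_m := agreeAt_of_isCandidate ht (h.nb_root_eq hT) hA hcand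
    by_cases hvT : addrVertex nb r t m ∈ T
    · refine iff_of_false (fun hacc => ?_) fun hacc => ?_
      · exact hacc.mark_ne_zero (by rw [hagree_m.1, h.mark_eq_zero _ hvT])
      · exact Finset.disjoint_left.1 hT hvT
          (addrVertex_mem_core (mem_acceptedAddrs.2 ⟨hm, hacc⟩))
    · exact isAcceptable_congr (h.nb_root_eq hT) hA hagree_m (h.nb_eq _ hvT) (h.mark_eq _ hvT)
  · exact iff_of_false (fun hacc => hcand hacc.isCandidate) fun hacc => hcand hacc.isCandidate

lemma acceptedAddrs_eq_and_agreeAt (h : IsModificationOn T nb κ nb' κ') (ht : 0 < t)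
    (hT : Disjoint T (core nb κ r t M)) (hm : m ≤ M) :
    acceptedAddrs nb' κ' r t m = acceptedAddrs nb κ r t m ∧
      ∀ β ∈ acceptedAddrs nb κ r t m, AgreeAt nb nb' r t β := by
  induction m with
  | zero => exact ⟨rfl, by simp [acceptedAddrs]⟩
  | succ m ih =>
    obtain ⟨heq, hagree⟩ := ih (by omega)
    have hiff := h.isAcceptable_iff ht hT hm hagree
    refine ⟨by simp only [acceptedAddrs, heq, hiff], fun β hβ => ?_⟩
    rw [acceptedAddrs] at hβ
    split_ifs at hβ with hacc
    · rcases Finset.mem_insert.1 hβ with rfl | hβ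
      · exact agreeAt_of_isCandidate ht (h.nb_root_eq hT)
          (fun γ hγ => ⟨hagree γ hγ, h.nb_addrVertex_eq hT (acceptedAddrs_mono (by omega) hγ)⟩)
          hacc.isCandidate
      · exact hagree β hβ
    · exact hagree β hβ

lemma acceptedAddrs_eq (h : IsModificationOn T nb κ nb' κ') (ht : 0 < t)
    (hT : Disjoint T (core nb κ r t M)) :
    acceptedAddrs nb' κ' r t M = acceptedAddrs nb κ r t M :=
  (h.acceptedAddrs_eq_and_agreeAt ht hT le_rfl).1

lemma agreeAt (h : IsModificationOn T nb κ nb' κ') (ht : 0 < t)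
    (hT : Disjoint T (core nb κ r t M))
    (hm : IsCandidate t m (acceptedAddrs nb κ r t M)) : AgreeAt nb nb' r t m :=
  agreeAt_of_isCandidate ht (h.nb_root_eq hT)
    (fun β hβ => ⟨(h.acceptedAddrs_eq_and_agreeAt ht hT le_rfl).2 β hβ,
      h.nb_addrVertex_eq hT hβ⟩) hm

lemma core_eq (h : IsModificationOn T nb κ nb' κ') (ht : 0 < t)
    (hT : Disjoint T (core nb κ r t M)) :
    core nb' κ' r t M = core nb κ r t M := by
  rw [core, core, h.acceptedAddrs_eq ht hT]
  exact congrArg _ (Finset.image_congr fun β hβ =>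
    (h.agreeAt ht hT (isCandidate_of_mem_acceptedAddrs hβ)).1)

end IsModificationOn

end Modification

/-! ### Switchings -/

/-- A quadruple of vertices, encoding the switching that replaces the edges `yz` and `xw` by `yx`
and `zw`. -/
@[ext]
structure Switch (V : Type*) where
  y : V
  z : V
  x : V
  w : V

namespace Switch

variable {V : Type*} {d : ℕ} {nb : V → Fin d → V} {τ : Switch V} {v a b : V}

/-- The permutation of the neighbours of `v` caused by a switching. -/
noncomputable def perm (τ : Switch V) (v : V) : Equiv.Perm V :=
  if v = τ.y then Equiv.swap τ.z τ.x else if v = τ.z then Equiv.swap τ.y τ.w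
  else if v = τ.x then Equiv.swap τ.w τ.y else if v = τ.w then Equiv.swap τ.x τ.z
  else 1

/-- The neighbour lists after a switching; the new edges inherit the ports of the old ones. -/
noncomputable def apply (τ : Switch V) (nb : V → Fin d → V) : V → Fin d → V :=
  fun v p => τ.perm v (nb v p)

/-- The four vertices of a switching. -/
noncomputable def support (τ : Switch V) : Finset V := {τ.y, τ.z, τ.x, τ.w}

/-- The switching that restores the edges removed by `τ`. -/
def reverse (τ : Switch V) : Switch V := ⟨τ.y, τ.x, τ.z, τ.w⟩

/-- The four vertices of a switching are distinct. -/
def IsNondegenerate (τ : Switch V) : Prop := [τ.y, τ.z, τ.x, τ.w].Nodup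

/-- The switching `τ` leads from a graph to a graph: it removes edges and creates non-edges. -/
structure IsValid (nb : V → Fin d → V) (τ : Switch V) : Prop where
  adj_yz : PortAdj nb τ.y τ.z
  adj_xw : PortAdj nb τ.x τ.w
  ne_yx : τ.y ≠ τ.x
  ne_zw : τ.z ≠ τ.w
  not_adj_yx : ¬ PortAdj nb τ.y τ.x
  not_adj_zw : ¬ PortAdj nb τ.z τ.w

lemma mem_support : v ∈ τ.support ↔ v = τ.y ∨ v = τ.z ∨ v = τ.x ∨ v = τ.w := by
  simp only [support, Finset.mem_insert, Finset.mem_singleton]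

lemma perm_perm (τ : Switch V) (v a : V) : τ.perm v (τ.perm v a) = a := by
  rw [perm]
  split_ifs <;> simp

lemma perm_of_notMem_support (h : v ∉ τ.support) : τ.perm v = 1 := by
  simp only [mem_support, not_or] at h
  rw [perm, if_neg h.1, if_neg h.2.1, if_neg h.2.2.1, if_neg h.2.2.2]

lemma apply_of_notMem_support (h : v ∉ τ.support) : τ.apply nb v = nb v := by
  funext p
  rw [apply, perm_of_notMem_support h, Equiv.Perm.one_apply]

lemma IsNondegenerate.perm_reverse (h : τ.IsNondegenerate) (v : V) :
    τ.reverse.perm v = τ.perm v := by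
  simp only [IsNondegenerate, List.nodup_cons, List.mem_cons, not_or] at h
  simp only [perm, reverse]
  split_ifs <;> grind [Equiv.swap_comm]

lemma IsNondegenerate.apply_reverse_apply (h : τ.IsNondegenerate) (nb : V → Fin d → V) :
    τ.reverse.apply (τ.apply nb) = nb := by
  funext v p
  rw [apply, apply, h.perm_reverse, perm_perm]

lemma IsValid.isNondegenerate (h : τ.IsValid nb) (hnb : IsPortNumbering nb) :
    τ.IsNondegenerate := by
  have hyz : τ.y ≠ τ.z := hnb.ne_of_portAdj h.adj_yz
  have hxw : τ.x ≠ τ.w := hnb.ne_of_portAdj h.adj_xw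
  have hyw : τ.y ≠ τ.w := fun heq => h.not_adj_yx (heq ▸ hnb.portAdj_symm h.adj_xw)
  have hzx : τ.z ≠ τ.x := fun heq => h.not_adj_zw (heq ▸ h.adj_xw)
  simp [IsNondegenerate, hyz, hxw, hyw, hzx, h.ne_yx, h.ne_zw]

lemma portAdj_apply_iff_perm : PortAdj (τ.apply nb) a b ↔ PortAdj nb a (τ.perm a b) := by
  refine exists_congr fun p => ⟨fun h => ?_, fun h => ?_⟩
  · rw [← h, apply, perm_perm]
  · rw [apply, h, perm_perm]

lemma IsValid.portAdj_apply (h : τ.IsValid nb) (hnb : IsPortNumbering nb) (a b : V) :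
    PortAdj (τ.apply nb) a b ↔
      (PortAdj nb a b ∧ s(a, b) ≠ s(τ.y, τ.z) ∧ s(a, b) ≠ s(τ.x, τ.w)) ∨
        s(a, b) = s(τ.y, τ.x) ∨ s(a, b) = s(τ.z, τ.w) := by
  have hdist := h.isNondegenerate hnb
  simp only [IsNondegenerate, List.nodup_cons, List.mem_cons, not_or] at hdist
  have hsymm : ∀ a b, PortAdj nb a b → PortAdj nb b a := fun _ _ => hnb.portAdj_symm
  obtain ⟨hyz, hxw, -, -, hyx, hzw⟩ := h
  rw [portAdj_apply_iff_perm, perm]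
  split_ifs <;> simp only [Equiv.swap_apply_def, Equiv.Perm.one_apply] <;> (try split_ifs) <;> grind

lemma IsValid.isPortNumbering_apply (h : τ.IsValid nb) (hnb : IsPortNumbering nb) :
    IsPortNumbering (τ.apply nb) := by
  have hdist := h.isNondegenerate hnb
  simp only [IsNondegenerate, List.nodup_cons, List.mem_cons, not_or] at hdist
  have hadj := h.portAdj_apply hnb
  have hirrefl : ∀ a, ¬ PortAdj (τ.apply nb) a a := fun a ha => by
    rcases (hadj a a).1 ha with ⟨haa, -⟩ | haa | haa
    · exact hnb.ne_of_portAdj haa rfl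
    all_goals grind
  refine ⟨fun v p p' hp => hnb.inj v ((τ.perm v).injective hp),
    fun v p hp => hirrefl v ⟨p, hp⟩, fun v p => ?_⟩
  have hvp := (hadj v (τ.apply nb v p)).1 ⟨p, rfl⟩
  rw [Sym2.eq_swap] at hvp
  exact (hadj _ _).2 (hvp.imp_left fun h => ⟨hnb.portAdj_symm h.1, h.2⟩)

end Switch

section Counting

variable {V : Type*} {d : ℕ} (nb : V → Fin d → V) {x y z : V}

/-- The vertices of `X` and their neighbours. -/
noncomputable def closedNeighborhood (X : Finset V) : Finset V := X ∪ X.biUnion (neighbors nb)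

/-- The switchings that may have led to `nb` by removing the edge `yz`. -/
noncomputable def reverseSwitchesAt (y z : V) : Finset (Switch V) :=
  (neighbors nb y ×ˢ neighbors nb z).image fun p => ⟨y, z, p.1, p.2⟩

lemma card_closedNeighborhood_le (X : Finset V) :
    (closedNeighborhood nb X).card ≤ X.card * (d + 1) := by
  calc (closedNeighborhood nb X).card ≤ X.card + X.card * d :=
        (Finset.card_union_le _ _).trans (Nat.add_le_add_left
          (Finset.card_biUnion_le_card_mul X _ d fun v _ => card_neighbors_le nb v) _)
    _ = X.card * (d + 1) := by ring

lemma card_reverseSwitchesAt_le (y z : V) : (reverseSwitchesAt nb y z).card ≤ d * d :=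
  Finset.card_image_le.trans <| (Finset.card_product _ _).trans_le <|
    Nat.mul_le_mul (card_neighbors_le nb y) (card_neighbors_le nb z)

variable {nb}

lemma subset_closedNeighborhood {X : Finset V} : X ⊆ closedNeighborhood nb X :=
  Finset.subset_union_left

lemma mem_closedNeighborhood_of_portAdj {X : Finset V} (hx : x ∈ X) (h : PortAdj nb x y) :
    y ∈ closedNeighborhood nb X :=
  Finset.mem_union_right _ (Finset.mem_biUnion.2 ⟨x, hx, mem_neighbors.2 h⟩)

lemma Switch.IsValid.mem_reverseSwitchesAt {τ : Switch V} (h : τ.IsValid nb)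
    (hnb : IsPortNumbering nb) : τ ∈ reverseSwitchesAt (τ.apply nb) τ.y τ.z :=
  Finset.mem_image.2 ⟨(τ.x, τ.w), Finset.mem_product.2
    ⟨mem_neighbors.2 ((h.portAdj_apply hnb _ _).2 (Or.inr (Or.inl rfl))),
      mem_neighbors.2 ((h.portAdj_apply hnb _ _).2 (Or.inr (Or.inr rfl)))⟩, rfl⟩

variable [Fintype V]

variable (nb) in
/-- The oriented edges whose first end avoids `X` and whose second end avoids `Y`. -/
noncomputable def edgesAvoiding (X Y : Finset V) : Finset (V × V) :=
  {p | PortAdj nb p.1 p.2 ∧ p.1 ∉ X ∧ p.2 ∉ Y}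

variable (nb) in
/-- The switchings that remove a given edge `yz` together with an edge away from `X`. -/
noncomputable def switchesAt (X : Finset V) (y z : V) : Finset (Switch V) :=
  (edgesAvoiding nb (closedNeighborhood nb {y} ∪ X) (closedNeighborhood nb {z} ∪ X)).image
    fun p => ⟨y, z, p.1, p.2⟩

lemma IsPortNumbering.card_le_card_edgesAvoiding (hnb : IsPortNumbering nb) (X Y : Finset V) :
    Fintype.card V * d ≤ (edgesAvoiding nb X Y).card + X.card * d + Y.card * d := by
  set fromX := X.biUnion fun v => (neighbors nb v).image fun w => (v, w)
  set toY := Y.biUnion fun v => (neighbors nb v).image fun w => (w, v)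
  have hcover : ∀ a : V × Fin d, (a.1, nb a.1 a.2) ∈ edgesAvoiding nb X Y ∪ fromX ∪ toY := by
    rintro ⟨v, p⟩
    by_cases hv : v ∈ X
    · exact Finset.mem_union_left _ (Finset.mem_union_right _ (Finset.mem_biUnion.2
        ⟨v, hv, Finset.mem_image.2 ⟨_, mem_neighbors.2 ⟨p, rfl⟩, rfl⟩⟩))
    by_cases hw : nb v p ∈ Y
    · exact Finset.mem_union_right _ (Finset.mem_biUnion.2
        ⟨_, hw, Finset.mem_image.2 ⟨v, mem_neighbors.2 (hnb.portAdj_symm ⟨p, rfl⟩), rfl⟩⟩)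
    · exact Finset.mem_union_left _ (Finset.mem_union_left _
        (Finset.mem_filter.2 ⟨Finset.mem_univ _, ⟨p, rfl⟩, hv, hw⟩))
  have hinj : Function.Injective fun a : V × Fin d => (a.1, nb a.1 a.2) := by
    rintro ⟨v, p⟩ ⟨v', p'⟩ h
    simp only [Prod.mk.injEq] at h
    obtain ⟨rfl, h⟩ := h
    rw [hnb.inj v h]
  have hstar : ∀ (Z : Finset V) (g : V → V → V × V),
      (Z.biUnion fun v => (neighbors nb v).image (g v)).card ≤ Z.card * d := fun Z g =>
    Finset.card_biUnion_le_card_mul _ _ _ fun v _ =>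
      Finset.card_image_le.trans (card_neighbors_le nb v)
  calc Fintype.card V * d = (Finset.univ : Finset (V × Fin d)).card := by
        rw [Finset.card_univ, Fintype.card_prod, Fintype.card_fin]
    _ ≤ (edgesAvoiding nb X Y ∪ fromX ∪ toY).card :=
        Finset.card_le_card_of_injOn _ (fun a _ => hcover a) hinj.injOn
    _ ≤ (edgesAvoiding nb X Y).card + fromX.card + toY.card :=
        (Finset.card_union_le _ _).trans (Nat.add_le_add_right (Finset.card_union_le _ _) _)
    _ ≤ _ := Nat.add_le_add (Nat.add_le_add_left (hstar X _) _) (hstar Y fun v w => (w, v))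

lemma IsPortNumbering.card_le_two_mul_card_switchesAt (hnb : IsPortNumbering nb) {X : Finset V}
    (hX : 4 * (d + 1 + X.card) ≤ Fintype.card V) (y z : V) :
    Fintype.card V * d ≤ 2 * (switchesAt nb X y z).card := by
  have hinj : Function.Injective fun p : V × V => (⟨y, z, p.1, p.2⟩ : Switch V) := by
    rintro ⟨a, b⟩ ⟨a', b'⟩ h
    simpa using h
  have hcard : ∀ v : V, (closedNeighborhood nb {v} ∪ X).card ≤ d + 1 + X.card := fun v => by
    have hv := card_closedNeighborhood_le nb {v}
    rw [Finset.card_singleton, one_mul] at hv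
    exact (Finset.card_union_le _ _).trans (Nat.add_le_add_right hv _)
  have hedges := hnb.card_le_card_edgesAvoiding (closedNeighborhood nb {y} ∪ X)
    (closedNeighborhood nb {z} ∪ X)
  rw [switchesAt, Finset.card_image_of_injective _ hinj]
  have hy := Nat.mul_le_mul_right d (hcard y)
  have hz := Nat.mul_le_mul_right d (hcard z)
  have hXd := Nat.mul_le_mul_right d hX
  rw [mul_assoc] at hXd
  omega

lemma exists_of_mem_switchesAt {X : Finset V} {τ : Switch V} (h : τ ∈ switchesAt nb X y z) :
    ∃ x w, x ∉ X ∧ w ∉ X ∧ τ = ⟨y, z, x, w⟩ := by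
  obtain ⟨⟨x, w⟩, hp, rfl⟩ := Finset.mem_image.1 h
  obtain ⟨-, -, hx, hw⟩ := Finset.mem_filter.1 hp
  exact ⟨x, w, fun h => hx (Finset.mem_union_right _ h), fun h => hw (Finset.mem_union_right _ h),
    rfl⟩

lemma disjoint_support_of_mem_switchesAt {X : Finset V} {τ : Switch V} (hy : y ∉ X) (hz : z ∉ X)
    (h : τ ∈ switchesAt nb X y z) : Disjoint τ.support X := by
  obtain ⟨x, w, hx, hw, rfl⟩ := exists_of_mem_switchesAt h
  refine Finset.disjoint_left.2 fun v hv => ?_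
  rcases Switch.mem_support.1 hv with rfl | rfl | rfl | rfl <;> assumption

lemma isValid_of_mem_switchesAt {X : Finset V} {τ : Switch V} (hyz : PortAdj nb y z)
    (h : τ ∈ switchesAt nb X y z) : τ.IsValid nb := by
  obtain ⟨⟨x, w⟩, hp, rfl⟩ := Finset.mem_image.1 h
  obtain ⟨-, hxw, hx, hw⟩ := Finset.mem_filter.1 hp
  have hball : ∀ a b : V, b ∉ closedNeighborhood nb {a} → a ≠ b ∧ ¬ PortAdj nb a b :=
    fun a b hb => ⟨fun heq => hb (heq ▸ subset_closedNeighborhood (Finset.mem_singleton_self a)),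
      fun hab => hb (mem_closedNeighborhood_of_portAdj (Finset.mem_singleton_self a) hab)⟩
  obtain ⟨hyx, hyx'⟩ := hball y x fun h => hx (Finset.mem_union_left _ h)
  obtain ⟨hzw, hzw'⟩ := hball z w fun h => hw (Finset.mem_union_left _ h)
  exact ⟨hyz, hxw, hyx, hzw, hyx', hzw'⟩

end Counting

/-! ### The state space -/

/-- Neighbour lists together with a mark at every vertex. The zero mark closes a vertex, which
keeps it out of every core. -/
@[ext]
structure State (V : Type*) (d : ℕ) (Q : Type*) where
  nb : V → Fin d → V
  mark : V → Q

section State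

variable {V : Type*} {d : ℕ} {Q : Type*}

noncomputable instance [Fintype V] [Fintype Q] : Fintype (State V d Q) :=
  Fintype.ofInjective (fun s => (s.nb, s.mark)) fun _ _ h =>
    State.ext (Prod.mk.inj h).1 (Prod.mk.inj h).2

/-- The action of a switching on states, which closes the four vertices involved. Their old marks
are the only information lost. -/
noncomputable def Switch.act [Zero Q] (τ : Switch V) (s : State V d Q) : State V d Q :=
  ⟨τ.apply s.nb, fun v => if v ∈ τ.support then 0 else s.mark v⟩

lemma Switch.isModificationOn [Zero Q] (τ : Switch V) (s : State V d Q) :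
    IsModificationOn τ.support s.nb s.mark (τ.act s).nb (τ.act s).mark :=
  ⟨fun _ => apply_of_notMem_support, fun _ hv => if_neg hv, fun _ hv => if_pos hv⟩

lemma Switch.IsNondegenerate.act_inj [Zero Q] {τ : Switch V} (h : τ.IsNondegenerate)
    {s s' : State V d Q} (hact : τ.act s = τ.act s')
    (hmark : ∀ v ∈ τ.support, s.mark v = s'.mark v) : s = s' := by
  refine State.ext ?_ (funext fun v => ?_)
  · rw [← h.apply_reverse_apply s.nb, ← h.apply_reverse_apply s'.nb]
    exact congrArg _ (congrArg State.nb hact)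
  · by_cases hv : v ∈ τ.support
    · exact hmark v hv
    · rw [← (τ.isModificationOn s).mark_eq v hv, ← (τ.isModificationOn s').mark_eq v hv, hact]

theorem card_mul_le_of_switching [Zero Q] [Fintype Q] (A B : Finset (State V d Q))
    (fwd bwd : State V d Q → Finset (Switch V)) {φ c β : ℕ}
    (hfwd : ∀ s ∈ A, φ ≤ c * (fwd s).card)
    (hmaps : ∀ s ∈ A, ∀ τ ∈ fwd s, τ.IsNondegenerate ∧ τ.act s ∈ B ∧ τ ∈ bwd (τ.act s))
    (hbwd : ∀ s ∈ B, (bwd s).card ≤ β) :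
    A.card * φ ≤ c * (B.card * β * Fintype.card Q ^ 4) := by
  let code : (Σ _ : State V d Q, Switch V) → (Σ _ : State V d Q, Switch V) × (Fin 4 → Q) :=
    fun p => (⟨p.2.act p.1, p.2⟩,
      ![p.1.mark p.2.y, p.1.mark p.2.z, p.1.mark p.2.x, p.1.mark p.2.w])
  have hmapsTo : ∀ p ∈ A.sigma fwd, code p ∈ B.sigma bwd ×ˢ Finset.univ := fun p hp =>
    have hp := Finset.mem_sigma.1 hp
    Finset.mem_product.2 ⟨Finset.mem_sigma.2 (hmaps p.1 hp.1 p.2 hp.2).2, Finset.mem_univ _⟩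
  have hinj : Set.InjOn code (A.sigma fwd) := by
    rintro ⟨s, τ⟩ hp ⟨s', τ'⟩ - heq
    have hp := Finset.mem_sigma.1 (Finset.mem_coe.1 hp)
    simp only [code, Prod.mk.injEq, Sigma.mk.injEq, heq_eq_eq] at heq
    obtain ⟨⟨hact, rfl⟩, hmark⟩ := heq
    have hs : s = s' := (hmaps s hp.1 τ hp.2).1.act_inj hact fun v hv => by
      rcases Switch.mem_support.1 hv with rfl | rfl | rfl | rfl
      exacts [congrFun hmark 0, congrFun hmark 1, congrFun hmark 2, congrFun hmark 3]
    rw [hs]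
  calc A.card * φ ≤ ∑ s ∈ A, c * (fwd s).card := Finset.card_nsmul_le_sum _ _ _ hfwd
    _ = c * (A.sigma fwd).card := by rw [← Finset.mul_sum, Finset.card_sigma]
    _ ≤ c * (B.sigma bwd ×ˢ (Finset.univ : Finset (Fin 4 → Q))).card :=
        Nat.mul_le_mul_left _ (Finset.card_le_card_of_injOn code hmapsTo hinj)
    _ = c * ((∑ s ∈ B, (bwd s).card) * Fintype.card Q ^ 4) := by
        rw [Finset.card_product, Finset.card_sigma, Finset.card_univ, Fintype.card_fun,
          Fintype.card_fin]
    _ ≤ _ := by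
        gcongr
        exact Finset.sum_le_card_nsmul _ _ _ hbwd

variable (V d Q) in
/-- The states whose neighbour lists come from a `d`-regular graph. -/
noncomputable def states [Fintype V] [Fintype Q] : Finset (State V d Q) :=
  {s | IsPortNumbering s.nb}

lemma mem_states [Fintype V] [Fintype Q] {s : State V d Q} :
    s ∈ states V d Q ↔ IsPortNumbering s.nb := by
  rw [states, Finset.mem_filter, and_iff_right (Finset.mem_univ s)]

end State

/-! ### Local sparsity of most states -/

section Sparsity

variable {V : Type*} [Fintype V] {d : ℕ} {Q : Type*} [Fintype Q] {F : Finset (Sym2 V)}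
  {S : Finset V}

variable (d Q) in
/-- The states whose graph contains all edges in `F`. -/
noncomputable def statesContaining (F : Finset (Sym2 V)) : Finset (State V d Q) :=
  {s ∈ states V d Q | ∀ e ∈ F, e ∈ (portGraph s.nb).edgeSet}

variable (d Q) in
/-- The states whose graph has more than `#S` edges inside `S`. -/
noncomputable def statesDenseOn (S : Finset V) : Finset (State V d Q) :=
  (S.sym2.powersetCard (S.card + 1)).biUnion (statesContaining d Q)

lemma act_mem_statesContaining [Zero Q] {y z : V} (hF : ∀ e ∈ F, ∀ x ∈ e, x ∈ S)
    (hnot : s(y, z) ∉ F) {s : State V d Q} (hs : s ∈ statesContaining d Q (insert s(y, z) F))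
    {τ : Switch V} (hτ : τ ∈ switchesAt s.nb S y z) (hval : τ.IsValid s.nb) :
    τ.act s ∈ statesContaining d Q F := by
  obtain ⟨hstate, hsF⟩ := Finset.mem_filter.1 hs
  have hnb := mem_states.1 hstate
  have hnb' : IsPortNumbering (τ.act s).nb := hval.isPortNumbering_apply hnb
  obtain ⟨x, w, hx, -, rfl⟩ := exists_of_mem_switchesAt hτ
  refine Finset.mem_filter.2 ⟨mem_states.2 hnb', fun e he => ?_⟩
  induction e using Sym2.ind with
  | _ a b =>
    have hab := hsF _ (Finset.mem_insert_of_mem he)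
    rw [SimpleGraph.mem_edgeSet, hnb.portGraph_adj] at hab
    rw [SimpleGraph.mem_edgeSet, hnb'.portGraph_adj]
    exact (hval.portAdj_apply hnb a b).2 (Or.inl ⟨hab, fun h => hnot (h ▸ he),
      fun h => hx (hF _ he x (h ▸ Sym2.mem_mk_left x w))⟩)

lemma card_statesContaining_insert_mul_le [Zero Q] (hd : 0 < d)
    (hS : 4 * (d + 1 + S.card) ≤ Fintype.card V) (hF : ∀ e ∈ F, ∀ x ∈ e, x ∈ S) {y z : V}
    (hnot : s(y, z) ∉ F) :
    (statesContaining d Q (insert s(y, z) F)).card * Fintype.card V ≤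
      (statesContaining d Q F).card * (2 * d * Fintype.card Q ^ 4) := by
  have hnb : ∀ s ∈ statesContaining d Q (insert s(y, z) F), IsPortNumbering s.nb :=
    fun s hs => mem_states.1 (Finset.mem_filter.1 hs).1
  have hyz : ∀ s ∈ statesContaining d Q (insert s(y, z) F), PortAdj s.nb y z := fun s hs => by
    have := (Finset.mem_filter.1 hs).2 s(y, z) (Finset.mem_insert_self _ _)
    rwa [SimpleGraph.mem_edgeSet, (hnb s hs).portGraph_adj] at this
  have hcount := card_mul_le_of_switching (statesContaining d Q (insert s(y, z) F))
    (statesContaining d Q F) (fun s => switchesAt s.nb S y z)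
    (fun s => reverseSwitchesAt s.nb y z)
    (fun s hs => (hnb s hs).card_le_two_mul_card_switchesAt hS y z)
    (fun s hs τ hτ => by
      have hval := isValid_of_mem_switchesAt (hyz s hs) hτ
      refine ⟨hval.isNondegenerate (hnb s hs), act_mem_statesContaining hF hnot hs hτ hval, ?_⟩
      have hmem := hval.mem_reverseSwitchesAt (hnb s hs)
      obtain ⟨x, w, -, -, rfl⟩ := exists_of_mem_switchesAt hτ
      exact hmem)
    (fun s _ => card_reverseSwitchesAt_le s.nb y z)
  refine Nat.le_of_mul_le_mul_right (c := d) ?_ hd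
  calc _ = (statesContaining d Q (insert s(y, z) F)).card * (Fintype.card V * d) := by ring
    _ ≤ _ := hcount
    _ = _ := by ring

lemma card_statesContaining_mul_pow_le [Zero Q] (hd : 0 < d)
    (hS : 4 * (d + 1 + S.card) ≤ Fintype.card V) (hF : ∀ e ∈ F, ∀ x ∈ e, x ∈ S) :
    (statesContaining d Q F).card * Fintype.card V ^ F.card ≤
      (states V d Q).card * (2 * d * Fintype.card Q ^ 4) ^ F.card := by
  induction F using Finset.induction with
  | empty =>
    simp only [Finset.card_empty, pow_zero, mul_one]
    exact Finset.card_filter_le _ _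
  | insert e F he ih =>
    have hF' : ∀ e' ∈ F, ∀ x ∈ e', x ∈ S := fun e' he' => hF e' (Finset.mem_insert_of_mem he')
    rw [Finset.card_insert_of_notMem he]
    induction e using Sym2.ind with
    | _ y z =>
      calc _ = ((statesContaining d Q (insert s(y, z) F)).card * Fintype.card V) *
            Fintype.card V ^ F.card := by ring
        _ ≤ ((statesContaining d Q F).card * (2 * d * Fintype.card Q ^ 4)) *
            Fintype.card V ^ F.card :=
          Nat.mul_le_mul_right _ (card_statesContaining_insert_mul_le hd hS hF' he)
        _ = ((statesContaining d Q F).card * Fintype.card V ^ F.card) *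
            (2 * d * Fintype.card Q ^ 4) := by ring
        _ ≤ ((states V d Q).card * (2 * d * Fintype.card Q ^ 4) ^ F.card) *
            (2 * d * Fintype.card Q ^ 4) := Nat.mul_le_mul_right _ (ih hF')
        _ = _ := by ring

lemma card_powersetCard_succ_sym2_le {α : Type*} (S : Finset α) :
    (S.sym2.powersetCard (S.card + 1)).card ≤ ((S.card + 1) ^ 2) ^ (S.card + 1) := by
  rw [Finset.card_powersetCard, Finset.card_sym2]
  exact (Nat.choose_le_pow _ _).trans (Nat.pow_le_pow_left (Nat.choose_le_pow _ _) _)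

lemma card_statesDenseOn_mul_pow_le [Zero Q] (hd : 0 < d)
    (hS : 4 * (d + 1 + S.card) ≤ Fintype.card V) :
    (statesDenseOn d Q S).card * Fintype.card V ^ (S.card + 1) ≤
      (states V d Q).card * ((S.card + 1) ^ 2 * (2 * d * Fintype.card Q ^ 4)) ^ (S.card + 1) := by
  set D := 2 * d * Fintype.card Q ^ 4
  have hE : ∀ E ∈ S.sym2.powersetCard (S.card + 1),
      (statesContaining d Q E).card * Fintype.card V ^ (S.card + 1) ≤
        (states V d Q).card * D ^ (S.card + 1) := fun E hE => by
    obtain ⟨hsub, hcard⟩ := Finset.mem_powersetCard.1 hE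
    rw [← hcard]
    exact card_statesContaining_mul_pow_le hd hS fun e he => Finset.mem_sym2_iff.1 (hsub he)
  calc _ ≤ (∑ E ∈ S.sym2.powersetCard (S.card + 1), (statesContaining d Q E).card) *
        Fintype.card V ^ (S.card + 1) := Nat.mul_le_mul_right _ Finset.card_biUnion_le
    _ ≤ (S.sym2.powersetCard (S.card + 1)).card * ((states V d Q).card * D ^ (S.card + 1)) := by
      rw [Finset.sum_mul]
      exact Finset.sum_le_card_nsmul _ _ _ hE
    _ ≤ ((S.card + 1) ^ 2) ^ (S.card + 1) * ((states V d Q).card * D ^ (S.card + 1)) :=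
      Nat.mul_le_mul_right _ (card_powersetCard_succ_sym2_le S)
    _ = _ := by rw [mul_pow _ D]; exact Nat.mul_left_comm _ _ _

lemma sum_card_statesDenseOn_mul_le [Zero Q] (hd : 0 < d) {k : ℕ}
    (hk : 4 * (d + 1 + k) ≤ Fintype.card V) :
    (∑ S ∈ Finset.powersetCard k (Finset.univ : Finset V), (statesDenseOn d Q S).card) *
        Fintype.card V ≤
      (states V d Q).card * ((k + 1) ^ 2 * (2 * d * Fintype.card Q ^ 4)) ^ (k + 1) := by
  set n := Fintype.card V
  set bound := (states V d Q).card * ((k + 1) ^ 2 * (2 * d * Fintype.card Q ^ 4)) ^ (k + 1)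
  have hS : ∀ S ∈ Finset.powersetCard k (Finset.univ : Finset V),
      (statesDenseOn d Q S).card * n ^ (k + 1) ≤ bound := fun S hS => by
    obtain rfl := (Finset.mem_powersetCard.1 hS).2
    exact card_statesDenseOn_mul_pow_le hd hk
  have hn : 0 < n := by omega
  refine Nat.le_of_mul_le_mul_left (c := n ^ k) ?_ (by positivity)
  calc _ = (∑ S ∈ Finset.powersetCard k (Finset.univ : Finset V), (statesDenseOn d Q S).card) *
        n ^ (k + 1) := by ring
    _ ≤ (Finset.powersetCard k (Finset.univ : Finset V)).card * bound := by
      rw [Finset.sum_mul]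
      exact Finset.sum_le_card_nsmul _ _ _ hS
    _ ≤ n ^ k * bound := by
      rw [Finset.card_powersetCard]
      exact Nat.mul_le_mul_right _ (Nat.choose_le_pow _ _)

lemma exists_mem_statesDenseOn {s : State V d Q} (hs : s ∈ states V d Q) {m : ℕ}
    (h : ¬ IsLocallySparse (portGraph s.nb) m) :
    ∃ S : Finset V, S.card ≤ m ∧ s ∈ statesDenseOn d Q S := by
  unfold IsLocallySparse at h
  push Not at h
  obtain ⟨S, E, hS, hE, hlt⟩ := h
  obtain ⟨E', hE', hcard⟩ := Finset.exists_subset_card_eq (Nat.succ_le_of_lt hlt)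
  exact ⟨S, hS, Finset.mem_biUnion.2 ⟨E', Finset.mem_powersetCard.2
    ⟨fun e he => Finset.mem_sym2_iff.2 (hE e (hE' he)).2, hcard⟩,
    Finset.mem_filter.2 ⟨hs, fun e he => (hE e (hE' he)).1⟩⟩⟩

theorem card_not_isLocallySparse_mul_le [Zero Q] (hd : 0 < d) {m : ℕ}
    (hm : 4 * (d + 1 + m) ≤ Fintype.card V) :
    {s ∈ states V d Q | ¬ IsLocallySparse (portGraph s.nb) m}.card * Fintype.card V ≤
      (states V d Q).card *
        ((m + 1) * ((m + 1) ^ 2 * (2 * d * Fintype.card Q ^ 4)) ^ (m + 1)) := by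
  have hsub : {s ∈ states V d Q | ¬ IsLocallySparse (portGraph s.nb) m} ⊆
      (Finset.range (m + 1)).biUnion fun k =>
        (Finset.powersetCard k Finset.univ).biUnion (statesDenseOn d Q) := fun s hs => by
    obtain ⟨S, hS, hmem⟩ := exists_mem_statesDenseOn (Finset.mem_filter.1 hs).1
      (Finset.mem_filter.1 hs).2
    exact Finset.mem_biUnion.2 ⟨S.card, Finset.mem_range.2 (Nat.lt_succ_of_le hS),
      Finset.mem_biUnion.2 ⟨S, Finset.mem_powersetCard.2 ⟨Finset.subset_univ _, rfl⟩, hmem⟩⟩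
  have hk : ∀ k ∈ Finset.range (m + 1),
      ((Finset.powersetCard k Finset.univ).biUnion (statesDenseOn d Q)).card * Fintype.card V ≤
        (states V d Q).card * ((m + 1) ^ 2 * (2 * d * Fintype.card Q ^ 4)) ^ (m + 1) :=
    fun k hk => by
    have hkm : k + 1 ≤ m + 1 := Finset.mem_range.1 hk
    calc _ ≤ _ := Nat.mul_le_mul_right _ Finset.card_biUnion_le
      _ ≤ _ := sum_card_statesDenseOn_mul_le hd (by omega)
      _ ≤ (states V d Q).card * ((m + 1) ^ 2 * (2 * d * Fintype.card Q ^ 4)) ^ (k + 1) := by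
        gcongr
      _ ≤ _ := Nat.mul_le_mul_left _ (Nat.pow_le_pow_right (by positivity) hkm)
  calc _ ≤ (∑ k ∈ Finset.range (m + 1), _) * Fintype.card V :=
        Nat.mul_le_mul_right _ ((Finset.card_le_card hsub).trans Finset.card_biUnion_le)
    _ ≤ (Finset.range (m + 1)).card * _ := by
      rw [Finset.sum_mul]
      exact Finset.sum_le_card_nsmul _ _ _ hk
    _ = _ := by rw [Finset.card_range]; ring

end Sparsity

/-! ### Rejected addresses are rare -/

section Rejection

variable {V Q : Type*} [Zero Q] {d t M m : ℕ} {nb nb' : V → Fin d → V} {κ κ' : V → Q} {r : V}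

/-- The vertices that the outward neighbours of a newly accepted address have to avoid. -/
noncomputable def conflictTargets (nb : V → Fin d → V) (κ : V → Q) (r : V) (t M : ℕ) : Finset V :=
  neighbors nb r ∪ (acceptedAddrs nb κ r t M).biUnion (outward nb r t)

/-- The address `m` was tested because its parent is in the core, and it was not accepted. -/
structure IsRejected (nb : V → Fin d → V) (κ : V → Q) (r : V) (t M m : ℕ) : Prop where
  notMem : m ∉ acceptedAddrs nb κ r t M
  le : t ≤ m
  isCandidate : IsCandidate t m (acceptedAddrs nb κ r t M)

/-- The address `m` was rejected and an outward neighbour of it is a conflict target. -/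
def HasConflict (nb : V → Fin d → V) (κ : V → Q) (r : V) (t M m : ℕ) : Prop :=
  IsRejected nb κ r t M m ∧ ∃ z ∈ outward nb r t m, z ∈ conflictTargets nb κ r t M

lemma card_conflictTargets_le (nb : V → Fin d → V) (κ : V → Q) (r : V) (t M : ℕ) :
    (conflictTargets nb κ r t M).card ≤ d * (M + 1) := by
  have haccepted : (acceptedAddrs nb κ r t M).card ≤ M := by
    have hsub : acceptedAddrs nb κ r t M ⊆ Finset.range M := fun m hm =>
      Finset.mem_range.2 (lt_of_mem_acceptedAddrs hm)
    simpa only [Finset.card_range] using Finset.card_le_card hsub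
  have houtward : ((acceptedAddrs nb κ r t M).biUnion (outward nb r t)).card ≤
      (acceptedAddrs nb κ r t M).card * d := Finset.card_biUnion_le_card_mul _ _ _ fun m _ =>
    (Finset.card_le_card (Finset.erase_subset _ _)).trans (card_neighbors_le nb _)
  calc _ ≤ d + M * d := (Finset.card_union_le _ _).trans
        (Nat.add_le_add (card_neighbors_le nb r)
          (houtward.trans (Nat.mul_le_mul_right d haccepted)))
    _ = d * (M + 1) := by ring

lemma IsModificationOn.conflictTargets_eq {T : Finset V} (h : IsModificationOn T nb κ nb' κ')
    (ht : 0 < t) (hT : Disjoint T (core nb κ r t M)) :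
    conflictTargets nb' κ' r t M = conflictTargets nb κ r t M := by
  rw [conflictTargets, conflictTargets, h.acceptedAddrs_eq ht hT, neighbors, neighbors,
    h.nb_root_eq hT]
  congr 1
  exact Finset.biUnion_congr rfl fun β hβ =>
    (h.agreeAt ht hT (isCandidate_of_mem_acceptedAddrs hβ)).outward_eq (h.nb_addrVertex_eq hT hβ)

lemma IsRejected.mark_eq_zero_or_hasConflict (h : IsRejected nb κ r t M m) (ht : 0 < t)
    (hm : m < M) : κ (addrVertex nb r t m) = 0 ∨ HasConflict nb κ r t M m := by
  by_contra! hcon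
  have havoid : ∀ z ∈ outward nb r t m, z ∉ conflictTargets nb κ r t M :=
    fun z hz hz' => hcon.2 ⟨h, z, hz, hz'⟩
  refine h.notMem (mem_acceptedAddrs.2 ⟨hm, h.le, h.isCandidate.imp_right fun hparent => ?_,
    hcon.1, Finset.disjoint_left.2 fun z hz hz' => havoid z hz (Finset.mem_union_left _ hz'),
    fun β hβ => Finset.disjoint_left.2 fun z hz hz' => havoid z hz (Finset.mem_union_right _
      (Finset.mem_biUnion.2 ⟨β, acceptedAddrs_mono hm.le hβ, hz'⟩))⟩)
  exact mem_acceptedAddrs.2 ⟨parentAddr_lt ht h.le, (mem_acceptedAddrs.1 hparent).2⟩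

lemma IsRejected.addrVertex_notMem_core (h : IsRejected nb κ r t M m) (hnb : IsPortNumbering nb)
    (hd : 3 ≤ d) (ht : 0 < t) (htd : t ≤ d) : addrVertex nb r t m ∉ core nb κ r t M := by
  intro hcore
  rcases mem_core.1 hcore with heq | ⟨m', hm', heq⟩
  · exact addrVertex_ne_root hnb hd ht htd h.isCandidate heq
  · obtain rfl := addrVertex_injOn_candidates hnb hd ht htd
      ⟨le_of_mem_acceptedAddrs hm', isCandidate_of_mem_acceptedAddrs hm'⟩
      ⟨h.le, h.isCandidate⟩ heq
    exact h.notMem hm'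

lemma HasConflict.exists_edge (h : HasConflict nb κ r t M m) (hnb : IsPortNumbering nb)
    (hd : 3 ≤ d) (ht : 0 < t) (htd : t ≤ d) :
    ∃ z ∈ conflictTargets nb κ r t M, z ∉ core nb κ r t M ∧
      PortAdj nb (addrVertex nb r t m) z := by
  obtain ⟨hrej, z, hz, hztarget⟩ := h
  obtain ⟨hne, hadj⟩ := mem_outward.1 hz
  exact ⟨z, hztarget, fun hzcore => hne (core_neighbor_unique hnb ht
    (hrej.addrVertex_notMem_core hnb hd ht htd) hzcore (addrParent_mem_core ht hrej.isCandidate)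
    hadj (hnb.portAdj_symm (portAdj_addrParent hd ht htd m))), hadj⟩

lemma exists_isRejected_ancestor {i : ℕ} (ht : 0 < t) (hi : i < t) {k : ℕ} (hk : 1 ≤ k)
    (h : t * k + i ∉ acceptedAddrs nb κ r t M) :
    ∃ j, 1 ≤ k / 2 ^ j ∧ IsRejected nb κ r t M (t * (k / 2 ^ j) + i) := by
  induction k using Nat.strong_induction_on with
  | _ k ih =>
    have hdiv : (t * k + i) / t = k := by
      rw [Nat.mul_add_div ht, Nat.div_eq_of_lt hi, add_zero]
    have hparent : parentAddr t (t * k + i) = t * (k / 2) + i := by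
      rw [parentAddr, hdiv, Nat.mul_add_mod, Nat.mod_eq_of_lt hi]
    by_cases hcand : IsCandidate t (t * k + i) (acceptedAddrs nb κ r t M)
    · refine ⟨0, by simpa using hk, ?_⟩
      rw [pow_zero, Nat.div_one]
      exact ⟨h, (Nat.le_mul_of_pos_right t hk).trans (Nat.le_add_right _ _), hcand⟩
    · rw [IsCandidate, not_or, hdiv, hparent] at hcand
      obtain ⟨j, hj, hrej⟩ := ih (k / 2) (by omega) (by omega) hcand.2
      rw [Nat.div_div_eq_div_mul, ← pow_succ'] at hj hrej
      exact ⟨j + 1, hj, hrej⟩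

/-- The heap positions on level `S` of the `i`-th core tree whose addresses are accepted. -/
noncomputable def acceptedLeaves (nb : V → Fin d → V) (κ : V → Q) (r : V) (t S i : ℕ) :
    Finset ℕ :=
  {k ∈ Finset.Ico (2 ^ S) (2 ^ (S + 1)) | t * k + i ∈ acceptedAddrs nb κ r t (t * 2 ^ (S + 1))}

lemma two_pow_le_card_acceptedLeaves_add_sum {S i : ℕ} (ht : 0 < t) (hi : i < t) :
    2 ^ S ≤ (acceptedLeaves nb κ r t S i).card + ∑ k ∈ Finset.Ico (2 ^ S) (2 ^ (S + 1)),
      {j ∈ Finset.range (S + 1) |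
        IsRejected nb κ r t (t * 2 ^ (S + 1)) (t * (k / 2 ^ j) + i)}.card := by
  have hcompl := Finset.card_filter_add_card_filter_not (s := Finset.Ico (2 ^ S) (2 ^ (S + 1)))
    fun k => t * k + i ∈ acceptedAddrs nb κ r t (t * 2 ^ (S + 1))
  have hrej : ∀ k ∈ Finset.Ico (2 ^ S) (2 ^ (S + 1)),
      t * k + i ∉ acceptedAddrs nb κ r t (t * 2 ^ (S + 1)) →
      1 ≤ {j ∈ Finset.range (S + 1) |
        IsRejected nb κ r t (t * 2 ^ (S + 1)) (t * (k / 2 ^ j) + i)}.card := fun k hk hnot => by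
    obtain ⟨hlow, hhigh⟩ := Finset.mem_Ico.1 hk
    obtain ⟨j, hj, hrej⟩ := exists_isRejected_ancestor ht hi (Nat.one_le_two_pow.trans hlow) hnot
    have hjS : 2 ^ j < 2 ^ (S + 1) := ((Nat.one_le_div_iff (by positivity)).1 hj).trans_lt hhigh
    exact Finset.card_pos.2 ⟨j, Finset.mem_filter.2
      ⟨Finset.mem_range.2 ((Nat.pow_lt_pow_iff_right one_lt_two).1 hjS), hrej⟩⟩
  have hsum : {k ∈ Finset.Ico (2 ^ S) (2 ^ (S + 1)) |
      t * k + i ∉ acceptedAddrs nb κ r t (t * 2 ^ (S + 1))}.card ≤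
      ∑ k ∈ Finset.Ico (2 ^ S) (2 ^ (S + 1)), {j ∈ Finset.range (S + 1) |
        IsRejected nb κ r t (t * 2 ^ (S + 1)) (t * (k / 2 ^ j) + i)}.card := by
    rw [Finset.card_filter]
    refine Finset.sum_le_sum fun k hk => ?_
    split_ifs with hmem
    exacts [Nat.zero_le _, hrej k hk hmem]
  rw [Nat.card_Ico, pow_succ, Nat.mul_two, Nat.add_sub_cancel] at hcompl
  rw [acceptedLeaves, pow_succ, Nat.mul_two] at *
  omega

end Rejection

section RejectionCount

variable {V Q : Type*} [Fintype V] [Zero Q] {d t M m : ℕ}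

lemma mem_reverseSwitchesAt_conflictTargets (ht : 0 < t) {s : State V d Q} {r z : V}
    (hnb : IsPortNumbering s.nb) (hcand : IsCandidate t m (acceptedAddrs s.nb s.mark r t M))
    (hy : addrVertex s.nb r t m ∉ core s.nb s.mark r t M) (hz : z ∉ core s.nb s.mark r t M)
    (hztarget : z ∈ conflictTargets s.nb s.mark r t M)
    (hyz : PortAdj s.nb (addrVertex s.nb r t m) z) {τ : Switch V}
    (hτ : τ ∈ switchesAt s.nb (core s.nb s.mark r t M) (addrVertex s.nb r t m) z) :
    τ ∈ (conflictTargets (τ.act s).nb (τ.act s).mark r t M).biUnion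
      (reverseSwitchesAt (τ.act s).nb (addrVertex (τ.act s).nb r t m)) := by
  have hT := disjoint_support_of_mem_switchesAt hy hz hτ
  have hmem := (isValid_of_mem_switchesAt hyz hτ).mem_reverseSwitchesAt hnb
  have hmod := τ.isModificationOn s
  rw [hmod.conflictTargets_eq ht hT, (hmod.agreeAt ht hT hcand).1]
  obtain ⟨x, w, -, -, rfl⟩ := exists_of_mem_switchesAt hτ
  exact Finset.mem_biUnion.2 ⟨z, hztarget, hmem⟩

variable [Fintype Q]

lemma card_hasConflict_mul_le (hd : 3 ≤ d) (ht : 0 < t) (htd : t ≤ d) (r : V) (m : ℕ)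
    (hM : 4 * (d + 1 + (M + 1)) ≤ Fintype.card V) :
    {s ∈ states V d Q | HasConflict s.nb s.mark r t M m}.card * Fintype.card V ≤
      (states V d Q).card * (2 * d ^ 2 * (M + 1) * Fintype.card Q ^ 4) := by
  have hnb : ∀ s ∈ {s ∈ states V d Q | HasConflict s.nb s.mark r t M m}, IsPortNumbering s.nb :=
    fun s hs => mem_states.1 (Finset.mem_filter.1 hs).1
  have hedge : ∀ s ∈ {s ∈ states V d Q | HasConflict s.nb s.mark r t M m}, _ :=
    fun s hs => (Finset.mem_filter.1 hs).2.exists_edge (hnb s hs) hd ht htd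
  have : Nonempty V := ⟨r⟩
  choose! z hztarget hzcore hyz using hedge
  have hcount := card_mul_le_of_switching {s ∈ states V d Q | HasConflict s.nb s.mark r t M m}
    (states V d Q) (fun s => switchesAt s.nb (core s.nb s.mark r t M) (addrVertex s.nb r t m) (z s))
    (fun s => (conflictTargets s.nb s.mark r t M).biUnion
      (reverseSwitchesAt s.nb (addrVertex s.nb r t m)))
    (fun s hs => (hnb s hs).card_le_two_mul_card_switchesAt
      ((Nat.mul_le_mul_left 4 (Nat.add_le_add_left (card_core_le M) _)).trans hM) _ _)
    (fun s hs τ hτ => by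
      have hval := isValid_of_mem_switchesAt (hyz s hs) hτ
      have hrej := (Finset.mem_filter.1 hs).2.1
      exact ⟨hval.isNondegenerate (hnb s hs), mem_states.2 (hval.isPortNumbering_apply (hnb s hs)),
        mem_reverseSwitchesAt_conflictTargets ht (hnb s hs) hrej.isCandidate
          (hrej.addrVertex_notMem_core (hnb s hs) hd ht htd) (hzcore s hs) (hztarget s hs)
          (hyz s hs) hτ⟩)
    (fun s _ => (Finset.card_biUnion_le_card_mul _ _ (d * d) fun v _ =>
      card_reverseSwitchesAt_le s.nb _ v).trans
        (Nat.mul_le_mul_right _ (card_conflictTargets_le s.nb s.mark r t M)))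
  refine Nat.le_of_mul_le_mul_right (c := d) ?_ (by omega)
  calc _ = {s ∈ states V d Q | HasConflict s.nb s.mark r t M m}.card * (Fintype.card V * d) := by
        ring
    _ ≤ _ := hcount
    _ = _ := by ring

lemma card_mark_eq_zero_mul_le (v : (V → Fin d → V) → V) :
    {s ∈ states V d Q | s.mark (v s.nb) = 0}.card * Fintype.card Q ≤ (states V d Q).card := by
  rw [← Finset.card_univ (α := Q), ← Finset.card_product]
  refine Finset.card_le_card_of_injOn
    (fun p => ⟨p.1.nb, Function.update p.1.mark (v p.1.nb) p.2⟩) (fun p hp => ?_) ?_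
  · have hnb : IsPortNumbering p.1.nb :=
      mem_states.1 (Finset.mem_filter.1 (Finset.mem_product.1 (Finset.mem_coe.1 hp)).1).1
    exact Finset.mem_coe.2 (mem_states.2 hnb)
  · rintro ⟨⟨nb, κ⟩, c⟩ hp ⟨⟨nb', κ'⟩, c'⟩ hp' heq
    have hκ : κ (v nb) = 0 := (Finset.mem_filter.1 (Finset.mem_product.1 hp).1).2
    have hκ' : κ' (v nb') = 0 := (Finset.mem_filter.1 (Finset.mem_product.1 hp').1).2
    obtain ⟨rfl, hupdate⟩ := State.mk.inj heq
    have hc : c = c' := by simpa using congrFun hupdate (v nb)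
    have hmark : κ = κ' := by
      rw [← Function.update_eq_self (v nb) κ, ← Function.update_eq_self (v nb) κ', hκ, hκ']
      simpa only [Function.update_idem] using congrArg (Function.update · (v nb) 0) hupdate
    rw [hc, hmark]

/-- An upper bound for the probability that a fixed address below `M` is rejected: the first term
accounts for zero marks, the second one for conflicts. -/
noncomputable def rejectionBound (n d q M : ℕ) : ℝ := 1 / q + 2 * d ^ 2 * (M + 1) * q ^ 4 / n

lemma card_isRejected_le (hd : 3 ≤ d) (ht : 0 < t) (htd : t ≤ d) (r : V) (hm : m < M)
    (hM : 4 * (d + 1 + (M + 1)) ≤ Fintype.card V) :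
    ({s ∈ states V d Q | IsRejected s.nb s.mark r t M m}.card : ℝ) ≤
      (states V d Q).card * rejectionBound (Fintype.card V) d (Fintype.card Q) M := by
  have hn : (0 : ℝ) < Fintype.card V := Nat.cast_pos.2 (by omega)
  have hq : (0 : ℝ) < Fintype.card Q := Nat.cast_pos.2 (Fintype.card_pos_iff.2 ⟨0⟩)
  have hsub : {s ∈ states V d Q | IsRejected s.nb s.mark r t M m} ⊆
      {s ∈ states V d Q | s.mark (addrVertex s.nb r t m) = 0} ∪
        {s ∈ states V d Q | HasConflict s.nb s.mark r t M m} := fun s hs => by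
    obtain ⟨hstate, hrej⟩ := Finset.mem_filter.1 hs
    rw [← Finset.filter_or]
    exact Finset.mem_filter.2 ⟨hstate, hrej.mark_eq_zero_or_hasConflict ht hm⟩
  have hunion : ({s ∈ states V d Q | IsRejected s.nb s.mark r t M m}.card : ℝ) ≤
      {s ∈ states V d Q | s.mark (addrVertex s.nb r t m) = 0}.card +
        {s ∈ states V d Q | HasConflict s.nb s.mark r t M m}.card := by
    exact_mod_cast (Finset.card_le_card hsub).trans (Finset.card_union_le _ _)
  have hzero : ({s ∈ states V d Q | s.mark (addrVertex s.nb r t m) = 0}.card : ℝ) ≤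
      (states V d Q).card * (1 / Fintype.card Q) := by
    rw [mul_one_div, le_div_iff₀ hq]
    exact_mod_cast card_mark_eq_zero_mul_le (Q := Q) fun nb => addrVertex nb r t m
  have hconflict : ({s ∈ states V d Q | HasConflict s.nb s.mark r t M m}.card : ℝ) ≤
      (states V d Q).card * (2 * d ^ 2 * (M + 1) * Fintype.card Q ^ 4 / Fintype.card V) := by
    rw [← mul_div_assoc, le_div_iff₀ hn]
    exact_mod_cast card_hasConflict_mul_le (Q := Q) hd ht htd r m hM
  rw [rejectionBound, mul_add]
  linarith

lemma card_few_acceptedLeaves_mul_two_pow_le (ht : 0 < t) (r : V) (S : ℕ) {i : ℕ} (hi : i < t) :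
    {s ∈ states V d Q | 2 * (acceptedLeaves s.nb s.mark r t S i).card < 2 ^ S}.card * 2 ^ S ≤
      2 * ∑ k ∈ Finset.Ico (2 ^ S) (2 ^ (S + 1)), ∑ j ∈ Finset.range (S + 1),
        {s ∈ states V d Q |
          IsRejected s.nb s.mark r t (t * 2 ^ (S + 1)) (t * (k / 2 ^ j) + i)}.card := by
  let rejections (s : State V d Q) : ℕ := ∑ k ∈ Finset.Ico (2 ^ S) (2 ^ (S + 1)),
    {j ∈ Finset.range (S + 1) |
      IsRejected s.nb s.mark r t (t * 2 ^ (S + 1)) (t * (k / 2 ^ j) + i)}.card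
  have hfew : ∀ s ∈ {s ∈ states V d Q | 2 * (acceptedLeaves s.nb s.mark r t S i).card < 2 ^ S},
      2 ^ S ≤ 2 * rejections s := fun s hs => by
    have hlt := (Finset.mem_filter.1 hs).2
    have hle := two_pow_le_card_acceptedLeaves_add_sum (nb := s.nb) (κ := s.mark) (r := r)
      (S := S) ht hi
    change 2 ^ S ≤ _ + rejections s at hle
    omega
  calc _ ≤ ∑ s ∈ {s ∈ states V d Q | 2 * (acceptedLeaves s.nb s.mark r t S i).card < 2 ^ S},
        2 * rejections s := Finset.card_nsmul_le_sum _ _ _ hfew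
    _ ≤ ∑ s ∈ states V d Q, 2 * rejections s :=
      Finset.sum_le_sum_of_subset (Finset.filter_subset _ _)
    _ = _ := by
      simp only [rejections, Finset.card_filter, ← Finset.mul_sum]
      rw [Finset.sum_comm]
      exact congrArg _ (Finset.sum_congr rfl fun k _ => Finset.sum_comm)

theorem card_few_acceptedLeaves_le (hd : 3 ≤ d) (ht : 0 < t) (htd : t ≤ d) (r : V) {S i : ℕ}
    (hi : i < t) (hn : 4 * (d + 1 + (t * 2 ^ (S + 1) + 1)) ≤ Fintype.card V) :
    ({s ∈ states V d Q | 2 * (acceptedLeaves s.nb s.mark r t S i).card < 2 ^ S}.card : ℝ) ≤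
      (states V d Q).card * (2 * (S + 1) *
        rejectionBound (Fintype.card V) d (Fintype.card Q) (t * 2 ^ (S + 1))) := by
  set δ := rejectionBound (Fintype.card V) d (Fintype.card Q) (t * 2 ^ (S + 1))
  have hrej : ∀ k ∈ Finset.Ico (2 ^ S) (2 ^ (S + 1)), ∀ j ∈ Finset.range (S + 1),
      ({s ∈ states V d Q |
        IsRejected s.nb s.mark r t (t * 2 ^ (S + 1)) (t * (k / 2 ^ j) + i)}.card : ℝ) ≤
      (states V d Q).card * δ := fun k hk j _ => by
    refine card_isRejected_le hd ht htd r ?_ hn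
    calc t * (k / 2 ^ j) + i < t * (k / 2 ^ j + 1) := by rw [mul_add, mul_one]; gcongr
      _ ≤ t * 2 ^ (S + 1) := Nat.mul_le_mul_left t
        (Nat.succ_le_of_lt ((Nat.div_le_self _ _).trans_lt (Finset.mem_Ico.1 hk).2))
  refine le_of_mul_le_mul_right ?_ (show (0 : ℝ) < 2 ^ S by positivity)
  calc _ ≤ 2 * ∑ k ∈ Finset.Ico (2 ^ S) (2 ^ (S + 1)), ∑ j ∈ Finset.range (S + 1),
        ({s ∈ states V d Q |
          IsRejected s.nb s.mark r t (t * 2 ^ (S + 1)) (t * (k / 2 ^ j) + i)}.card : ℝ) := by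
        exact_mod_cast card_few_acceptedLeaves_mul_two_pow_le (Q := Q) (d := d) ht r S hi
    _ ≤ 2 * ∑ _k ∈ Finset.Ico (2 ^ S) (2 ^ (S + 1)), ∑ _j ∈ Finset.range (S + 1),
        ((states V d Q).card * δ : ℝ) := by
      gcongr with k hk j hj
      exact hrej k hk j hj
    _ = _ := by
      have hlevel : 2 ^ (S + 1) - 2 ^ S = 2 ^ S := by rw [pow_succ]; omega
      simp only [Finset.sum_const, Nat.card_Ico, Finset.card_range, nsmul_eq_mul, hlevel]
      push_cast
      ring

end RejectionCount

/-! ### Hitting the core from outside -/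

section Attached

variable {V Q : Type*} [Zero Q] {d t M i : ℕ} {nb nb' : V → Fin d → V} {κ κ' : V → Q} {r x : V}

/-- The vertices outside the core with a neighbour in the `i`-th branch of the core. -/
noncomputable def attached (nb : V → Fin d → V) (κ : V → Q) (r : V) (t M i : ℕ) : Finset V :=
  {m ∈ acceptedAddrs nb κ r t M | m % t = i}.biUnion (fun m => neighbors nb (addrVertex nb r t m)) \
    core nb κ r t M

lemma mem_attached : x ∈ attached nb κ r t M i ↔
    (∃ m ∈ acceptedAddrs nb κ r t M, m % t = i ∧ PortAdj nb (addrVertex nb r t m) x) ∧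
      x ∉ core nb κ r t M := by
  simp only [attached, Finset.mem_sdiff, Finset.mem_biUnion, Finset.mem_filter, mem_neighbors,
    and_assoc]

lemma card_acceptedLeaves_le_card_attached {S : ℕ} (hnb : IsPortNumbering nb) (hd : 3 ≤ d)
    (ht : 0 < t) (htd : t ≤ d) (hi : i < t) :
    (acceptedLeaves nb κ r t S i).card ≤ (attached nb κ r t (t * 2 ^ (S + 1)) i).card := by
  have hdiv : ∀ k, (t * k + i) / t = k := fun k => by
    rw [Nat.mul_add_div ht, Nat.div_eq_of_lt hi, add_zero]
  have hmod : ∀ k, (t * k + i) % t = i := fun k => by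
    rw [Nat.mul_add_mod, Nat.mod_eq_of_lt hi]
  refine Finset.card_le_card_of_injOn (fun k => coreChild nb (addrVertex nb r t (t * k + i))
    (addrParent nb r t (t * k + i)) 0) (fun k hk => ?_) (fun k hk k' hk' heq => ?_)
  · obtain ⟨hlevel, hmem⟩ := Finset.mem_filter.1 (Finset.mem_coe.1 hk)
    refine Finset.mem_coe.2 (mem_attached.2 ⟨⟨_, hmem, hmod k, portAdj_coreChild hd _ _ _⟩, ?_⟩)
    exact coreChild_notMem_core_of_last_level hnb hd ht htd hmem
      (by rw [hdiv]; exact (Finset.mem_Ico.1 hlevel).1) 0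
  · by_contra hne
    have hdisj := disjoint_outward (Finset.mem_filter.1 (Finset.mem_coe.1 hk)).2
      (Finset.mem_filter.1 (Finset.mem_coe.1 hk')).2
      fun h => hne (by rw [← hdiv k, h, hdiv])
    exact Finset.disjoint_left.1 hdisj (hnb.coreChild_mem_outward hd 0)
      (Eq.mpr (congrArg (· ∈ _) heq) (hnb.coreChild_mem_outward hd 0))

lemma IsModificationOn.attached_eq {T : Finset V} (h : IsModificationOn T nb κ nb' κ')
    (ht : 0 < t) (hT : Disjoint T (core nb κ r t M)) :
    attached nb' κ' r t M i = attached nb κ r t M i := by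
  rw [attached, attached, h.acceptedAddrs_eq ht hT, h.core_eq ht hT]
  congr 1
  refine Finset.biUnion_congr rfl fun m hm => ?_
  have hm := (Finset.mem_filter.1 hm).1
  rw [(h.agreeAt ht hT (isCandidate_of_mem_acceptedAddrs hm)).1, neighbors, neighbors,
    h.nb_addrVertex_eq hT hm]

lemma IsPortNumbering.exists_portAdj_notMem_core (hnb : IsPortNumbering nb) (hd : 2 ≤ d)
    (ht : 0 < t) (hx : x ∉ core nb κ r t M) : ∃ z, PortAdj nb x z ∧ z ∉ core nb κ r t M := by
  by_contra! hall
  have hadj0 : PortAdj nb x (portVertex nb x 0) := portAdj_portVertex x (by omega)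
  have hadj1 : PortAdj nb x (portVertex nb x 1) := portAdj_portVertex x (by omega)
  have heq := core_neighbor_unique hnb ht hx (hall _ hadj0) (hall _ hadj1) hadj0 hadj1
  exact zero_ne_one (hnb.portVertex_inj (by omega) (by omega) heq)

end Attached

section HittingSwitch

variable {V : Type*} {d : ℕ} (nb : V → Fin d → V) (C D : Finset V) (u : V) (i : ℕ) (f : Sym2 V)
  (K : ℕ)

/-- The frontier ports leading into `D`. -/
noncomputable def hits : Finset (V × Fin d) :=
  {ap ∈ frontierPorts nb C u i f K | nb ap.1 ap.2 ∈ D}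

/-- The vertices too close to the exploration, or on the avoided edge, to be switched freely. -/
noncomputable def excluded : Finset V :=
  closedNeighborhood nb (closedNeighborhood nb
    (closedNeighborhood nb (explorationBall nb C u i f K))) ∪ f.toFinset

lemma card_excluded_le : (excluded nb C u i f K).card ≤ 5 ^ K * (d + 1) ^ 3 + 2 := by
  have hf : f.toFinset.card ≤ 2 := by rw [Sym2.card_toFinset]; split_ifs <;> omega
  refine (Finset.card_union_le _ _).trans (Nat.add_le_add ?_ hf)
  calc _ ≤ (explorationBall nb C u i f K).card * (d + 1) * (d + 1) * (d + 1) := by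
        refine (card_closedNeighborhood_le _ _).trans (Nat.mul_le_mul_right _ ?_)
        refine (card_closedNeighborhood_le _ _).trans (Nat.mul_le_mul_right _ ?_)
        exact card_closedNeighborhood_le _ _
    _ = (explorationBall nb C u i f K).card * (d + 1) ^ 3 := by ring
    _ ≤ _ := Nat.mul_le_mul_right _ (card_explorationBall_le K)

/-- The data of a switching that redirects the frontier port `(a, p)` to the vertex `l`, at the
expense of the edge between `l` and `z`. -/
structure IsHittingData (l z a : V) (p : Fin d) : Prop where
  start_notMem : u ∉ C
  target_notMem : l ∉ C
  target_notMem_excluded : l ∉ excluded nb C u i f K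
  adj : PortAdj nb l z
  notMem : z ∉ C
  mem_frontierPorts : (a, p) ∈ frontierPorts nb C u i f K

namespace IsHittingData

variable {nb C D u i f K} {l z a v : V} {p p' : Fin d}

lemma mem_ball (h : IsHittingData nb C u i f K l z a p) : a ∈ explorationBall nb C u i f K :=
  (RegularIST.mem_frontierPorts.1 h.mem_frontierPorts).1.1

lemma target_notMem_closedNeighborhood (h : IsHittingData nb C u i f K l z a p) :
    l ∉ closedNeighborhood nb (closedNeighborhood nb
      (closedNeighborhood nb (explorationBall nb C u i f K))) :=
  fun hl => h.target_notMem_excluded (Finset.mem_union_left _ hl)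

lemma target_notMem_ball (h : IsHittingData nb C u i f K l z a p) :
    l ∉ explorationBall nb C u i f K := fun hl =>
  h.target_notMem_closedNeighborhood <| subset_closedNeighborhood <| subset_closedNeighborhood <|
    subset_closedNeighborhood hl

lemma not_portAdj_target (h : IsHittingData nb C u i f K l z a p) : ¬ PortAdj nb a l := fun hal =>
  h.target_notMem_closedNeighborhood <| subset_closedNeighborhood <| subset_closedNeighborhood <|
    mem_closedNeighborhood_of_portAdj h.mem_ball hal

lemma notMem_closedNeighborhood (h : IsHittingData nb C u i f K l z a p)
    (hnb : IsPortNumbering nb) :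
    z ∉ closedNeighborhood nb (closedNeighborhood nb (explorationBall nb C u i f K)) := fun hz =>
  h.target_notMem_closedNeighborhood <|
    mem_closedNeighborhood_of_portAdj hz (hnb.portAdj_symm h.adj)

lemma isValid (h : IsHittingData nb C u i f K l z a p) (hnb : IsPortNumbering nb) :
    (⟨l, z, a, nb a p⟩ : Switch V).IsValid nb where
  adj_yz := h.adj
  adj_xw := ⟨p, rfl⟩
  ne_yx := fun hla : l = a => h.target_notMem_ball (hla ▸ h.mem_ball)
  ne_zw := fun hz : z = nb a p => h.notMem_closedNeighborhood hnb <| subset_closedNeighborhood <|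
    mem_closedNeighborhood_of_portAdj h.mem_ball ⟨p, hz.symm⟩
  not_adj_yx := fun hla => h.not_portAdj_target (hnb.portAdj_symm hla)
  not_adj_zw := fun hz => h.notMem_closedNeighborhood hnb <|
    mem_closedNeighborhood_of_portAdj (mem_closedNeighborhood_of_portAdj h.mem_ball ⟨p, rfl⟩)
      (hnb.portAdj_symm hz)

lemma disjoint_support (h : IsHittingData nb C u i f K l z a p) :
    Disjoint (⟨l, z, a, nb a p⟩ : Switch V).support C := by
  refine Finset.disjoint_left.2 fun v hv => ?_
  rcases Switch.mem_support.1 hv with rfl | rfl | rfl | rfl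
  exacts [h.target_notMem, h.notMem, notMem_of_mem_explorationBall h.start_notMem h.mem_ball,
    (RegularIST.mem_frontierPorts.1 h.mem_frontierPorts).2.1]

lemma apply_apply (h : IsHittingData nb C u i f K l z a p) (hnb : IsPortNumbering nb)
    (p' : Fin d) : (⟨l, z, a, nb a p⟩ : Switch V).apply nb a p' =
      Equiv.swap (nb a p) l (nb a p') := by
  have hnodup := (h.isValid hnb).isNondegenerate hnb
  simp only [Switch.IsNondegenerate, List.nodup_cons, List.mem_cons, not_or] at hnodup
  rw [Switch.apply, Switch.perm, if_neg (Ne.symm hnodup.1.2.1), if_neg (Ne.symm hnodup.2.1.1),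
    if_pos rfl]

lemma apply_port (h : IsHittingData nb C u i f K l z a p) (hnb : IsPortNumbering nb) :
    (⟨l, z, a, nb a p⟩ : Switch V).apply nb a p = l := by
  rw [h.apply_apply hnb, Equiv.swap_apply_left]

lemma apply_of_ne (h : IsHittingData nb C u i f K l z a p) (hnb : IsPortNumbering nb)
    (hv : v ∈ explorationBall nb C u i f K) (hne : (v, p') ≠ (a, p)) :
    (⟨l, z, a, nb a p⟩ : Switch V).apply nb v p' = nb v p' := by
  rcases eq_or_ne v a with rfl | hva
  · rw [h.apply_apply hnb, Equiv.swap_apply_of_ne_of_ne]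
    · exact fun hp => hne (by rw [hnb.inj _ hp])
    · exact fun hl => h.not_portAdj_target ⟨p', hl⟩
  · refine congrFun (Switch.apply_of_notMem_support fun hsupp => ?_) p'
    rcases Switch.mem_support.1 hsupp with rfl | rfl | rfl | rfl
    · exact h.target_notMem_ball hv
    · exact h.notMem_closedNeighborhood hnb
        (subset_closedNeighborhood (subset_closedNeighborhood hv))
    · exact hva rfl
    · exact (RegularIST.mem_frontierPorts.1 h.mem_frontierPorts).2.2.1 hv

lemma notMem_ball_of_lt (h : IsHittingData nb C u i f K l z a p) {j : ℕ} (hj : j < K) :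
    a ∉ explorationBall nb C u i f j := by
  obtain ⟨⟨-, hp⟩, hC, hball, hf⟩ := RegularIST.mem_frontierPorts.1 h.mem_frontierPorts
  exact fun ha => hball <| explorationBall_mono hj <| mem_explorationBall_succ.2 <|
    Or.inr ⟨hC, a, ha, Finset.mem_image_of_mem _ hp, hf⟩

lemma explorationBall_apply (h : IsHittingData nb C u i f K l z a p) (hnb : IsPortNumbering nb)
    {j : ℕ} (hj : j ≤ K) : explorationBall ((⟨l, z, a, nb a p⟩ : Switch V).apply nb) C u i f j =
      explorationBall nb C u i f j := by
  induction j with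
  | zero => rfl
  | succ j ih =>
    ext x
    rw [mem_explorationBall_succ, mem_explorationBall_succ, ih (by omega)]
    refine or_congr_right (and_congr_right fun _ => exists_congr fun c =>
      and_congr_right fun hc => ?_)
    have hnbc : (⟨l, z, a, nb a p⟩ : Switch V).apply nb c = nb c := funext fun p' =>
      h.apply_of_ne hnb (explorationBall_mono (by omega) hc) fun heq =>
        h.notMem_ball_of_lt (j := j) (by omega) ((Prod.mk.inj heq).1 ▸ hc)
    rw [blockNeighbors, blockNeighbors, hnbc]

lemma frontierPorts_apply (h : IsHittingData nb C u i f K l z a p) (hnb : IsPortNumbering nb) :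
    frontierPorts ((⟨l, z, a, nb a p⟩ : Switch V).apply nb) C u i f K =
      frontierPorts nb C u i f K := by
  ext ⟨c, p'⟩
  rw [RegularIST.mem_frontierPorts, RegularIST.mem_frontierPorts,
    h.explorationBall_apply hnb le_rfl]
  refine and_congr_right fun hc => ?_
  by_cases hcp : (c, p') = (a, p)
  · obtain ⟨rfl, rfl⟩ := Prod.mk.inj hcp
    simp only [h.apply_port hnb]
    refine iff_of_true ⟨h.target_notMem, h.target_notMem_ball, fun hf => ?_⟩
      (RegularIST.mem_frontierPorts.1 h.mem_frontierPorts).2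
    exact h.target_notMem_excluded (Finset.mem_union_right _
      (Sym2.mem_toFinset.2 (hf ▸ Sym2.mem_mk_right _ _)))
  · simp only [h.apply_of_ne hnb hc.1 hcp]

lemma hits_apply (h : IsHittingData nb C u i f K l z a p) (hnb : IsPortNumbering nb)
    (hl : l ∈ D) : hits ((⟨l, z, a, nb a p⟩ : Switch V).apply nb) C D u i f K =
      insert (a, p) (hits nb C D u i f K) := by
  ext ⟨c, p'⟩
  rw [Finset.mem_insert, hits, hits, Finset.mem_filter, Finset.mem_filter,
    h.frontierPorts_apply hnb]
  by_cases hcp : (c, p') = (a, p)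
  · obtain ⟨rfl, rfl⟩ := Prod.mk.inj hcp
    exact iff_of_true ⟨h.mem_frontierPorts, by rwa [h.apply_port hnb]⟩ (Or.inl rfl)
  · rw [or_iff_right hcp]
    refine and_congr_right fun hc => ?_
    simp only [h.apply_of_ne hnb (RegularIST.mem_frontierPorts.1 hc).1.1 hcp]

end IsHittingData

end HittingSwitch

section HitCounting

variable {V : Type*} [Fintype V] {d : ℕ} {Q : Type*} [Zero Q]

/-- The switchings that may have produced one of the hits of `s`. -/
noncomputable def hitSwitches (r u : V) (t M i : ℕ) (f : Sym2 V) (K : ℕ) (s : State V d Q) :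
    Finset (Switch V) :=
  (hits s.nb (core s.nb s.mark r t M) (attached s.nb s.mark r t M i) u i f K ×ˢ
    (Finset.univ : Finset (V × Fin d))).image
    fun w => ⟨s.nb w.1.1 w.1.2, w.2.1, w.1.1, s.nb w.2.1 w.2.2⟩

variable {r u : V} {t M i K a b x : ℕ} {f : Sym2 V}

lemma mem_hitSwitches_act (ht : 0 < t) {s : State V d Q} (hnb : IsPortNumbering s.nb)
    {l z c : V} {p : Fin d} (h : IsHittingData s.nb (core s.nb s.mark r t M) u i f K l z c p)
    (hl : l ∈ attached s.nb s.mark r t M i) :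
    ⟨l, z, c, s.nb c p⟩ ∈
      hitSwitches r u t M i f K ((⟨l, z, c, s.nb c p⟩ : Switch V).act s) := by
  have hmod := Switch.isModificationOn (⟨l, z, c, s.nb c p⟩ : Switch V) s
  obtain ⟨p', hp'⟩ : PortAdj ((⟨l, z, c, s.nb c p⟩ : Switch V).apply s.nb) z (s.nb c p) :=
    ((h.isValid hnb).portAdj_apply hnb _ _).2 (Or.inr (Or.inr rfl))
  rw [hitSwitches, hmod.core_eq ht h.disjoint_support, hmod.attached_eq ht h.disjoint_support]
  refine Finset.mem_image.2 ⟨((c, p), (z, p')), Finset.mem_product.2 ⟨?_, Finset.mem_univ _⟩, ?_⟩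
  · exact (h.hits_apply hnb hl).symm ▸ Finset.mem_insert_self _ _
  · simp only [Switch.act, h.apply_port hnb, hp']

variable [Fintype Q]

variable (d Q) in
/-- The states with at least `a` vertices attached to the `i`-th branch, at least `b` frontier
ports in the exploration of radius `K` from `u`, and exactly `x` hits. -/
noncomputable def statesWithHits (r u : V) (t M i : ℕ) (f : Sym2 V) (K a b x : ℕ) :
    Finset (State V d Q) :=
  {s ∈ states V d Q | u ∉ core s.nb s.mark r t M ∧ a ≤ (attached s.nb s.mark r t M i).card ∧
    b ≤ (frontierPorts s.nb (core s.nb s.mark r t M) u i f K).card ∧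
    (hits s.nb (core s.nb s.mark r t M) (attached s.nb s.mark r t M i) u i f K).card = x}

lemma act_mem_statesWithHits (ht : 0 < t) {s : State V d Q}
    (hs : s ∈ statesWithHits d Q r u t M i f K a b x) {l z c : V} {p : Fin d}
    (h : IsHittingData s.nb (core s.nb s.mark r t M) u i f K l z c p)
    (hl : l ∈ attached s.nb s.mark r t M i) (hp : s.nb c p ∉ attached s.nb s.mark r t M i) :
    (⟨l, z, c, s.nb c p⟩ : Switch V).act s ∈ statesWithHits d Q r u t M i f K a b (x + 1) := by
  obtain ⟨hsnb, hu, ha, hb, hx⟩ := Finset.mem_filter.1 hs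
  have hnb := mem_states.1 hsnb
  have hmod := Switch.isModificationOn (⟨l, z, c, s.nb c p⟩ : Switch V) s
  refine Finset.mem_filter.2 ⟨mem_states.2 ((h.isValid hnb).isPortNumbering_apply hnb), ?_⟩
  rw [hmod.core_eq ht h.disjoint_support, hmod.attached_eq ht h.disjoint_support]
  simp only [Switch.act]
  rw [h.frontierPorts_apply hnb, h.hits_apply hnb hl, Finset.card_insert_of_notMem, hx]
  · exact ⟨hu, ha, hb, rfl⟩
  · exact fun hmem => hp (Finset.mem_filter.1 hmem).2

lemma mul_le_four_mul_card_of_mem_statesWithHits {s : State V d Q}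
    (hs : s ∈ statesWithHits d Q r u t M i f K a b x)
    (ha : 2 * (5 ^ K * (d + 1) ^ 3 + 2) ≤ a) (hb : 2 * x ≤ b) :
    a * b ≤ 4 * ((attached s.nb s.mark r t M i \ excluded s.nb (core s.nb s.mark r t M) u i f K) ×ˢ
      (frontierPorts s.nb (core s.nb s.mark r t M) u i f K \
        hits s.nb (core s.nb s.mark r t M) (attached s.nb s.mark r t M i) u i f K)).card := by
  obtain ⟨-, -, has, hbs, hx⟩ := Finset.mem_filter.1 hs
  have hexcluded := card_excluded_le s.nb (core s.nb s.mark r t M) u i f K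
  have htargets := Finset.le_card_sdiff (excluded s.nb (core s.nb s.mark r t M) u i f K)
    (attached s.nb s.mark r t M i)
  have hports := Finset.le_card_sdiff
    (hits s.nb (core s.nb s.mark r t M) (attached s.nb s.mark r t M i) u i f K)
    (frontierPorts s.nb (core s.nb s.mark r t M) u i f K)
  rw [Finset.card_product, show 4 = 2 * 2 from rfl, mul_mul_mul_comm]
  exact Nat.mul_le_mul (by omega) (by omega)

lemma card_statesWithHits_mul_le (hd : 2 ≤ d) (ht : 0 < t)
    (ha : 2 * (5 ^ K * (d + 1) ^ 3 + 2) ≤ a) (hb : 2 * x ≤ b) :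
    (statesWithHits d Q r u t M i f K a b x).card * (a * b) ≤
      4 * ((statesWithHits d Q r u t M i f K a b (x + 1)).card *
        ((x + 1) * (Fintype.card V * d)) * Fintype.card Q ^ 4) := by
  let C (s : State V d Q) := core s.nb s.mark r t M
  let D (s : State V d Q) := attached s.nb s.mark r t M i
  have hexists : ∀ (s : State V d Q) (l : V), IsPortNumbering s.nb → l ∉ C s →
      ∃ z, PortAdj s.nb l z ∧ z ∉ C s :=
    fun s l hnb hl => hnb.exists_portAdj_notMem_core hd ht hl
  have : Nonempty V := ⟨r⟩
  choose! z hlz hz using hexists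
  refine card_mul_le_of_switching _ _
    (fun s => ((D s \ excluded s.nb (C s) u i f K) ×ˢ
      (frontierPorts s.nb (C s) u i f K \ hits s.nb (C s) (D s) u i f K)).image
      fun w => ⟨w.1, z s w.1, w.2.1, s.nb w.2.1 w.2.2⟩)
    (hitSwitches r u t M i f K) (fun s hs => ?_) (fun s hs τ hτ => ?_) (fun s hs => ?_)
  · rw [Finset.card_image_of_injective]
    · exact mul_le_four_mul_card_of_mem_statesWithHits hs ha hb
    · rintro ⟨l, c, p⟩ ⟨l', c', p'⟩ heq
      simp only [Switch.mk.injEq] at heq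
      obtain ⟨rfl, -, rfl, hp⟩ := heq
      rw [(mem_states.1 (Finset.mem_filter.1 hs).1).inj _ hp]
  · obtain ⟨⟨l, c, p⟩, hw, rfl⟩ := Finset.mem_image.1 hτ
    simp only [Finset.mem_product, Finset.mem_sdiff] at hw
    obtain ⟨⟨hl, hlE⟩, hcp, hhit⟩ := hw
    obtain ⟨hsnb, hu, -⟩ := Finset.mem_filter.1 hs
    have hnb := mem_states.1 hsnb
    have hlC := (mem_attached.1 hl).2
    have hdata : IsHittingData s.nb (C s) u i f K l (z s l) c p :=
      ⟨hu, hlC, hlE, hlz s l hnb hlC, hz s l hnb hlC, hcp⟩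
    exact ⟨(hdata.isValid hnb).isNondegenerate hnb, act_mem_statesWithHits ht hs hdata hl
      fun hp => hhit (Finset.mem_filter.2 ⟨hcp, hp⟩), mem_hitSwitches_act ht hnb hdata hl⟩
  · refine Finset.card_image_le.trans_eq ?_
    rw [Finset.card_product, (Finset.mem_filter.1 hs).2.2.2.2, Finset.card_univ,
      Fintype.card_prod, Fintype.card_fin]

theorem card_statesWithHits_zero_le (hd : 2 ≤ d) (ht : 0 < t) {m : ℕ} (hm : 2 * m ≤ b)
    (hb : 0 < b) (ha : 2 * (5 ^ K * (d + 1) ^ 3 + 2) ≤ a) :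
    ((statesWithHits d Q r u t M i f K a b 0).card : ℝ) ≤
      (4 * m * Fintype.card V * d * Fintype.card Q ^ 4 / (a * b)) ^ m * (states V d Q).card := by
  set ρ : ℝ := 4 * m * Fintype.card V * d * Fintype.card Q ^ 4 / (a * b) with hρ
  have ha0 : 0 < a := by omega
  have hstep : ∀ x < m, ((statesWithHits d Q r u t M i f K a b x).card : ℝ) ≤
      ρ * (statesWithHits d Q r u t M i f K a b (x + 1)).card := by
    intro x hx
    have hcount := card_statesWithHits_mul_le (Q := Q) (r := r) (u := u) (M := M) (i := i)
      (f := f) hd ht ha (show 2 * x ≤ b by omega)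
    have hcount : ((statesWithHits d Q r u t M i f K a b x).card : ℝ) * (a * b) ≤
        4 * ((statesWithHits d Q r u t M i f K a b (x + 1)).card *
          (((x + 1 : ℕ) : ℝ) * (Fintype.card V * d)) * Fintype.card Q ^ 4) := by
      exact_mod_cast hcount
    rw [hρ, div_mul_eq_mul_div, le_div_iff₀ (by positivity)]
    calc _ ≤ _ := hcount
      _ ≤ 4 * ((statesWithHits d Q r u t M i f K a b (x + 1)).card *
          ((m : ℝ) * (Fintype.card V * d)) * Fintype.card Q ^ 4) := by gcongr; exact hx
      _ = _ := by ring
  have hiter : ∀ x ≤ m, ((statesWithHits d Q r u t M i f K a b 0).card : ℝ) ≤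
      ρ ^ x * (statesWithHits d Q r u t M i f K a b x).card := by
    intro x
    induction x with
    | zero => simp
    | succ x ih =>
      intro hx
      calc _ ≤ _ := ih (by omega)
        _ ≤ ρ ^ x * (ρ * (statesWithHits d Q r u t M i f K a b (x + 1)).card) := by
          gcongr; exact hstep x hx
        _ = _ := by ring
  refine (hiter m le_rfl).trans ?_
  gcongr
  exact Finset.filter_subset _ _

end HitCounting

/-! ### Scaffolds in good states -/

section Reaching

variable {V : Type*} {d i j k m K : ℕ} {nb : V → Fin d → V} {C D : Finset V} {u x : V} {f : Sym2 V}
  {H : SimpleGraph V}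

/-- Some walk of `H` of length `j` from `u` to `D` avoids `C` and uses only ports of the `i`-th
block. -/
def ReachesIn (H : SimpleGraph V) (nb : V → Fin d → V) (C D : Finset V) (i : ℕ) : ℕ → V → Prop
  | 0, u => u ∉ C ∧ u ∈ D
  | j + 1, u => u ∉ C ∧ ∃ y ∈ blockNeighbors nb i u, H.Adj u y ∧ ReachesIn H nb C D i j y

/-- The length of a shortest walk as in `ReachesIn`, and `0` if there is none. -/
noncomputable def reachTime (H : SimpleGraph V) (nb : V → Fin d → V) (C D : Finset V) (i : ℕ)
    (u : V) : ℕ :=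
  sInf {j | ReachesIn H nb C D i j u}

lemma ReachesIn.notMem (h : ReachesIn H nb C D i j u) : u ∉ C := by
  cases j <;> exact h.1

lemma ReachesIn.reachTime_le (h : ReachesIn H nb C D i j u) : reachTime H nb C D i u ≤ j :=
  Nat.sInf_le h

lemma ReachesIn.mem_or_exists_reachTime_lt (h : ReachesIn H nb C D i j u) :
    u ∈ D ∨ ∃ y ∈ blockNeighbors nb i u, y ∉ C ∧ H.Adj u y ∧
      reachTime H nb C D i y < reachTime H nb C D i u := by
  have hmin : ReachesIn H nb C D i (reachTime H nb C D i u) u := 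
    Nat.sInf_mem (s := {j | ReachesIn H nb C D i j u}) ⟨j, h⟩
  rcases hk : reachTime H nb C D i u with _ | k <;> rw [hk] at hmin
  · exact Or.inl hmin.2
  · obtain ⟨-, y, hy, hadj, hreach⟩ := hmin
    exact Or.inr ⟨y, hy, hreach.notMem, hadj, Nat.lt_succ_of_le hreach.reachTime_le⟩

lemma IsExplorable.exists_reachesIn (h : IsExplorable nb C u f H K) (hj : j ≤ K + 1)
    (hx : x ∈ explorationBall nb C u i f j) (hm : ReachesIn H nb C D i m x) :
    ∃ k ≤ m + j, ReachesIn H nb C D i k u := by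
  induction j generalizing x m with
  | zero =>
    obtain rfl := Finset.mem_singleton.1 hx
    exact ⟨m, le_rfl, hm⟩
  | succ j ih =>
    rcases mem_explorationBall_succ.1 hx with hx | ⟨-, a, ha, hax, hf⟩
    · obtain ⟨k, hk, hreach⟩ := ih (by omega) hx hm
      exact ⟨k, by omega, hreach⟩
    · have hadj : H.Adj a x := h.adj (by omega) ha (portAdj_of_mem_blockNeighbors hax) hf
      obtain ⟨k, hk, hreach⟩ := ih (m := m + 1) (by omega) ha
        ⟨notMem_of_mem_explorationBall h.notMem ha, x, hax, hadj, hm⟩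
      exact ⟨k, by omega, hreach⟩

lemma IsExplorable.exists_reachesIn_of_hits_nonempty (h : IsExplorable nb C u f H K)
    (hhits : (hits nb C D u i f K).Nonempty) : ∃ k ≤ K + 1, ReachesIn H nb C D i k u := by
  obtain ⟨⟨a, p⟩, hap⟩ := hhits
  obtain ⟨hfrontier, hD⟩ := Finset.mem_filter.1 hap
  obtain ⟨⟨ha, hp⟩, hC, -, hf⟩ := mem_frontierPorts.1 hfrontier
  have hball : nb a p ∈ explorationBall nb C u i f (K + 1) :=
    mem_explorationBall_succ.2 (Or.inr ⟨hC, a, ha, Finset.mem_image_of_mem _ hp, hf⟩)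
  simpa only [zero_add] using h.exists_reachesIn le_rfl hball (m := 0) ⟨hC, hD⟩

lemma IsPortNumbering.eq_of_mem_blockNeighbors (hnb : IsPortNumbering nb)
    (hi : x ∈ blockNeighbors nb i u) (hj : x ∈ blockNeighbors nb j u) : i = j := by
  obtain ⟨p, hp, hpx⟩ := Finset.mem_image.1 hi
  obtain ⟨q, hq, hqx⟩ := Finset.mem_image.1 hj
  obtain rfl := hnb.inj u (hpx.trans hqx.symm)
  simp only [portBlock, Finset.mem_filter] at hp hq
  omega

lemma exists_edge_of_forall_ne_adj {G : SimpleGraph V} (hsparse : IsLocallySparse G (6 * K + 14))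
    (hH : Maximal (fun H => H ≤ G ∧ ((2 * K + 7 : ℕ) : ℕ∞) ≤ H.egirth) H) (u : V) :
    ∃ f : Sym2 V, ∀ {a x} (p : H.Walk u a), p.length ≤ K → G.Adj a x → s(a, x) ≠ f →
      H.Adj a x := by
  by_cases hmissing : ∃ a x, G.Adj a x ∧ ¬ H.Adj a x ∧ ∃ p : H.Walk u a, p.length ≤ K
  · obtain ⟨a, x, hG, hnotH, p, hp⟩ := hmissing
    refine ⟨s(a, x), fun q hq hG' hne => by_contra fun hnotH' => hne ?_⟩
    exact edge_eq_of_notAdj_maximal hsparse hH hG' hnotH' hG hnotH q p hq hp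
  · push Not at hmissing
    exact ⟨s(u, u), fun {a x} p hp hG _ => by_contra fun hnotH =>
      absurd (hmissing a x hG hnotH p) (not_lt.2 hp)⟩

end Reaching

section GoodState

variable {V Q : Type*} [Zero Q] {d t M i K : ℕ} {nb : V → Fin d → V} {κ : V → Q} {r c u : V}
  {H : SimpleGraph V}

/-- The accepted address of a core vertex other than the root, and `0` for all other vertices. -/
noncomputable def addrOf (nb : V → Fin d → V) (κ : V → Q) (r : V) (t M : ℕ) (c : V) : ℕ :=
  if h : ∃ m ∈ acceptedAddrs nb κ r t M, addrVertex nb r t m = c then h.choose else 0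

lemma addrOf_spec (hc : c ∈ core nb κ r t M) (hcr : c ≠ r) :
    addrOf nb κ r t M c ∈ acceptedAddrs nb κ r t M ∧
      addrVertex nb r t (addrOf nb κ r t M c) = c := by
  have h := (mem_core.1 hc).resolve_left hcr
  rw [addrOf, dif_pos h]
  exact h.choose_spec

lemma addrOf_addrVertex (hnb : IsPortNumbering nb) (hd : 3 ≤ d) (ht : 0 < t) (htd : t ≤ d) {m : ℕ}
    (hm : m ∈ acceptedAddrs nb κ r t M) : addrOf nb κ r t M (addrVertex nb r t m) = m := by
  have hspec := addrOf_spec (addrVertex_mem_core hm)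
    (addrVertex_ne_root hnb hd ht htd (isCandidate_of_mem_acceptedAddrs hm))
  exact addrVertex_injOn hnb hd ht htd hspec.1 hm hspec.2

lemma addrOf_addrParent (hnb : IsPortNumbering nb) (hd : 3 ≤ d) (ht : 0 < t) (htd : t ≤ d) {m : ℕ}
    (hm : m ∈ acceptedAddrs nb κ r t M) (hne : addrParent nb r t m ≠ r) :
    addrOf nb κ r t M (addrParent nb r t m) = parentAddr t m := by
  have hlevel : ¬ m / t ≤ 1 := fun h => hne (addrParent_of_le h)
  rw [addrParent_of_lt ht (not_le.1 hlevel)]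
  exact addrOf_addrVertex hnb hd ht htd
    ((isCandidate_of_mem_acceptedAddrs hm).resolve_left hlevel)

lemma le_card_exits (hnb : IsPortNumbering nb) (ht : 0 < t) (htd : 4 * t ≤ d)
    (hc : c ∈ core nb κ r t M) (hcr : c ≠ r)
    (hH : ∀ x y, PortAdj nb c x → ¬ H.Adj c x → PortAdj nb c y → ¬ H.Adj c y → x = y) :
    t ≤ {x ∈ neighbors nb c | x ∉ core nb κ r t M ∧ H.Adj c x}.card + 1 := by
  obtain ⟨hm, hv⟩ := addrOf_spec hc hcr
  set p := addrParent nb r t (addrOf nb κ r t M c)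
  have hmissing : {x ∈ neighbors nb c | ¬ H.Adj c x}.card ≤ 1 := by
    refine Finset.card_le_one.2 fun x hx y hy => ?_
    simp only [Finset.mem_filter, mem_neighbors] at hx hy
    exact hH x y hx.1 hx.2 hy.1 hy.2
  have hcover : neighbors nb c ⊆ {x ∈ neighbors nb c | x ∉ core nb κ r t M ∧ H.Adj c x} ∪
      {x ∈ neighbors nb c | ¬ H.Adj c x} ∪ {p, coreChild nb c p 0, coreChild nb c p 1} := by
    intro x hx
    have hcore : x ∈ core nb κ r t M →
        x ∈ ({p, coreChild nb c p 0, coreChild nb c p 1} : Finset V) := fun hxC => by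
      have h := eq_parent_or_child_of_mem_core hnb (by omega) ht (by omega) hm
        (hv.symm ▸ mem_neighbors.1 hx) hxC
      rw [hv] at h
      simpa only [Finset.mem_insert, Finset.mem_singleton] using h
    simp only [Finset.mem_union, Finset.mem_filter]
    tauto
  have hcard := Finset.card_le_card hcover
  rw [hnb.card_neighbors] at hcard
  have hunion := hcard.trans (Finset.card_union_le _ _)
  have hunion' := Finset.card_union_le
    {x ∈ neighbors nb c | x ∉ core nb κ r t M ∧ H.Adj c x} {x ∈ neighbors nb c | ¬ H.Adj c x}
  have hthree : ({p, coreChild nb c p 0, coreChild nb c p 1} : Finset V).card ≤ 3 :=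
    Finset.card_le_three
  omega

lemma exists_exits (hnb : IsPortNumbering nb) (ht : 0 < t) (htd : 4 * t ≤ d)
    (hc : c ∈ core nb κ r t M) (hcr : c ≠ r)
    (hH : ∀ x y, PortAdj nb c x → ¬ H.Adj c x → PortAdj nb c y → ¬ H.Adj c y → x = y) (j : Fin t) :
    ∃ e : Fin t → V, (∀ k ≠ j, e k ∉ core nb κ r t M ∧ H.Adj c (e k)) ∧
      Set.InjOn e {k | k ≠ j} := by
  have : Nonempty V := ⟨c⟩
  have hle : Set.encard {k | k ≠ j} ≤
      Set.encard (↑{x ∈ neighbors nb c | x ∉ core nb κ r t M ∧ H.Adj c x} : Set V) := by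
    have hcard : Set.encard {k | k ≠ j} + 1 = t := by
      rw [show {k | k ≠ j} = Set.univ \ {j} by ext; simp,
        Set.encard_sdiff_singleton_add_one (Set.mem_univ j),
        Set.encard_univ, ENat.card_eq_coe_fintype_card, Fintype.card_fin]
    rw [← ENat.add_le_add_iff_right ENat.one_ne_top, hcard, Set.encard_coe_eq_coe_finsetCard]
    exact_mod_cast le_card_exits hnb ht htd hc hcr hH
  obtain ⟨e, he, hinj⟩ := (Set.toFinite _).exists_injOn_of_encard_le hle
  refine ⟨e, fun k hk => ?_, hinj⟩
  have hmem := Finset.mem_coe.1 (Set.mem_preimage.1 (he hk))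
  exact (Finset.mem_filter.1 hmem).2

/-- Every exploration from a vertex off the core that leaves its ball through at least `2 ^ K` ports
hits each branch of the core. -/
def IsHitting (nb : V → Fin d → V) (κ : V → Q) (r : V) (t M K : ℕ) : Prop :=
  ∀ u ∉ core nb κ r t M, ∀ i < t, ∀ f : Sym2 V,
    2 ^ K ≤ (frontierPorts nb (core nb κ r t M) u i f (K + 1)).card →
      (hits nb (core nb κ r t M) (attached nb κ r t M i) u i f (K + 1)).Nonempty

lemma IsHitting.exists_reachesIn (h : IsHitting nb κ r t M K) (hnb : IsPortNumbering nb)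
    (ht : 0 < t) (htd : 4 * t ≤ d) (hsparse : IsLocallySparse (portGraph nb) (6 * (K + 1) + 14))
    (hH : Maximal (fun H => H ≤ portGraph nb ∧ ((2 * (K + 1) + 7 : ℕ) : ℕ∞) ≤ H.egirth) H)
    (hu : u ∉ core nb κ r t M) (hi : i < t) :
    ∃ j ≤ K + 2, ReachesIn H nb (core nb κ r t M) (attached nb κ r t M i) i j u := by
  obtain ⟨f, hf⟩ := exists_edge_of_forall_ne_adj hsparse hH u
  have hexpl : IsExplorable nb (core nb κ r t M) u f H (K + 1) :=
    { notMem := hu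
      adj_of_near := fun p hp hadj => hf p hp (hnb.portGraph_adj.2 hadj)
      path_unique := fun hp hq hpl hql => path_unique_of_le_egirth hH.prop.2 hp hq (by omega)
      neighbor_unique := fun v hv x hx y hy => core_neighbor_unique hnb ht hv hx hy }
  exact hexpl.exists_reachesIn_of_hits_nonempty
    (h u hu i hi f (hexpl.two_pow_le_card_frontierPorts hnb (by omega)))

lemma IsHitting.exists_route (h : IsHitting nb κ r t M K) (hnb : IsPortNumbering nb)
    (ht : 0 < t) (htd : 4 * t ≤ d) (hsparse : IsLocallySparse (portGraph nb) (6 * (K + 1) + 14))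
    (hH : Maximal (fun H => H ≤ portGraph nb ∧ ((2 * (K + 1) + 7 : ℕ) : ℕ∞) ≤ H.egirth) H)
    (hu : u ∉ core nb κ r t M) (hi : i < t) :
    ∃ y, (y ∈ core nb κ r t M ∧ y ≠ r ∧ addrOf nb κ r t M y % t = i ∧ (portGraph nb).Adj u y) ∨
      (y ∉ core nb κ r t M ∧ y ∈ blockNeighbors nb i u ∧ H.Adj u y ∧
        reachTime H nb (core nb κ r t M) (attached nb κ r t M i) i y <
          reachTime H nb (core nb κ r t M) (attached nb κ r t M i) i u) := by
  obtain ⟨j, -, hreach⟩ := h.exists_reachesIn hnb ht htd hsparse hH hu hi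
  rcases hreach.mem_or_exists_reachTime_lt with hmem | ⟨y, hy, hyC, hadj, hlt⟩
  · obtain ⟨⟨m, hm, hmi, hadj⟩, -⟩ := mem_attached.1 hmem
    refine ⟨addrVertex nb r t m, Or.inl ⟨addrVertex_mem_core hm, ?_, ?_, ?_⟩⟩
    · exact addrVertex_ne_root hnb (by omega) ht (by omega) (isCandidate_of_mem_acceptedAddrs hm)
    · rw [addrOf_addrVertex hnb (by omega) ht (by omega) hm, hmi]
    · exact (hnb.portGraph_adj.2 hadj).symm
  · exact ⟨y, Or.inr ⟨hyC, hy, hadj, hlt⟩⟩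

lemma rank_addrParent_lt (hnb : IsPortNumbering nb) (hd : 3 ≤ d) (ht : 0 < t) (htd : t ≤ d) {m : ℕ}
    (hm : m ∈ acceptedAddrs nb κ r t M) :
    (if addrParent nb r t m = r then 0 else addrOf nb κ r t M (addrParent nb r t m)) < m := by
  have htm : t ≤ m := le_of_mem_acceptedAddrs hm
  split_ifs with hparent
  · exact ht.trans_le htm
  · rw [addrOf_addrParent hnb hd ht htd hm hparent]
    exact parentAddr_lt ht htm

/-- The core of a port numbering; the branch of a vertex is the residue of its address mod `t`, and
its rank is the address itself. -/
noncomputable def branchedCore (κ : V → Q) (r : V) (M : ℕ) (hnb : IsPortNumbering nb) (hd : 3 ≤ d)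
    (ht : 0 < t) (htd : t ≤ d) : BranchedCore (portGraph nb) r (Fin t) where
  core := core nb κ r t M
  label c := ⟨addrOf nb κ r t M c % t, Nat.mod_lt _ ht⟩
  parent c := addrParent nb r t (addrOf nb κ r t M c)
  rank c := if c = r then 0 else addrOf nb κ r t M c
  height := M + 1
  root_mem := root_mem_core
  rank_lt c hc := by
    split_ifs with hcr
    · exact M.succ_pos
    · exact Nat.lt_succ_of_lt (lt_of_mem_acceptedAddrs (addrOf_spec hc hcr).1)
  parent_mem c hc hcr :=
    addrParent_mem_core ht (isCandidate_of_mem_acceptedAddrs (addrOf_spec hc hcr).1)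
  adj_parent c hc hcr := by
    have hadj := portAdj_addrParent (nb := nb) (r := r) hd ht htd (addrOf nb κ r t M c)
    rw [(addrOf_spec hc hcr).2] at hadj
    exact (hnb.portGraph_adj.2 hadj).symm
  rank_parent_lt c hc hcr := by
    rw [if_neg hcr]
    exact rank_addrParent_lt hnb hd ht htd (addrOf_spec hc hcr).1
  label_parent c hc hcr hne := Fin.ext <| by
    simp only
    rw [addrOf_addrParent hnb hd ht htd (addrOf_spec hc hcr).1 hne, parentAddr_mod]

theorem IsHitting.nonempty_scaffold (h : IsHitting nb κ r t M K) (hnb : IsPortNumbering nb)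
    (ht : 0 < t) (htd : 4 * t ≤ d) (hsparse : IsLocallySparse (portGraph nb) (6 * (K + 1) + 14))
    (hH : Maximal (fun H => H ≤ portGraph nb ∧ ((2 * (K + 1) + 7 : ℕ) : ℕ∞) ≤ H.egirth) H) :
    Nonempty (Scaffold (portGraph nb) H r (Fin t)) := by
  have : Nonempty V := ⟨r⟩
  have hmissing : ∀ c x y, PortAdj nb c x → ¬ H.Adj c x → PortAdj nb c y → ¬ H.Adj c y → x = y :=
    fun c x y hx hx' hy hy' => Sym2.congr_right.1 <|
      edge_eq_of_notAdj_maximal hsparse hH (hnb.portGraph_adj.2 hx) hx' (hnb.portGraph_adj.2 hy) hy'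
        .nil .nil (Nat.zero_le _) (Nat.zero_le _)
  let B := branchedCore κ r M hnb (by omega) ht (by omega)
  choose! exit hexit hexitInj using fun c (hc : c ∈ core nb κ r t M) (hcr : c ≠ r) =>
    exists_exits hnb ht htd hc hcr (hmissing c) (B.label c)
  choose! route hroute using fun (i : Fin t) u (hu : u ∉ core nb κ r t M) =>
    h.exists_route hnb ht htd hsparse hH hu i.2
  exact ⟨{ B with
    exit := fun i c => exit c i
    route := route
    dist := fun i => reachTime H nb (core nb κ r t M) (attached nb κ r t M i) i
    radius := K + 4
    le := hH.prop.1
    path_unique := fun x y P Q hP hQ hPl hQl =>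
      path_unique_of_le_egirth hH.prop.2 hP hQ (by omega)
    exit_notMem := fun c hc hcr i hi => (hexit c hc hcr i hi).1
    adj_exit := fun c hc hcr i hi => (hexit c hc hcr i hi).2
    exit_injOn := hexitInj
    dist_add_two_le := fun i u hu => by
      obtain ⟨j, hj, hreach⟩ := h.exists_reachesIn hnb ht htd hsparse hH hu i.2
      exact Nat.add_le_add_right (hreach.reachTime_le.trans hj) 2
    route_spec := fun i u hu => by
      refine (hroute i u hu).imp (fun ⟨hmem, hne, hlabel, hadj⟩ => ?_)
        fun ⟨hmem, _, hadj, hlt⟩ => ?_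
      · exact ⟨hmem, hne, Fin.ext hlabel, hadj⟩
      · exact ⟨hmem, hadj, hlt⟩
    route_injOn := fun u hu i hi j hj hij => by
      obtain ⟨-, hi', -⟩ := (hroute i u hu).resolve_left fun h => hi h.1
      obtain ⟨-, hj', -⟩ := (hroute j u hu).resolve_left fun h => hj h.1
      exact Fin.ext (hnb.eq_of_mem_blockNeighbors hi'
        ((show route i u = route j u from hij) ▸ hj')) }⟩

theorem IsHitting.exists_independentParentMaps [Finite V] (h : IsHitting nb κ r t M K)
    (hnb : IsPortNumbering nb) (ht : 0 < t) (htd : 4 * t ≤ d)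
    (hsparse : IsLocallySparse (portGraph nb) (6 * (K + 1) + 14)) :
    ∃ p : Fin t → V → V, IndependentParentMaps (portGraph nb) r p := by
  obtain ⟨H, hH⟩ := exists_maximal_le_egirth (portGraph nb) ((2 * (K + 1) + 7 : ℕ) : ℕ∞)
  obtain ⟨S⟩ := h.nonempty_scaffold hnb ht htd hsparse hH
  exact ⟨S.parentMap, S.independentParentMaps⟩

end GoodState

/-! ### The failure probability at a fixed root -/

section Failure

/-- Bound for the proportion of states whose port graph is not locally sparse at size `m`, with `n`
vertices, degree `d` and `q` marks. -/
noncomputable def sparsityBound (n d q m : ℕ) : ℝ :=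
  (m + 1) * ((m + 1) ^ 2 * (2 * d * q ^ 4)) ^ (m + 1) / n

/-- Bound for the proportion of states in which a prescribed exploration with at least `b` frontier
ports misses a branch of the core with at least `a` attached vertices; `m` is the number of
switching rounds. -/
noncomputable def missBound (n d q a b m : ℕ) : ℝ := (4 * m * n * d * q ^ 4 / (a * b)) ^ m

/-- Bound for the proportion of states without `t` independent spanning trees at a given root. The
branches of the core have depth `S + 1`, the explorations have radius `K + 1`, and `m` is the number
of switching rounds. -/
noncomputable def failureBound (n d q t S K m : ℕ) : ℝ :=
  sparsityBound n d q (6 * (K + 1) + 14) +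
    t * (2 * ((S + 1 : ℕ) + 1) * rejectionBound n d q (t * 2 ^ (S + 2))) +
    n * t * n ^ 2 * missBound n d q (2 ^ S) (2 ^ K) m

lemma card_biUnion_le_mul {α ι : Type*} (I : Finset ι) (f : ι → Finset α) {B : ℝ}
    (hB : ∀ i ∈ I, ((f i).card : ℝ) ≤ B) : ((I.biUnion f).card : ℝ) ≤ I.card * B := by
  calc ((I.biUnion f).card : ℝ) ≤ ∑ i ∈ I, ((f i).card : ℝ) := by
        exact_mod_cast Finset.card_biUnion_le
    _ ≤ I.card * B := by
        rw [← nsmul_eq_mul]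
        exact Finset.sum_le_card_nsmul I _ B hB

lemma card_sym2_le_sq (V : Type*) [Fintype V] : Fintype.card (Sym2 V) ≤ Fintype.card V ^ 2 := by
  simpa only [Fintype.card_prod, ← sq] using
    Fintype.card_le_of_surjective _ (Sym2.mk_surjective (α := V))

variable {V Q : Type*} [Fintype V] [Fintype Q] [Zero Q] {d t S K m : ℕ}

lemma exists_independentParentMaps_of_notMem_statesWithHits {s : State V d Q} {r : V}
    (hs : s ∈ states V d Q) (ht : 0 < t) (htd : 4 * t ≤ d)
    (hsparse : IsLocallySparse (portGraph s.nb) (6 * (K + 1) + 14))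
    (hleaves : ∀ i < t, 2 ^ (S + 1) ≤ 2 * (acceptedLeaves s.nb s.mark r t (S + 1) i).card)
    (hhit : ∀ u, ∀ i < t, ∀ f,
      s ∉ statesWithHits d Q r u t (t * 2 ^ (S + 2)) i f (K + 1) (2 ^ S) (2 ^ K) 0) :
    ∃ p : Fin t → V → V, IndependentParentMaps (portGraph s.nb) r p := by
  have hnb : IsPortNumbering s.nb := mem_states.1 hs
  have hhitting : IsHitting s.nb s.mark r t (t * 2 ^ (S + 2)) K := by
    intro u hu i hi f hfrontier
    refine Finset.nonempty_iff_ne_empty.2 fun hempty => hhit u i hi f ?_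
    have hattached := card_acceptedLeaves_le_card_attached (κ := s.mark) (r := r) (S := S + 1) hnb
      (by omega) ht (by omega) hi
    have hmany : 2 ^ S ≤ (acceptedLeaves s.nb s.mark r t (S + 1) i).card := by
      have := hleaves i hi
      rw [pow_succ] at this
      omega
    exact Finset.mem_filter.2
      ⟨hs, hu, hmany.trans hattached, hfrontier, Finset.card_eq_zero.2 hempty⟩
  exact hhitting.exists_independentParentMaps hnb ht htd hsparse

lemma card_not_isLocallySparse_le (hd : 0 < d) (hm : 4 * (d + 1 + m) ≤ Fintype.card V) :
    ({s ∈ states V d Q | ¬ IsLocallySparse (portGraph s.nb) m}.card : ℝ) ≤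
      (states V d Q).card * sparsityBound (Fintype.card V) d (Fintype.card Q) m := by
  have hn : (0 : ℝ) < Fintype.card V := by
    exact_mod_cast (show 0 < Fintype.card V by omega)
  rw [sparsityBound, ← mul_div_assoc, le_div_iff₀ hn]
  exact_mod_cast card_not_isLocallySparse_mul_le (Q := Q) hd hm

lemma card_biUnion_few_acceptedLeaves_le (hd : 4 ≤ d) (ht : 0 < t) (htd : t ≤ d) (r : V)
    (hn : 4 * (d + 1 + (t * 2 ^ (S + 1) + 1)) ≤ Fintype.card V) :
    (((Finset.range t).biUnion fun i =>
        {s ∈ states V d Q | 2 * (acceptedLeaves s.nb s.mark r t S i).card < 2 ^ S}).card : ℝ) ≤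
      t * ((states V d Q).card *
        (2 * (S + 1) * rejectionBound (Fintype.card V) d (Fintype.card Q) (t * 2 ^ (S + 1)))) := by
  simpa only [Finset.card_range] using card_biUnion_le_mul (Finset.range t) _
    fun i hi => card_few_acceptedLeaves_le (by omega) ht htd r (Finset.mem_range.1 hi) hn

lemma card_biUnion_statesWithHits_zero_le (hd : 2 ≤ d) (ht : 0 < t) (r : V) (M : ℕ) {a b : ℕ}
    (hm : 2 * m ≤ b) (hb : 0 < b) (ha : 2 * (5 ^ K * (d + 1) ^ 3 + 2) ≤ a) :
    ((((Finset.univ : Finset V) ×ˢ Finset.range t ×ˢ (Finset.univ : Finset (Sym2 V))).biUnion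
        fun x => statesWithHits d Q r x.1 t M x.2.1 x.2.2 K a b 0).card : ℝ) ≤
      Fintype.card V * t * Fintype.card V ^ 2 *
        (missBound (Fintype.card V) d (Fintype.card Q) a b m * (states V d Q).card) := by
  have hsym : (Fintype.card (Sym2 V) : ℝ) ≤ Fintype.card V ^ 2 := by
    exact_mod_cast card_sym2_le_sq V
  have hnonneg : 0 ≤ missBound (Fintype.card V) d (Fintype.card Q) a b m := by
    unfold missBound
    positivity
  refine (card_biUnion_le_mul _ _ fun x _ =>
    card_statesWithHits_zero_le (Q := Q) hd ht hm hb ha).trans ?_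
  rw [← missBound]
  simp only [Finset.card_product, Finset.card_univ, Finset.card_range, Nat.cast_mul, ← mul_assoc]
  gcongr

theorem card_not_exists_independentParentMaps_le (ht : 0 < t) (htd : 4 * t ≤ d) (r : V)
    (hsparse : 4 * (d + 1 + (6 * (K + 1) + 14)) ≤ Fintype.card V)
    (hleaves : 4 * (d + 1 + (t * 2 ^ (S + 2) + 1)) ≤ Fintype.card V) (hm : 2 * m ≤ 2 ^ K)
    (hhit : 2 * (5 ^ (K + 1) * (d + 1) ^ 3 + 2) ≤ 2 ^ S) :
    ({s ∈ states V d Q |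
        ¬ ∃ p : Fin t → V → V, IndependentParentMaps (portGraph s.nb) r p}.card : ℝ) ≤
      failureBound (Fintype.card V) d (Fintype.card Q) t S K m * (states V d Q).card := by
  set notSparse := {s ∈ states V d Q | ¬ IsLocallySparse (portGraph s.nb) (6 * (K + 1) + 14)}
  set fewLeaves := (Finset.range t).biUnion fun i =>
    {s ∈ states V d Q | 2 * (acceptedLeaves s.nb s.mark r t (S + 1) i).card < 2 ^ (S + 1)}
  set missing := ((Finset.univ : Finset V) ×ˢ Finset.range t ×ˢ
    (Finset.univ : Finset (Sym2 V))).biUnion fun x =>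
      statesWithHits d Q r x.1 t (t * 2 ^ (S + 2)) x.2.1 x.2.2 (K + 1) (2 ^ S) (2 ^ K) 0
  have hcover : {s ∈ states V d Q |
      ¬ ∃ p : Fin t → V → V, IndependentParentMaps (portGraph s.nb) r p} ⊆
        notSparse ∪ fewLeaves ∪ missing := by
    intro s hs
    obtain ⟨hs, hfail⟩ := Finset.mem_filter.1 hs
    by_contra hgood
    simp only [notSparse, fewLeaves, missing, Finset.mem_union, Finset.mem_biUnion,
      Finset.mem_filter, hs, true_and, Finset.mem_product, Finset.mem_univ, Finset.mem_range,
      and_true, not_or, not_not, not_exists, not_and, not_lt, Prod.forall] at hgood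
    exact hfail (exists_independentParentMaps_of_notMem_statesWithHits hs ht htd hgood.1.1
      hgood.1.2 fun u i hi f => hgood.2 u i f hi)
  have hunion : ((notSparse ∪ fewLeaves ∪ missing).card : ℝ) ≤
      notSparse.card + fewLeaves.card + missing.card := by
    exact_mod_cast (Finset.card_union_le _ _).trans
      (Nat.add_le_add_right (Finset.card_union_le _ _) _)
  have hnotSparse := card_not_isLocallySparse_le (Q := Q) (by omega) hsparse
  have hfewLeaves := card_biUnion_few_acceptedLeaves_le (Q := Q) (by omega) ht (by omega) r hleaves
  have hmissing := card_biUnion_statesWithHits_zero_le (Q := Q) (by omega) ht r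
    (t * 2 ^ (S + 2)) hm (by positivity) hhit
  calc _ ≤ ((notSparse ∪ fewLeaves ∪ missing).card : ℝ) := by
        exact_mod_cast Finset.card_le_card hcover
    _ ≤ notSparse.card + fewLeaves.card + missing.card := hunion
    _ ≤ _ := add_le_add (add_le_add hnotSparse hfewLeaves) hmissing
    _ = _ := by rw [failureBound]; ring

end Failure

/-! ### From port numberings to uniform regular graphs -/

section Transfer

variable {V Q : Type*} [Fintype V] {d : ℕ}

/-- The `d`-regular graphs on the vertex type `V`, the sample space of `G(n, d)`. -/
noncomputable def regularGraphs (V : Type*) [Fintype V] (d : ℕ) : Finset (SimpleGraph V) :=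
  {G | ∀ v, Nat.card (G.neighborSet v) = d}

lemma mem_regularGraphs {G : SimpleGraph V} :
    G ∈ regularGraphs V d ↔ ∀ v, Nat.card (G.neighborSet v) = d := by
  simp [regularGraphs]

lemma IsPortNumbering.portGraph_mem_regularGraphs {nb : V → Fin d → V}
    (h : IsPortNumbering nb) : portGraph nb ∈ regularGraphs V d := by
  refine mem_regularGraphs.2 fun v => ?_
  have hset : (portGraph nb).neighborSet v = neighbors nb v := by
    ext x
    simp [h.portGraph_adj, mem_neighbors]
  rw [hset, Nat.card_coe_set_eq, Set.ncard_coe_finset, h.card_neighbors]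

lemma exists_port_eq_of_adj {G : SimpleGraph V} (hG : G ∈ regularGraphs V d)
    {v : V} {g : Fin d → V} (hinj : Function.Injective g) (hadj : ∀ p, G.Adj v (g p))
    {x : V} (hx : G.Adj v x) : ∃ p, g p = x := by
  let toNeighbor : Fin d → G.neighborSet v := fun p => ⟨g p, hadj p⟩
  have hbij : Function.Bijective toNeighbor := by
    refine (Fintype.bijective_iff_injective_and_card _).2
      ⟨fun a b hab => hinj (congrArg Subtype.val hab), ?_⟩
    rw [Fintype.card_fin, ← Nat.card_eq_fintype_card, mem_regularGraphs.1 hG]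
  obtain ⟨p, hp⟩ := hbij.2 ⟨x, hx⟩
  exact ⟨p, congrArg Subtype.val hp⟩

lemma isPortNumbering_and_portGraph_eq_iff {G : SimpleGraph V} (hG : G ∈ regularGraphs V d)
    {nb : V → Fin d → V} :
    (IsPortNumbering nb ∧ portGraph nb = G) ↔
      ∀ v, Function.Injective (nb v) ∧ ∀ p, G.Adj v (nb v p) := by
  constructor
  · rintro ⟨h, rfl⟩ v
    exact ⟨h.inj v, fun p => h.portGraph_adj.2 ⟨p, rfl⟩⟩
  · intro h
    have hsurj : ∀ {v x}, G.Adj v x → ∃ p, nb v p = x :=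
      fun {v _} => exists_port_eq_of_adj hG (h v).1 (h v).2
    have hnb : IsPortNumbering nb :=
      ⟨fun v => (h v).1, fun v p => ((h v).2 p).ne', fun v p => hsurj ((h v).2 p).symm⟩
    refine ⟨hnb, ?_⟩
    ext x y
    rw [hnb.portGraph_adj]
    exact ⟨by rintro ⟨p, rfl⟩; exact (h x).2 p, hsurj⟩

variable [Fintype Q]

/-- A state with port graph `G` is the same as a port labelling of every neighbourhood of `G`
together with a marking. -/
noncomputable def fiberEquiv {G : SimpleGraph V} (hG : G ∈ regularGraphs V d) :
    {s : State V d Q // s ∈ states V d Q ∧ portGraph s.nb = G} ≃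
      (∀ v, Fin d ↪ G.neighborSet v) × (V → Q) where
  toFun s :=
    have hs v := (isPortNumbering_and_portGraph_eq_iff hG).1 ⟨mem_states.1 s.2.1, s.2.2⟩ v
    (fun v => ⟨fun p => ⟨s.1.nb v p, (hs v).2 p⟩,
      fun _ _ hab => (hs v).1 (congrArg Subtype.val hab)⟩, s.1.mark)
  invFun e :=
    have he := (isPortNumbering_and_portGraph_eq_iff hG (nb := fun v p => (e.1 v p : V))).2
      fun v => ⟨fun _ _ hab => (e.1 v).injective (Subtype.ext hab), fun p => (e.1 v p).2⟩
    ⟨⟨fun v p => e.1 v p, e.2⟩, mem_states.2 he.1, he.2⟩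
  left_inv _ := rfl
  right_inv _ := rfl

variable (Q) in
lemma card_filter_states_portGraph_eq {G : SimpleGraph V} (hG : G ∈ regularGraphs V d) :
    {s ∈ states V d Q | portGraph s.nb = G}.card =
      d.factorial ^ Fintype.card V * Fintype.card Q ^ Fintype.card V := by
  have hlabel : ∀ v, Nat.card (Fin d ↪ G.neighborSet v) = d.factorial := fun v => by
    rw [Nat.card_eq_fintype_card, Fintype.card_embedding_eq, ← Nat.card_eq_fintype_card,
      mem_regularGraphs.1 hG, Fintype.card_fin, Nat.descFactorial_self]
  calc {s ∈ states V d Q | portGraph s.nb = G}.card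
      = Nat.card {s : State V d Q // s ∈ states V d Q ∧ portGraph s.nb = G} := by
        rw [Nat.subtype_card _ fun s => Finset.mem_filter]
    _ = (∏ v, Nat.card (Fin d ↪ G.neighborSet v)) * Nat.card (V → Q) := by
        rw [Nat.card_congr (fiberEquiv hG), Nat.card_prod, Nat.card_pi]
    _ = _ := by simp only [hlabel, Finset.prod_const, Finset.card_univ,
        Nat.card_eq_fintype_card, Fintype.card_fun]

variable (Q) in
lemma card_filter_states_portGraph (P : SimpleGraph V → Prop) :
    {s ∈ states V d Q | P (portGraph s.nb)}.card =
      {G ∈ regularGraphs V d | P G}.card *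
        (d.factorial ^ Fintype.card V * Fintype.card Q ^ Fintype.card V) := by
  rw [Finset.card_eq_sum_card_fiberwise (f := fun s => portGraph s.nb)
    (t := {G ∈ regularGraphs V d | P G})]
  · refine Finset.sum_const_nat fun G hG => ?_
    obtain ⟨hGreg, hPG⟩ := Finset.mem_filter.1 hG
    rw [← card_filter_states_portGraph_eq Q hGreg, Finset.filter_filter]
    refine congrArg Finset.card (Finset.filter_congr fun s _ => ?_)
    exact ⟨And.right, fun h => ⟨h ▸ hPG, h⟩⟩
  · intro s hs
    obtain ⟨hsmem, hPs⟩ := Finset.mem_filter.1 hs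
    exact Finset.mem_filter.2
      ⟨(mem_states.1 hsmem).portGraph_mem_regularGraphs, hPs⟩

variable (Q) in
lemma card_filter_regularGraphs_le_of_states [Nonempty Q] {P : SimpleGraph V → Prop} {θ : ℝ}
    (h : ({s ∈ states V d Q | P (portGraph s.nb)}.card : ℝ) ≤
      θ * (states V d Q).card) :
    ({G ∈ regularGraphs V d | P G}.card : ℝ) ≤ θ * (regularGraphs V d).card := by
  have hall : (states V d Q).card = (regularGraphs V d).card *
      (d.factorial ^ Fintype.card V * Fintype.card Q ^ Fintype.card V) := by
    simpa only [Finset.filter_true] using card_filter_states_portGraph Q fun _ => True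
  rw [card_filter_states_portGraph, hall, Nat.cast_mul _ (_ * _), Nat.cast_mul _ (_ * _),
    ← mul_assoc] at h
  refine le_of_mul_le_mul_right h (Nat.cast_pos.2 ?_)
  positivity

end Transfer

/-! ### Existence of regular graphs -/

section Existence

lemma card_neighborSet_circulantGraph {A : Type*} [AddGroup A] {s : Set A}
    (hneg : ∀ a ∈ s, -a ∈ s) (hzero : 0 ∉ s) (v : A) :
    Nat.card ((SimpleGraph.circulantGraph s).neighborSet v) = Nat.card s := by
  refine Nat.card_congr ((Equiv.subLeft v).subtypeEquiv fun w => ?_)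
  simp only [SimpleGraph.mem_neighborSet, SimpleGraph.circulantGraph_adj, Equiv.subLeft_apply]
  constructor
  · rintro ⟨-, h | h⟩
    · exact h
    · simpa only [neg_sub] using hneg _ h
  · exact fun h => ⟨fun hvw => hzero (by simpa [hvw] using h), Or.inl h⟩

lemma exists_finset_card_eq_and_sub_mem {n d : ℕ} (hdn : d < n) (heven : Even (n * d)) :
    ∃ T : Finset ℕ, T.card = d ∧ ∀ x ∈ T, 0 < x ∧ x < n ∧ n - x ∈ T := by
  rcases Nat.even_or_odd' d with ⟨k, rfl | rfl⟩
  · refine ⟨Finset.Icc 1 k ∪ Finset.Ico (n - k) n, ?_, fun x hx => ?_⟩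
    · rw [Finset.card_union_of_disjoint, Nat.card_Icc, Nat.card_Ico]
      · omega
      · simp only [Finset.disjoint_left, Finset.mem_Icc, Finset.mem_Ico]
        omega
    · simp only [Finset.mem_union, Finset.mem_Icc, Finset.mem_Ico] at hx ⊢
      omega
  · obtain ⟨m, rfl⟩ : Even n := (Nat.even_mul.1 heven).resolve_right (by simp)
    refine ⟨Finset.Icc (m - k) (m + k), ?_, fun x hx => ?_⟩
    · rw [Nat.card_Icc]
      omega
    · simp only [Finset.mem_Icc] at hx ⊢
      omega

theorem regularGraphs_nonempty {n d : ℕ} (hdn : d < n) (heven : Even (n * d)) :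
    (regularGraphs (Fin n) d).Nonempty := by
  obtain ⟨T, hcard, hT⟩ := exists_finset_card_eq_and_sub_mem hdn heven
  have : NeZero n := ⟨by omega⟩
  let s : Finset (Fin n) := T.attachFin fun x hx => (hT x hx).2.1
  have hzero : (0 : Fin n) ∉ (s : Set (Fin n)) := fun h => by
    simpa using (hT _ ((Finset.mem_attachFin _).1 h)).1
  have hneg : ∀ a ∈ (s : Set (Fin n)), -a ∈ (s : Set (Fin n)) := fun a ha => by
    have ha0 : a ≠ 0 := fun h => hzero (h ▸ ha)
    refine (Finset.mem_attachFin _).2 ?_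
    rw [Fin.val_neg, if_neg ha0]
    exact (hT _ ((Finset.mem_attachFin _).1 ha)).2.2
  refine ⟨SimpleGraph.circulantGraph s, mem_regularGraphs.2 fun v => ?_⟩
  rw [card_neighborSet_circulantGraph hneg hzero, Nat.card_coe_set_eq, Set.ncard_coe_finset,
    Finset.card_attachFin, hcard]

end Existence

/-! ### Averaging over the root -/

section Averaging

lemma card_filter_lt_card_bad_le {α V : Type*} [Fintype V] [Nonempty V] (A : Finset α)
    (B : V → α → Prop) {θ ε : ℝ} (hε : 0 < ε)
    (h : ∀ r, ({x ∈ A | B r x}.card : ℝ) ≤ θ * A.card) :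
    ({x ∈ A | ε * Fintype.card V < Nat.card {r // B r x}}.card : ℝ) ≤
      θ / ε * A.card := by
  set E : Finset α := {x ∈ A | ε * Fintype.card V < Nat.card {r // B r x}}
  have hdouble : E.card • (ε * Fintype.card V) ≤
      (Finset.univ : Finset V).card • (θ * A.card) := by
    refine Finset.card_nsmul_le_card_nsmul (fun x r => B r x) (fun x hx => ?_) fun r _ => ?_
    · rw [Finset.bipartiteAbove, ← Fintype.card_subtype,
        ← Nat.card_eq_fintype_card (α := {r // B r x})]
      exact (Finset.mem_filter.1 hx).2.le
    · refine le_trans (Nat.cast_le.2 (Finset.card_le_card ?_)) (h r)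
      exact Finset.filter_subset_filter _ (Finset.filter_subset _ _)
  have hV : (0 : ℝ) < Fintype.card V := Nat.cast_pos.2 Fintype.card_pos
  simp only [nsmul_eq_mul, Finset.card_univ] at hdouble
  rw [div_mul_eq_mul_div, le_div_iff₀ hε]
  exact le_of_mul_le_mul_left (by linarith) hV

variable {n d : ℕ}

lemma regProb_eq_card_div_card (A : SimpleGraph (Fin n) → Prop) :
    regProb n d A = ({G ∈ regularGraphs (Fin n) d | A G}.card : ℝ) /
      (regularGraphs (Fin n) d).card := by
  unfold regProb regularGraphs
  rw [Finset.filter_filter]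
  congr!

lemma regProb_le_one (A : SimpleGraph (Fin n) → Prop) : regProb n d A ≤ 1 := by
  rw [regProb_eq_card_div_card]
  exact div_le_one_of_le₀ (Nat.cast_le.2 (Finset.card_filter_le _ _)) (Nat.cast_nonneg _)

theorem one_sub_div_le_regProb (B : Fin n → SimpleGraph (Fin n) → Prop) {θ ε : ℝ}
    (hε : 0 < ε) (hdn : d < n) (heven : Even (n * d))
    (h : ∀ r, ({G ∈ regularGraphs (Fin n) d | B r G}.card : ℝ) ≤
      θ * (regularGraphs (Fin n) d).card) :
    1 - θ / ε ≤ regProb n d fun G => (Nat.card {r // B r G} : ℝ) ≤ ε * n := by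
  have : Nonempty (Fin n) := ⟨⟨0, by omega⟩⟩
  have hbad := card_filter_lt_card_bad_le _ B hε h
  have hpos : (0 : ℝ) < (regularGraphs (Fin n) d).card :=
    Nat.cast_pos.2 (regularGraphs_nonempty hdn heven).card_pos
  have hsplit := Finset.card_filter_add_card_filter_not (s := regularGraphs (Fin n) d)
    fun G => (Nat.card {r // B r G} : ℝ) ≤ ε * n
  simp only [not_le] at hsplit
  rw [← Nat.cast_inj (R := ℝ), Nat.cast_add] at hsplit
  rw [Fintype.card_fin] at hbad
  rw [regProb_eq_card_div_card, le_div_iff₀ hpos]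
  linarith

end Averaging

/-! ### Choice of the parameters -/

section Parameters

lemma div_le_one_div_two_pow {x y : ℝ} {a b l : ℕ} (hx : x ≤ 2 ^ a) (hy : 2 ^ b ≤ y)
    (h : a + l ≤ b) : x / y ≤ 1 / 2 ^ l := by
  have hy0 : 0 < y := lt_of_lt_of_le (by positivity) hy
  rw [div_le_div_iff₀ hy0 (by positivity), one_mul]
  calc x * 2 ^ l ≤ 2 ^ a * 2 ^ l := by gcongr
    _ = 2 ^ (a + l) := (pow_add 2 a l).symm
    _ ≤ 2 ^ b := by gcongr; norm_num
    _ ≤ y := hy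

/-- The dyadic scale of a pair `(n, d)`: `S + 31 * l` is the binary logarithm of `n`, and `2 ^ l`
dominates both this logarithm and `√d`. The branches of the core have about `2 ^ S` leaves, so that
`2 ^ (31 * l)` is the room left for all the polylogarithmic factors. -/
structure DyadicScale (n d S l : ℕ) : Prop where
  one_le : 1 ≤ l
  log_lt : S + 31 * l < 2 ^ l
  sq_le_log : 20001 * l ^ 2 ≤ S + 31 * l
  two_pow_le : 2 ^ (S + 31 * l) ≤ n
  lt_two_pow : n < 2 ^ (S + 31 * l + 1)
  degree_le : d ≤ 2 ^ (2 * l)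

namespace DyadicScale

variable {n d S l : ℕ}

lemma linear_le_two_pow (hl : 1 ≤ l) : 6 * (80 * l + 1) + 14 + 1 ≤ 2 ^ (10 * l) :=
  calc 6 * (80 * l + 1) + 14 + 1 ≤ 2 ^ 9 * l := by omega
    _ ≤ 2 ^ (9 * l) * 2 ^ l :=
        Nat.mul_le_mul (Nat.pow_le_pow_right two_pos (by omega)) Nat.lt_two_pow_self.le
    _ = 2 ^ (10 * l) := by ring

lemma le_log (h : DyadicScale n d S l) : 20001 * l ≤ S + 31 * l :=
  le_trans (Nat.mul_le_mul_left _ (Nat.le_self_pow two_ne_zero l)) h.sq_le_log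

lemma cast_degree_le (h : DyadicScale n d S l) : (d : ℝ) ≤ 2 ^ (2 * l) := by
  exact_mod_cast h.degree_le

lemma cast_degree_div_four_le (h : DyadicScale n d S l) : ((d / 4 : ℕ) : ℝ) ≤ 2 ^ (2 * l) :=
  (Nat.cast_le.2 (Nat.div_le_self d 4)).trans h.cast_degree_le

lemma cast_two_pow_le (h : DyadicScale n d S l) : (2 : ℝ) ^ (S + 31 * l) ≤ n := by
  exact_mod_cast h.two_pow_le

lemma sparsityBound_le (h : DyadicScale n d S l) :
    sparsityBound n d (2 ^ (4 * l)) (6 * (80 * l + 1) + 14) ≤ 1 / 2 ^ l := by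
  have hl := h.one_le
  have hradius : ((6 * (80 * l + 1) + 14 : ℕ) + 1 : ℝ) ≤ 2 ^ (10 * l) := by
    exact_mod_cast linear_le_two_pow hl
  have hfactor : ((6 * (80 * l + 1) + 14 : ℕ) + 1 : ℝ) ^ 2 *
      (2 * d * ((2 ^ (4 * l) : ℕ) : ℝ) ^ 4) ≤ 2 ^ (39 * l) := by
    rw [Nat.cast_pow, Nat.cast_two]
    calc _ ≤ ((2 : ℝ) ^ (10 * l)) ^ 2 * (2 * 2 ^ (2 * l) * ((2 : ℝ) ^ (4 * l)) ^ 4) := by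
          gcongr
          exact h.cast_degree_le
      _ = 2 ^ (38 * l + 1) := by ring
      _ ≤ 2 ^ (39 * l) := pow_le_pow_right₀ one_le_two (by omega)
  refine div_le_one_div_two_pow (a := 10 * l + 39 * l * (6 * (80 * l + 1) + 14 + 1)) ?_
    h.cast_two_pow_le ?_
  · rw [pow_add (2 : ℝ) (10 * l), pow_mul (2 : ℝ) (39 * l)]
    gcongr
  · nlinarith [h.sq_le_log]

lemma mul_one_div_le (h : DyadicScale n d S l) :
    ((d / 4 : ℕ) : ℝ) * ((S + 1 : ℕ) + 1) / 2 ^ (4 * l) ≤ 1 / 2 ^ l := by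
  have hdepth : ((S + 1 : ℕ) : ℝ) + 1 ≤ 2 ^ l := by
    exact_mod_cast (show S + 1 + 1 ≤ 2 ^ l by have := h.log_lt; have := h.one_le; omega)
  refine div_le_one_div_two_pow (a := 3 * l) ?_ le_rfl (by omega)
  calc _ ≤ (2 : ℝ) ^ (2 * l) * 2 ^ l := by
        gcongr
        exact h.cast_degree_div_four_le
    _ = 2 ^ (3 * l) := by ring

lemma cast_core_card_le (h : DyadicScale n d S l) :
    (((d / 4) * 2 ^ (S + 2) : ℕ) : ℝ) + 1 ≤ 2 ^ (2 * l + S + 3) := by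
  have hone : (1 : ℝ) ≤ 2 ^ (2 * l + (S + 2)) := one_le_pow₀ one_le_two
  calc (((d / 4) * 2 ^ (S + 2) : ℕ) : ℝ) + 1
      ≤ 2 ^ (2 * l) * 2 ^ (S + 2) + 2 ^ (2 * l + (S + 2)) := by
        rw [Nat.cast_mul, Nat.cast_pow, Nat.cast_two]
        gcongr
        exact h.cast_degree_div_four_le
    _ = 2 ^ (2 * l + S + 3) := by ring

lemma rejection_term_le (h : DyadicScale n d S l) :
    ((d / 4 : ℕ) : ℝ) * (2 * ((S + 1 : ℕ) + 1) *
      rejectionBound n d (2 ^ (4 * l)) (d / 4 * 2 ^ (S + 2))) ≤ 3 * (1 / 2 ^ l) := by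
  have hl := h.one_le
  have hdepth : ((S + 1 : ℕ) : ℝ) + 1 ≤ 2 ^ l := by
    exact_mod_cast (show S + 1 + 1 ≤ 2 ^ l by have := h.log_lt; omega)
  have hconflict : ((d / 4 : ℕ) : ℝ) * (2 * ((S + 1 : ℕ) + 1)) *
      (2 * d ^ 2 * ((d / 4 * 2 ^ (S + 2) : ℕ) + 1) * ((2 : ℝ) ^ (4 * l)) ^ 4) / n ≤
      1 / 2 ^ l := by
    refine div_le_one_div_two_pow (a := 25 * l + S + 5) ?_ h.cast_two_pow_le (by omega)
    calc _ ≤ (2 : ℝ) ^ (2 * l) * (2 * 2 ^ l) *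
          (2 * (2 ^ (2 * l)) ^ 2 * 2 ^ (2 * l + S + 3) * ((2 : ℝ) ^ (4 * l)) ^ 4) := by
          gcongr
          exacts [h.cast_degree_div_four_le, h.cast_degree_le, h.cast_core_card_le]
      _ = 2 ^ (25 * l + S + 5) := by ring
  calc _ = 2 * (((d / 4 : ℕ) : ℝ) * ((S + 1 : ℕ) + 1) / 2 ^ (4 * l)) +
        ((d / 4 : ℕ) : ℝ) * (2 * ((S + 1 : ℕ) + 1)) *
          (2 * d ^ 2 * ((d / 4 * 2 ^ (S + 2) : ℕ) + 1) * ((2 : ℝ) ^ (4 * l)) ^ 4) / n := by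
        rw [rejectionBound, Nat.cast_pow, Nat.cast_two]
        ring
    _ ≤ 3 * (1 / 2 ^ l) := by linarith [h.mul_one_div_le]

lemma missBound_le (h : DyadicScale n d S l) :
    missBound n d (2 ^ (4 * l)) (2 ^ S) (2 ^ (80 * l)) (S + 31 * l) ≤
      (1 / 2 ^ 8) ^ (S + 31 * l) := by
  have hl := h.one_le
  have hlog : ((S + 31 * l : ℕ) : ℝ) ≤ 2 ^ l := by exact_mod_cast h.log_lt.le
  have hn : (n : ℝ) ≤ 2 ^ (S + 31 * l + 1) := by exact_mod_cast h.lt_two_pow.le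
  simp only [missBound, Nat.cast_pow, Nat.cast_two]
  refine pow_le_pow_left₀ (by positivity) ?_ _
  refine div_le_one_div_two_pow (a := 50 * l + S + 3) (b := S + 80 * l) ?_
    (pow_add 2 S (80 * l)).le (by omega)
  calc _ ≤ 4 * (2 : ℝ) ^ l * 2 ^ (S + 31 * l + 1) * 2 ^ (2 * l) * ((2 : ℝ) ^ (4 * l)) ^ 4 := by
        gcongr
        exact h.cast_degree_le
    _ = 2 ^ (50 * l + S + 3) := by ring

lemma miss_term_le (h : DyadicScale n d S l) :
    (n : ℝ) * (d / 4 : ℕ) * n ^ 2 *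
      missBound n d (2 ^ (4 * l)) (2 ^ S) (2 ^ (80 * l)) (S + 31 * l) ≤ 1 / 2 ^ l := by
  have hl := h.one_le
  have hn : (n : ℝ) ≤ 2 ^ (S + 31 * l + 1) := by exact_mod_cast h.lt_two_pow.le
  have hmiss : 0 ≤ missBound n d (2 ^ (4 * l)) (2 ^ S) (2 ^ (80 * l)) (S + 31 * l) := by
    unfold missBound
    positivity
  calc _ ≤ (2 : ℝ) ^ (S + 31 * l + 1) * 2 ^ (2 * l) * (2 ^ (S + 31 * l + 1)) ^ 2 *
        (1 / 2 ^ 8) ^ (S + 31 * l) := by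
        gcongr
        exacts [h.cast_degree_div_four_le, h.missBound_le]
    _ = 2 ^ (3 * S + 95 * l + 3) / 2 ^ (8 * (S + 31 * l)) := by
        rw [one_div_pow, ← pow_mul 2 8, mul_one_div]
        congr 1
        ring
    _ ≤ 1 / 2 ^ l := div_le_one_div_two_pow le_rfl le_rfl (by omega)

theorem failureBound_le (h : DyadicScale n d S l) :
    failureBound n d (2 ^ (4 * l)) (d / 4) S (80 * l) (S + 31 * l) ≤ 5 * (1 / 2 ^ l) := by
  rw [failureBound]
  linarith [h.sparsityBound_le, h.rejection_term_le, h.miss_term_le]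

lemma degree_add_radius_le (h : DyadicScale n d S l) :
    4 * (d + 1 + (6 * (80 * l + 1) + 14)) ≤ n := by
  have hl := h.one_le
  have hradius := linear_le_two_pow hl
  have hd : d ≤ 2 ^ (10 * l) := h.degree_le.trans (Nat.pow_le_pow_right two_pos (by omega))
  calc 4 * (d + 1 + (6 * (80 * l + 1) + 14)) ≤ 2 ^ 3 * 2 ^ (10 * l) := by omega
    _ = 2 ^ (3 + 10 * l) := (pow_add 2 3 _).symm
    _ ≤ 2 ^ (S + 31 * l) := Nat.pow_le_pow_right two_pos (by omega)
    _ ≤ n := h.two_pow_le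

lemma degree_add_core_card_le (h : DyadicScale n d S l) :
    4 * (d + 1 + (d / 4 * 2 ^ (S + 2) + 1)) ≤ n := by
  have hl := h.one_le
  have hcore : d / 4 * 2 ^ (S + 2) ≤ 2 ^ (2 * l + (S + 2)) := by
    rw [pow_add 2 (2 * l)]
    exact Nat.mul_le_mul_right _ ((Nat.div_le_self d 4).trans h.degree_le)
  have hd : d ≤ 2 ^ (2 * l + (S + 2)) :=
    h.degree_le.trans (Nat.pow_le_pow_right two_pos (by omega))
  have hone : 1 ≤ 2 ^ (2 * l + (S + 2)) := Nat.one_le_two_pow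
  calc 4 * (d + 1 + (d / 4 * 2 ^ (S + 2) + 1)) ≤ 2 ^ 4 * 2 ^ (2 * l + (S + 2)) := by omega
    _ = 2 ^ (4 + (2 * l + (S + 2))) := (pow_add 2 4 _).symm
    _ ≤ 2 ^ (S + 31 * l) := Nat.pow_le_pow_right two_pos (by omega)
    _ ≤ n := h.two_pow_le

lemma two_mul_log_le (h : DyadicScale n d S l) : 2 * (S + 31 * l) ≤ 2 ^ (80 * l) :=
  calc 2 * (S + 31 * l) ≤ 2 ^ (l + 1) := by rw [pow_succ']; have := h.log_lt; omega
    _ ≤ 2 ^ (80 * l) := Nat.pow_le_pow_right two_pos (by have := h.one_le; omega)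

lemma five_pow_mul_le (h : DyadicScale n d S l) :
    2 * (5 ^ (80 * l + 1) * (d + 1) ^ 3 + 2) ≤ 2 ^ S := by
  have hlog := h.le_log
  have hl := h.one_le
  have hd : d + 1 ≤ 2 ^ (2 * l + 1) := by
    have := h.degree_le
    have := Nat.one_le_two_pow (n := 2 * l)
    rw [pow_succ]
    omega
  have htwo : 2 ≤ 2 ^ (246 * l + 6) := Nat.le_self_pow (by omega) 2
  calc 2 * (5 ^ (80 * l + 1) * (d + 1) ^ 3 + 2)
      ≤ 2 * ((2 ^ 3) ^ (80 * l + 1) * (2 ^ (2 * l + 1)) ^ 3 + 2 ^ (246 * l + 6)) := by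
        gcongr
        norm_num
    _ = 2 ^ (246 * l + 8) := by
        rw [← pow_mul, ← pow_mul]
        ring
    _ ≤ 2 ^ S := Nat.pow_le_pow_right two_pos (by omega)

lemma card_regularGraphs_not_le {V : Type*} [Fintype V]
    (h : DyadicScale (Fintype.card V) d S l) (hd : 4 ≤ d) {r : V} {P : SimpleGraph V → Prop}
    (hP : ∀ G (p : Fin (d / 4) → V → V), IndependentParentMaps G r p → P G) :
    ({G ∈ regularGraphs V d | ¬ P G}.card : ℝ) ≤
      5 * (1 / 2 ^ l) * (regularGraphs V d).card := by
  have : NeZero (2 ^ (4 * l)) := ⟨by positivity⟩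
  have hbad := card_not_exists_independentParentMaps_le (Q := Fin (2 ^ (4 * l))) (t := d / 4)
    (S := S) (K := 80 * l) (m := S + 31 * l) (by omega) (by omega) r h.degree_add_radius_le
    h.degree_add_core_card_le h.two_mul_log_le h.five_pow_mul_le
  rw [Fintype.card_fin] at hbad
  have hstates : ({s ∈ states V d (Fin (2 ^ (4 * l))) | ¬ P (portGraph s.nb)}.card : ℝ) ≤
      5 * (1 / 2 ^ l) * (states V d (Fin (2 ^ (4 * l)))).card := by
    refine le_trans (Nat.cast_le.2 (Finset.card_le_card ?_))
      (hbad.trans (mul_le_mul_of_nonneg_right h.failureBound_le (Nat.cast_nonneg _)))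
    exact Finset.monotone_filter_right _ fun _ _ hs ⟨_, hp⟩ => hs (hP _ _ hp)
  convert card_filter_regularGraphs_le_of_states (Fin (2 ^ (4 * l)))
    (P := fun G => ¬ P G) (by convert hstates)

theorem one_sub_le_regProb (h : DyadicScale n d S l) (hd : 4 ≤ d) (heven : Even (n * d))
    {ε : ℝ} (hε : 0 < ε) :
    1 - 5 * (1 / 2 ^ l) / ε ≤
      regProb n d fun G => (Nat.card {r : Fin n // ¬ HasISTs G r (d / 4)} : ℝ) ≤ ε * n :=
  one_sub_div_le_regProb _ hε (by have := h.degree_add_radius_le; omega) heven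
    fun r => by
      convert card_regularGraphs_not_le ((Fintype.card_fin n).symm ▸ h) hd
        fun G _ hp => hp.hasISTs (r := r)

end DyadicScale

end Parameters

/-! ### The scale `log log n` -/

section Asymptotics

lemma tendsto_natLog_two_atTop : Tendsto (Nat.log 2) atTop atTop :=
  tendsto_atTop_atTop.2 fun b => ⟨2 ^ b, fun _ hn => Nat.le_log_of_pow_le one_lt_two hn⟩

lemma mul_succ_sq_le_two_pow {l : ℕ} (hl : 30 ≤ l) : 20001 * (l + 1) ^ 2 ≤ 2 ^ l := by
  induction l, hl using Nat.le_induction with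
  | base => norm_num
  | succ k hk ih =>
    rw [pow_succ 2 k]
    nlinarith

/-- The dyadic scale `⌊log₂ log₂ n⌋ + 1` used for graphs on `n` vertices. -/
def loglogScale (n : ℕ) : ℕ := Nat.log 2 (Nat.log 2 n) + 1

lemma tendsto_loglogScale : Tendsto loglogScale atTop atTop :=
  (tendsto_add_atTop_nat 1).comp (tendsto_natLog_two_atTop.comp tendsto_natLog_two_atTop)

lemma log_le_natLog_two {n : ℕ} (hn : 4 ≤ Nat.log 2 n) : Real.log n ≤ Nat.log 2 n := by
  have hn0 : n ≠ 0 := by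
    rintro rfl
    simp at hn
  have hlt : (n : ℝ) ≤ 2 ^ (Nat.log 2 n + 1) := by
    exact_mod_cast (Nat.lt_pow_succ_log_self one_lt_two n).le
  have hlog : Real.log n ≤ (Nat.log 2 n + 1 : ℕ) * Real.log 2 :=
    (Real.log_le_log (by positivity) hlt).trans_eq (Real.log_pow _ _)
  have hcast : (4 : ℝ) ≤ Nat.log 2 n := by exact_mod_cast hn
  push_cast at hlog
  nlinarith [Real.log_two_lt_d9]

lemma degree_le_two_pow_loglogScale {n d : ℕ} (hn : 4 ≤ Nat.log 2 n)
    (hd : (d : ℝ) ≤ Real.log n ^ 2) : d ≤ 2 ^ (2 * loglogScale n) := by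
  have hsq : d ≤ Nat.log 2 n ^ 2 := by
    exact_mod_cast hd.trans
      (pow_le_pow_left₀ (Real.log_natCast_nonneg n) (log_le_natLog_two hn) 2)
  calc d ≤ Nat.log 2 n ^ 2 := hsq
    _ ≤ (2 ^ loglogScale n) ^ 2 :=
        Nat.pow_le_pow_left (Nat.lt_pow_succ_log_self one_lt_two _).le 2
    _ = 2 ^ (2 * loglogScale n) := by rw [← pow_mul, mul_comm]

lemma exists_dyadicScale {n d : ℕ} (hn : 30 ≤ Nat.log 2 (Nat.log 2 n))
    (hd : (d : ℝ) ≤ Real.log n ^ 2) : ∃ S, DyadicScale n d S (loglogScale n) := by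
  have hlog : 4 ≤ Nat.log 2 n := by
    have := Nat.log_le_self 2 (Nat.log 2 n)
    omega
  have hn0 : n ≠ 0 := by
    rintro rfl
    simp at hlog
  have hsq : 20001 * loglogScale n ^ 2 ≤ Nat.log 2 n :=
    (mul_succ_sq_le_two_pow hn).trans (Nat.pow_log_le_self 2 (by omega))
  have hlin : loglogScale n ≤ loglogScale n ^ 2 := Nat.le_self_pow two_ne_zero _
  have hsplit : Nat.log 2 n - 31 * loglogScale n + 31 * loglogScale n = Nat.log 2 n := by omega
  refine ⟨Nat.log 2 n - 31 * loglogScale n, ⟨Nat.le_add_left _ _, ?_, ?_, ?_, ?_,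
    degree_le_two_pow_loglogScale hlog hd⟩⟩ <;> rw [hsplit]
  exacts [Nat.lt_pow_succ_log_self one_lt_two _, hsq, Nat.pow_log_le_self 2 hn0,
    Nat.lt_pow_succ_log_self one_lt_two n]

lemma tendsto_one_sub_const_div_two_pow_loglogScale (ε : ℝ) :
    Tendsto (fun n => 1 - 5 * (1 / (2 : ℝ) ^ loglogScale n) / ε) atTop (nhds 1) := by
  have hpow : Tendsto (fun n => 1 / (2 : ℝ) ^ loglogScale n) atTop (nhds 0) := by
    simpa only [Function.comp_def, one_div_pow] using
      (tendsto_pow_atTop_nhds_zero_of_lt_one (r := (1 / 2 : ℝ)) one_half_pos.le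
        one_half_lt_one).comp tendsto_loglogScale
  simpa using ((hpow.const_mul 5).div_const ε).const_sub 1

end Asymptotics

end RegularIST

open RegularIST

/-- For `4 ≤ d(n) ≤ (log n)²` and every `ε > 0`, with high probability (along those `n`
with `n·d(n)` even) the random `d(n)`-regular graph has, for all but at most `εn`
vertices `r`, at least `⌊d(n)/4⌋` independent spanning trees rooted at `r`. -/
theorem stmt4 (d : ℕ → ℕ)
    (hd : ∀ᶠ n : ℕ in Filter.atTop, 4 ≤ d n ∧ (d n : ℝ) ≤ (Real.log n) ^ 2)
    (ε : ℝ) (hε : 0 < ε) :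
    Filter.Tendsto
      (fun n : ℕ => regProb n (d n)
        (fun G => (Nat.card {r : Fin n // ¬ HasISTs G r (d n / 4)} : ℝ) ≤ ε * n))
      (Filter.atTop ⊓ Filter.principal {n : ℕ | Even (n * d n)}) (nhds 1) := by
  have hlarge : ∀ᶠ n : ℕ in atTop, 30 ≤ Nat.log 2 (Nat.log 2 n) :=
    (tendsto_natLog_two_atTop.comp tendsto_natLog_two_atTop).eventually_ge_atTop 30
  have hlower : ∀ᶠ n : ℕ in atTop ⊓ principal {n : ℕ | Even (n * d n)},
      1 - 5 * (1 / 2 ^ loglogScale n) / ε ≤ regProb n (d n)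
        (fun G => (Nat.card {r : Fin n // ¬ HasISTs G r (d n / 4)} : ℝ) ≤ ε * n) := by
    rw [eventually_inf_principal]
    filter_upwards [hd, hlarge] with n ⟨hfour, hlog⟩ hn heven
    obtain ⟨S, hscale⟩ := exists_dyadicScale hn hlog
    exact hscale.one_sub_le_regProb hfour heven hε
  exact tendsto_of_tendsto_of_tendsto_of_le_of_le'
    ((tendsto_one_sub_const_div_two_pow_loglogScale ε).mono_left inf_le_left)
    tendsto_const_nhds hlower (Eventually.of_forall fun n => regProb_le_one _)
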